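/- arXiv:2510.27387 — 2 statements merged into one kernel-verified Lean document; each statement's English description precedes it below -/
import Mathlib

section
/- For every integer k ≥ 2 there is a constant C(k) > 0 such that for any field K, any finite-dimensional vector spaces V_1, ..., V_k over K, and any tensor T ∈ V_1 ⊗ ... ⊗ V_k, one has Q(T) ≤ GR(T) ≤ C(k) · Q(T)^{k-1}. -/
/-!
Write `k = n + 1`, let `a` be the coordinates of `T`, and let `coordPoly a c` be the coordinates of
the contraction map, multilinear in `n` blocks of variables. All heights of ideals are controlled by
the dimension formula for polynomial rings (`exists_height_add_trdeg`): a prime `P` of a polynomial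
ring in `N` variables admits `N - ht P` variables which stay algebraically independent modulo `P`,
and no more. It yields the behaviour of heights under hypersurface sections
(`exists_prime_height_le_add_card`).

**`Q ≤ GR`** (`lower_core`). Suppose that vectors `x_1, …, x_r` in the product of the first `n` dual
spaces and functionals `u_j` in the last one produce `I_r`, and let `P` be a prime containing the
coordinate polynomials; it may be assumed to be homogeneous, hence contained in the ideal of the
origin. The forms `t_{i,j}(v) = ⟨T, x_j, …, v, …, x_j, u_j⟩` (with `v` in slot `i`) are dual to the
blocks of the `x_j`. Adjoin to `P` a basis of the space `Z` of linear forms vanishing on all these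
blocks; some prime `P'` over the result has height at most `ht P + dim Z`. Modulo `Z` the `u_j`
combination of the coordinate polynomials is `∏ i, t_{i,j}`, so that for each `j` some `t_{i₀(j),j}`
lies in `P'`. Together with `Z` these are `r + dim Z` independent linear forms in `P'`, whence `r +
dim Z ≤ ht P'`.

**`GR ≤ C Q^n`**. It suffices to find `r` vectors in each of the first `n` slots whose `r ^ n`
contractions with `T` are linearly independent: functionals in the last slot then produce `I_r`
(`exists_functionals`).

Over an infinite field (`upper_core_infinite`) such vectors exist once `r ^ n < GR`. Otherwise the
contractions of generic vectors are linearly dependent over the function field. A valuation ring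
dominating the local ring at the origin normalises the relation: all coefficients become integral
and the one at some multi-index `b₀` becomes `1`. The coefficients and the generic vectors together
satisfy a prime ideal of height at most `r ^ n` in a polynomial ring with `r ^ n` additional
variables. Specialising all vectors not used by `b₀` to zero turns the relation into the vanishing
of the contraction at `b₀`, and counting dimensions produces a prime of height at most `r ^ n` which
contains the coordinate polynomials.

Over a finite field with `q` elements (`upper_core_finite`), a union bound over all linear relations
(`exists_linearIndependent_box`) shows that it is enough for the density `δ` of the zeros of the
multilinear map to be less than `q ^ (-r ^ n)`. By iterated Jensen inequalities
(`expect_pow_le_expect_box`), `δ ^ (m ^ n)` is at most the density of boxes (with `m` vectors in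
each slot) on which the map vanishes. Such boxes give distinct zeros in a grid `A ^ N` over the
algebraic closure, where `A` is spanned by `m` elements independent over the finite field. A
Bézout-type estimate (`grid_count`) bounds their number by `n ^ R * |A| ^ (N - R)` with `R = GR`,
and `m = 2 n` gives the required bound as soon as `(2 n r) ^ n < R`. Applying this with `r = Q + 1 ≤
2 Q` gives the constant `C = (4 n) ^ n`.
-/

open Module
open scoped TensorProduct

/-- The height of an ideal: the infimum of the heights of the prime ideals containing it
(in the poset of prime ideals ordered by inclusion). -/
noncomputable def idealHeight {R : Type*} [CommRing R] (I : Ideal R) : ℕ∞ :=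
  ⨅ p ∈ {p : PrimeSpectrum R | I ≤ p.asIdeal}, Order.height p

section Defs

variable {K : Type} [Field K] {k : ℕ} {V : Fin k → Type}
  [∀ i, AddCommGroup (V i)] [∀ i, Module K (V i)]

/-- The full contraction `⟨T, ℓ₁ ⊗ ⋯ ⊗ ℓ_k⟩ ∈ K` of a tensor `T ∈ V₁ ⊗ ⋯ ⊗ V_k` by linear
functionals `ℓᵢ ∈ Vᵢ*`. -/
noncomputable def fullContract (T : ⨂[K] i, V i) (ℓ : ∀ i, Module.Dual K (V i)) : K :=
  PiTensorProduct.lift ((MultilinearMap.mkPiAlgebra K (Fin k) K).compLinearMap ℓ) T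

/-- The subrank `Q(T)` of a tensor `T ∈ V₁ ⊗ ⋯ ⊗ V_k`: the largest `r` such that the identity
tensor `I_r = ∑ⱼ eⱼ ⊗ ⋯ ⊗ eⱼ ∈ (K^r)^{⊗k}` equals `(g₁, …, g_k)·T` for suitable linear maps
`gᵢ : Vᵢ → K^r`. -/
noncomputable def subrank (T : ⨂[K] i, V i) : ℕ :=
  sSup {r : ℕ | ∃ g : ∀ i, V i →ₗ[K] (Fin r → K),
    PiTensorProduct.map g T =
      ∑ j : Fin r, PiTensorProduct.tprod K fun _ => Pi.single j (1 : K)}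

end Defs

section GR

variable {K : Type} [Field K] {n : ℕ} {V : Fin (n + 1) → Type}
  [∀ i, AddCommGroup (V i)] [∀ i, Module K (V i)] [∀ i, FiniteDimensional K (V i)]

/-- The geometric rank `GR(T)` of a tensor `T ∈ V₁ ⊗ ⋯ ⊗ V_k` (`k = n+1`): the codimension of
the Zariski-closed set `{(ℓ₁, …, ℓ_n) ∈ V₁* × ⋯ × V_n* : ⟨T, ℓ₁ ⊗ ⋯ ⊗ ℓ_n⟩ = 0}`, computed
as the height of the ideal of the polynomial ring generated by the coordinate polynomials of
the contraction map with respect to choices of bases. -/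
noncomputable def tensorGeomRank (T : ⨂[K] i, V i) : ℕ∞ :=
  idealHeight (Ideal.span (Set.range
    fun c : Module.Free.ChooseBasisIndex K (Module.Dual K (V (Fin.last n))) =>
      ∑ g : ∀ i : Fin n, Module.Free.ChooseBasisIndex K (Module.Dual K (V i.castSucc)),
        MvPolynomial.C
            (fullContract T
              (Fin.snoc
                (fun i : Fin n =>
                  Module.Free.chooseBasis K (Module.Dual K (V i.castSucc)) (g i))
                (Module.Free.chooseBasis K (Module.Dual K (V (Fin.last n))) c))) *
          ∏ i : Fin n,
            MvPolynomial.X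
              (⟨i, g i⟩ : Σ i : Fin n,
                Module.Free.ChooseBasisIndex K (Module.Dual K (V i.castSucc)))))

end GR

/-! ### Heights and algebraically independent variables -/

/-- `J` is a set of variables that stays algebraically independent modulo `P`. -/
def IndepMod {σ K : Type*} [Field K] (P : Ideal (MvPolynomial σ K)) (J : Finset σ) : Prop :=
  ∀ f ∈ MvPolynomial.supported K (J : Set σ), f ∈ P → f = 0

lemma coeff_optionEquivLeft_mem_supported {σ K : Type*} [Field K] (J : Finset σ)
    (f : MvPolynomial (Option σ) K)
    (hf : f ∈ MvPolynomial.supported K (J.insertNone : Set (Option σ))) (m : ℕ) :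
    (MvPolynomial.optionEquivLeft K σ f).coeff m ∈ MvPolynomial.supported K (J : Set σ) := by
  induction hf using Algebra.adjoin_induction generalizing m with
  | mem x hx =>
    obtain ⟨i, hi, rfl⟩ := hx
    cases i with
    | none =>
      simp only [MvPolynomial.optionEquivLeft_X_none, Polynomial.coeff_X]
      split_ifs <;> simp
    | some j =>
      simp only [MvPolynomial.optionEquivLeft_X_some, Polynomial.coeff_C]
      split_ifs
      · exact MvPolynomial.X_mem_supported.2 (by simpa using hi)
      · exact Subalgebra.zero_mem _
  | algebraMap r =>
    simp only [MvPolynomial.algebraMap_eq, MvPolynomial.optionEquivLeft_C, Polynomial.coeff_C]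
    split_ifs
    · exact Subalgebra.algebraMap_mem _ r
    · exact Subalgebra.zero_mem _
  | add x y _ _ hx hy => simpa using Subalgebra.add_mem _ (hx m) (hy m)
  | mul x y _ _ hx hy =>
    rw [map_mul, Polynomial.coeff_mul]
    exact Subalgebra.sum_mem _ fun p _ => Subalgebra.mul_mem _ (hx _) (hy _)

/-- Some set of at least `N - ht P` of the `N` variables stays independent modulo `P`. By induction
on the number of variables: `P` is either extended from its contraction `p` to one variable fewer,
and the new variable is free, or it is strictly larger than that extension, and the height goes up.
-/
lemma exists_indepMod {K : Type*} [Field K] (σ : Type*) [Finite σ] :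
    ∀ (P : Ideal (MvPolynomial σ K)) [P.IsPrime],
      ∃ J : Finset σ, (Nat.card σ : ℕ∞) ≤ J.card + P.height ∧ IndepMod P J := by
  induction σ using Finite.induction_empty_option with
  | @of_equiv α β e ih =>
    intro P hP
    let E := (MvPolynomial.renameEquiv K e)
    obtain ⟨J, hJ, hi⟩ := ih (P.comap (E : MvPolynomial α K →+* MvPolynomial β K))
    refine ⟨J.map e.toEmbedding, ?_, ?_⟩
    · rw [← Nat.card_congr e, Finset.card_map]
      rwa [show (P.comap (E : MvPolynomial α K →+* MvPolynomial β K)).height = P.height from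
        RingEquiv.height_comap E.toRingEquiv P] at hJ
    · intro f hf hfP
      have h2 : E.symm f ∈ MvPolynomial.supported K (J : Set α) := by
        rw [MvPolynomial.mem_supported] at hf ⊢
        classical
        intro a ha
        have := MvPolynomial.vars_rename e.symm f ha
        obtain ⟨b, hb, rfl⟩ := Finset.mem_image.1 this
        have := hf hb
        simp only [Finset.coe_map, Set.mem_image] at this
        obtain ⟨a', ha', rfl⟩ := this
        simpa using ha'
      have := hi _ h2 (by
        rw [Ideal.mem_comap]
        change E (E.symm f) ∈ P
        rwa [AlgEquiv.apply_symm_apply])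
      simpa using this
  | h_empty =>
    intro P hP
    refine ⟨∅, by simp, ?_⟩
    intro f _ hfP
    by_contra hne
    have : f = MvPolynomial.C (f.coeff 0) := by
      exact MvPolynomial.eq_C_of_isEmpty f
    rw [this] at hfP hne
    have hu : IsUnit (MvPolynomial.C (f.coeff 0) : MvPolynomial PEmpty K) :=
      (IsUnit.mk0 _ (fun h => hne (by rw [h, map_zero]))).map _
    exact hP.ne_top (Ideal.eq_top_of_isUnit_mem _ hfP hu)
  | @h_option σ _ ih =>
    intro P hP
    let E := MvPolynomial.optionEquivLeft K σ
    let P2 : Ideal (Polynomial (MvPolynomial σ K)) := P.comap (E.symm : _ →+* MvPolynomial (Option σ) K)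
    have hP2 : P2.height = P.height := RingEquiv.height_comap E.symm.toRingEquiv P
    have hmem : ∀ f, f ∈ P → E f ∈ P2 := by
      intro f hf
      change E.symm (E f) ∈ P
      simpa using hf
    let p : Ideal (MvPolynomial σ K) := P2.comap Polynomial.C
    have hp : p.IsPrime := Ideal.IsPrime.comap _
    obtain ⟨J, hJ, hi⟩ := ih p
    have hle : p.map Polynomial.C ≤ P2 := Ideal.map_comap_le
    have hcard : (Nat.card (Option σ) : ℕ∞) = Nat.card σ + 1 := by
      rw [Finite.card_option]; push_cast; rfl
    have hlo : (p.map (Polynomial.C : MvPolynomial σ K →+* _)).LiesOver p := by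
      constructor
      ext x
      simp [Ideal.mem_map_C_iff, Polynomial.coeff_C, Ideal.under]
      constructor
      · intro h n; split_ifs <;> simp [h]
      · intro h; simpa using h 0
    have hht : p.height ≤ (p.map (Polynomial.C : MvPolynomial σ K →+* _)).height := by
      rw [Ideal.height_eq_height_add_of_liesOver_of_hasGoingDown p
        (p.map (Polynomial.C : MvPolynomial σ K →+* _))]
      exact le_self_add
    -- `P2 = p[X]` leaves the new variable free; otherwise `p[X] < P2` raises the height by one
    by_cases hc : p.map Polynomial.C = P2
    · refine ⟨J.insertNone, ?_, ?_⟩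
      · rw [hcard, Finset.card_insertNone, ← hP2, ← hc]
        calc (Nat.card σ : ℕ∞) + 1 ≤ J.card + p.height + 1 := by gcongr
          _ ≤ J.card + (p.map (Polynomial.C : MvPolynomial σ K →+* _)).height + 1 := by gcongr
          _ = _ := by push_cast; ring
      · intro f hf hfP
        have h1 := hmem f hfP
        rw [← hc, Ideal.mem_map_C_iff] at h1
        have : E f = 0 := by
          ext1 m
          rw [Polynomial.coeff_zero]
          exact hi _ (coeff_optionEquivLeft_mem_supported J f hf m) (h1 m)
        simpa using this
    · have hlt := lt_of_le_of_ne hle hc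
      refine ⟨J.map Function.Embedding.some, ?_, ?_⟩
      · rw [hcard, Finset.card_map, ← hP2]
        have := Ideal.height_add_one_le_of_lt_of_isPrime hlt
        calc (Nat.card σ : ℕ∞) + 1 ≤ J.card + p.height + 1 := by gcongr
          _ ≤ J.card + (p.map (Polynomial.C : MvPolynomial σ K →+* _)).height + 1 := by gcongr
          _ = J.card + ((p.map (Polynomial.C : MvPolynomial σ K →+* _)).height + 1) := by ring
          _ ≤ _ := by gcongr
      · intro f hf hfP
        rw [Finset.coe_map, MvPolynomial.supported_eq_adjoin_X, Set.image_image] at hf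
        have : ∃ f0 ∈ MvPolynomial.supported K (J : Set σ), MvPolynomial.rename some f0 = f := by
          rw [show (fun x => (MvPolynomial.X (Function.Embedding.some x) : MvPolynomial (Option σ) K)) '' (J : Set σ) =
            (MvPolynomial.rename some : MvPolynomial σ K →ₐ[K] _) '' (MvPolynomial.X '' (J : Set σ)) by
              rw [Set.image_image]; simp, ← AlgHom.map_adjoin] at hf
          exact hf
        obtain ⟨f0, hf0, rfl⟩ := this
        have h0 : E (MvPolynomial.rename some f0) = Polynomial.C f0 := by
          have : (E : MvPolynomial (Option σ) K →ₐ[K] _).comp (MvPolynomial.rename some) =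
              IsScalarTower.toAlgHom K (MvPolynomial σ K) (Polynomial (MvPolynomial σ K)) := by
            ext i
            simp [E, Polynomial.algebraMap_eq]
          exact congrArg (fun φ => φ f0) this
        rw [hi f0 hf0 (by change Polynomial.C f0 ∈ P2; rw [← h0]; exact hmem _ hfP), map_zero]

attribute [local instance] MvPolynomial.algebraMvPolynomial in
/-- If no nonzero polynomial in the variables `β` lies in `P`, then inverting all of these turns `P`
into a prime of a polynomial ring in the variables `α` over a field. -/
lemma height_le_of_rename_inr {K α β : Type*} [Field K] [Finite α] [Finite β]
    (P : Ideal (MvPolynomial (α ⊕ β) K)) [P.IsPrime]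
    (h : ∀ f : MvPolynomial β K, MvPolynomial.rename Sum.inr f ∈ P → f = 0) :
    P.height ≤ Nat.card α := by
  let E := MvPolynomial.sumAlgEquiv K α β
  let P2 : Ideal (MvPolynomial α (MvPolynomial β K)) :=
    P.comap (E.symm : _ →+* MvPolynomial (α ⊕ β) K)
  have hP2 : P2.height = P.height := RingEquiv.height_comap E.symm.toRingEquiv P
  have hPr : P2.IsPrime := Ideal.IsPrime.comap _
  let F := FractionRing (MvPolynomial β K)
  let M := nonZeroDivisors (MvPolynomial β K)
  have hdis : Disjoint ((M.map (MvPolynomial.C (σ := α)) : Submonoid _) : Set (MvPolynomial α (MvPolynomial β K)))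
      (P2 : Set (MvPolynomial α (MvPolynomial β K))) := by
    rw [Set.disjoint_left]
    rintro _ ⟨f, hf, rfl⟩ hP
    have h2 : E.symm (MvPolynomial.C f) ∈ P := hP
    have h3 : E.symm (MvPolynomial.C f) = MvPolynomial.rename Sum.inr f := by
      rw [AlgEquiv.symm_apply_eq]
      have := (MvPolynomial.sumAlgEquiv_comp_rename_inr (R := K) (S₁ := α) (S₂ := β)).symm
      exact congrArg (fun φ => φ f) this
    rw [h3] at h2
    exact nonZeroDivisors.ne_zero hf (h f h2)
  have := IsLocalization.height_map_of_disjoint (S := MvPolynomial α F)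
    (M.map (MvPolynomial.C (σ := α))) P2 hdis
  rw [← hP2, ← this]
  have hpr : (P2.map (algebraMap (MvPolynomial α (MvPolynomial β K)) (MvPolynomial α F))).IsPrime :=
    IsLocalization.isPrime_of_isPrime_disjoint (M.map (MvPolynomial.C (σ := α))) _ P2 hPr hdis
  have h5 := Ideal.height_le_ringKrullDim_of_isPrime
    (I := P2.map (algebraMap (MvPolynomial α (MvPolynomial β K)) (MvPolynomial α F)))
  rw [MvPolynomial.ringKrullDim_of_isNoetherianRing, ringKrullDim_eq_zero_of_field, zero_add] at h5
  exact_mod_cast h5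

/-- Converse of `exists_indepMod`: variables independent modulo `P` are at most `N - ht P` in
number. -/
lemma IndepMod.height_add_card_le {K σ : Type*} [Field K] [Finite σ]
    {P : Ideal (MvPolynomial σ K)} [P.IsPrime] {J : Finset σ} (h : IndepMod P J) :
    P.height + J.card ≤ Nat.card σ := by
  classical
  let e : {a // a ∉ J} ⊕ {a // a ∈ J} ≃ σ := (Equiv.sumComm _ _).trans (Equiv.sumCompl (· ∈ J))
  let E := MvPolynomial.renameEquiv K e
  have h1 := height_le_of_rename_inr (P.comap (E : MvPolynomial ({a // a ∉ J} ⊕ {a // a ∈ J}) K →+* MvPolynomial σ K)) (by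
    intro f hf
    have h2 : E (MvPolynomial.rename Sum.inr f) ∈ P := hf
    have h3 : E (MvPolynomial.rename Sum.inr f) = MvPolynomial.rename Subtype.val f := by
      simp only [E, MvPolynomial.renameEquiv_apply, MvPolynomial.rename_rename]
      rfl
    rw [h3] at h2
    have := h _ (by
      rw [MvPolynomial.mem_supported]
      intro i hi
      obtain ⟨j, _, rfl⟩ := Finset.mem_image.1 (MvPolynomial.vars_rename _ _ hi)
      exact j.2) h2
    exact MvPolynomial.rename_injective _ Subtype.val_injective (by simpa using this))
  rw [show (P.comap (E : MvPolynomial ({a // a ∉ J} ⊕ {a // a ∈ J}) K →+* MvPolynomial σ K)).height = P.height from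
        RingEquiv.height_comap E.toRingEquiv P] at h1
  have hc : Nat.card σ = Nat.card {a // a ∉ J} + J.card := by
    rw [← Nat.card_congr e, Nat.card_sum]
    simp
  rw [hc]
  push_cast
  gcongr

lemma indepMod_iff {K σ : Type} [Field K] (P : Ideal (MvPolynomial σ K)) (J : Set σ) :
    (∀ f ∈ MvPolynomial.supported K J, f ∈ P → f = 0) ↔
      AlgebraicIndependent K (fun j : J => Ideal.Quotient.mk P (MvPolynomial.X (j : σ))) := by
  rw [algebraicIndependent_iff]
  have h0 : ∀ p : MvPolynomial J K,
      MvPolynomial.aeval (fun j : J => Ideal.Quotient.mk P (MvPolynomial.X (j : σ))) p =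
      Ideal.Quotient.mk P (MvPolynomial.rename Subtype.val p) := by
    intro p
    have : (MvPolynomial.aeval (fun j : J => Ideal.Quotient.mk P (MvPolynomial.X (j : σ)))) =
      (Ideal.Quotient.mkₐ K P).comp (MvPolynomial.rename Subtype.val) := by
      ext i; simp
    exact congrArg (fun φ => φ p) this
  constructor
  · intro h p hp
    rw [h0, Ideal.Quotient.eq_zero_iff_mem] at hp
    classical
    have := h _ (by
      rw [MvPolynomial.mem_supported]
      intro i hi
      obtain ⟨j, _, rfl⟩ := Finset.mem_image.1 (MvPolynomial.vars_rename _ _ hi)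
      exact j.2) hp
    exact MvPolynomial.rename_injective _ Subtype.val_injective (by simpa using this)
  · intro h f hf hfP
    rw [MvPolynomial.supported_eq_range_rename] at hf
    obtain ⟨p, rfl⟩ := hf
    have : p = 0 := h p (by
      rw [h0, Ideal.Quotient.eq_zero_iff_mem]; exact hfP)
    rw [this]
    exact map_zero (MvPolynomial.rename Subtype.val)

/-- The dimension formula for prime ideals of a polynomial ring over a field. -/
lemma exists_height_add_trdeg {K σ : Type} [Field K] [Finite σ]
    (P : Ideal (MvPolynomial σ K)) [P.IsPrime] :
    ∃ h d : ℕ, P.height = h ∧ Algebra.trdeg K (MvPolynomial σ K ⧸ P) = d ∧ h + d = Nat.card σ := by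
  classical
  obtain ⟨J, hJ, hi⟩ := exists_indepMod σ P
  have hJ2 : (J.card : Cardinal) ≤ Algebra.trdeg K (MvPolynomial σ K ⧸ P) := by
    have := ((indepMod_iff P J).1 hi).cardinalMk_le_trdeg
    simpa using this
  have hle := hi.height_add_card_le
  have hsp : Algebra.adjoin K (Set.range fun i : σ => Ideal.Quotient.mk P (MvPolynomial.X i)) = ⊤ := by
    have h1 := congrArg (Subalgebra.map (Ideal.Quotient.mkₐ K P)) (MvPolynomial.adjoin_range_X (R := K) (σ := σ))
    rw [AlgHom.map_adjoin, ← Set.range_comp] at h1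
    rw [show (Set.range fun i : σ => Ideal.Quotient.mk P (MvPolynomial.X i)) =
      Set.range (⇑(Ideal.Quotient.mkₐ K P) ∘ MvPolynomial.X) from rfl, h1, Algebra.map_top,
      AlgHom.range_eq_top]
    exact Ideal.Quotient.mkₐ_surjective K P
  have halg : Algebra.IsAlgebraic
      (Algebra.adjoin K (Set.range fun i : σ => Ideal.Quotient.mk P (MvPolynomial.X i)))
      (MvPolynomial σ K ⧸ P) := by
    constructor
    intro x
    have hx : x ∈ Algebra.adjoin K (Set.range fun i : σ => Ideal.Quotient.mk P (MvPolynomial.X i)) := by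
      rw [hsp]; trivial
    exact isAlgebraic_algebraMap (⟨x, hx⟩ : Algebra.adjoin K (Set.range fun i : σ => Ideal.Quotient.mk P (MvPolynomial.X i)))
  have hfs : FaithfulSMul K (MvPolynomial σ K ⧸ P) :=
    (faithfulSMul_iff_algebraMap_injective _ _).2 (algebraMap K (MvPolynomial σ K ⧸ P)).injective
  obtain ⟨u, hu, hb⟩ := exists_isTranscendenceBasis_subset (R := K)
    (Set.range fun i : σ => Ideal.Quotient.mk P (MvPolynomial.X i))
  obtain ⟨J', hJ'⟩ := (Set.surjOn_image (fun i : σ => Ideal.Quotient.mk P (MvPolynomial.X i))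
    ((fun i : σ => Ideal.Quotient.mk P (MvPolynomial.X i)) ⁻¹' u)).exists_bijOn_subset
  rw [Set.image_preimage_eq_of_subset hu] at hJ'
  obtain ⟨-, hbij⟩ := hJ'
  have hfin : J'.Finite := Set.toFinite J'
  have hi' : IndepMod P hfin.toFinset := by
    intro f hf hfP
    rw [Set.Finite.coe_toFinset] at hf
    refine (indepMod_iff P J').2 ?_ f hf hfP
    have h3 := hb.1.comp (fun j : J' => (⟨_, hbij.mapsTo j.2⟩ : u)) (by
      intro a b hab
      exact Subtype.ext (hbij.injOn a.2 b.2 (congrArg Subtype.val hab)))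
    exact h3
  have hcard : Algebra.trdeg K (MvPolynomial σ K ⧸ P) = (hfin.toFinset.card : Cardinal) := by
    rw [← hb.cardinalMk_eq_trdeg, ← Cardinal.mk_congr hbij.equiv, ← Cardinal.mk_coe_finset]
    exact Cardinal.mk_congr (Equiv.subtypeEquivRight (by simp))
  have hle' := hi'.height_add_card_le
  rw [hcard, Nat.cast_le] at hJ2
  have hne : P.height ≠ ⊤ := Ideal.height_ne_top_of_isPrime
  obtain ⟨h, hh⟩ := ENat.ne_top_iff_exists.1 hne
  refine ⟨h, _, hh.symm, hcard, ?_⟩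
  rw [← hh] at hle' hJ
  norm_cast at hle' hJ
  omega

/-- A hypersurface section raises the height by at most one. The Hauptidealsatz bounds the height in
the quotient by `P`; Noether normalisation of the quotient and going down for integral extensions of
normal domains transport this to a polynomial ring, where the dimension formula applies. -/
lemma height_le_add_one_of_mem_minimalPrimes {K σ : Type} [Field K] [Finite σ]
    (P : Ideal (MvPolynomial σ K)) [P.IsPrime] (z : MvPolynomial σ K)
    (P' : Ideal (MvPolynomial σ K)) (h : P' ∈ (P ⊔ Ideal.span {z}).minimalPrimes) :
    P'.height ≤ P.height + 1 := by
  have hP' : P'.IsPrime := h.1.1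
  have hle : P ≤ P' := le_sup_left.trans h.1.2
  have h1 := Ideal.map_height_le_one_of_mem_minimalPrimes h
  let A := MvPolynomial σ K ⧸ P
  let q : Ideal A := P'.map (Ideal.Quotient.mk P)
  have hq : q.IsPrime := Ideal.map_isPrime_of_surjective Ideal.Quotient.mk_surjective (by simpa using hle)
  obtain ⟨s, g, hinj, hintegral⟩ := exists_integral_inj_algHom_of_fg K A
  let B := MvPolynomial (Fin s) K
  let fac : A →ₐ[K] (MvPolynomial σ K ⧸ P') := Ideal.Quotient.factorₐ K hle
  let φ : B →ₐ[K] (MvPolynomial σ K ⧸ P') := fac.comp g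
  let p : Ideal B := RingHom.ker φ
  have hp : p.IsPrime := RingHom.ker_isPrime _
  let : Algebra B A := g.toRingHom.toAlgebra
  have hst : IsScalarTower K B A := IsScalarTower.of_algebraMap_eq (fun x => (g.commutes x).symm)
  have hfs : FaithfulSMul B A := (faithfulSMul_iff_algebraMap_injective _ _).2 hinj
  have hii : Algebra.IsIntegral B A := ⟨hintegral⟩
  have hqf : ∀ a : A, a ∈ q ↔ fac a = 0 := by
    intro a
    obtain ⟨a, rfl⟩ := Ideal.Quotient.mk_surjective a
    rw [show fac (Ideal.Quotient.mk P a) = Ideal.Quotient.mk P' a from rfl,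
      Ideal.Quotient.eq_zero_iff_mem]
    exact Ideal.mem_quotient_iff_mem hle
  have hlo : q.LiesOver p := by
    constructor
    ext x
    exact (hqf (g x)).symm
  have hpq : p.height ≤ q.height := by
    rw [Ideal.height_eq_height_add_of_liesOver_of_hasGoingDown p q]
    exact le_self_add
  obtain ⟨h₁, d₁, e₁, t₁, s₁⟩ := exists_height_add_trdeg P
  obtain ⟨h₂, d₂, e₂, t₂, s₂⟩ := exists_height_add_trdeg P'
  obtain ⟨h₃, d₃, e₃, t₃, s₃⟩ := exists_height_add_trdeg p
  have i1 : d₃ ≤ d₂ := by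
    have := trdeg_le_of_injective (Ideal.kerLiftAlg φ) (Ideal.kerLiftAlg_injective φ)
    rw [t₂] at this
    have h' := t₃.symm.trans_le this
    exact_mod_cast h'
  have i2 : d₁ ≤ s := by
    have := trdeg_add_eq (R := K) (S := B) (A := A)
    rw [t₁, trdeg_eq_zero (R := B) (A := A), add_zero, MvPolynomial.trdeg_of_isDomain] at this
    simp at this
    exact this.ge
  have i3 : h₃ ≤ 1 := by
    have := hpq.trans h1
    rw [e₃] at this
    exact_mod_cast this
  rw [e₁, e₂]
  simp at s₃
  norm_cast
  omega

/-- Cutting with several functions inside a fixed prime. -/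
lemma exists_prime_height_le_add_card {K σ : Type} [Field K] [Finite σ]
    (P Q : Ideal (MvPolynomial σ K)) [P.IsPrime] [Q.IsPrime] (hPQ : P ≤ Q)
    (Z : Finset (MvPolynomial σ K)) (hZ : ∀ z ∈ Z, z ∈ Q) :
    ∃ P' : Ideal (MvPolynomial σ K), P'.IsPrime ∧ P ≤ P' ∧ (∀ z ∈ Z, z ∈ P') ∧
      P'.height ≤ P.height + Z.card := by
  classical
  suffices ∃ P' : Ideal (MvPolynomial σ K), P'.IsPrime ∧ P ≤ P' ∧ P' ≤ Q ∧ (∀ z ∈ Z, z ∈ P') ∧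
      P'.height ≤ P.height + Z.card by
    obtain ⟨P', a, b, c, d, e⟩ := this
    exact ⟨P', a, b, d, e⟩
  induction Z using Finset.induction_on with
  | empty => exact ⟨P, inferInstance, le_rfl, hPQ, by simp, by simp⟩
  | insert z Z hz ih =>
    obtain ⟨P₁, hp, h1, h2, h3, h4⟩ := ih fun z hz => hZ z (Finset.mem_insert_of_mem hz)
    obtain ⟨P', hm, hle⟩ := Ideal.exists_minimalPrimes_le (I := P₁ ⊔ Ideal.span {z}) (J := Q)
      (sup_le h2 (by
        rw [Ideal.span_singleton_le_iff_mem]; exact hZ z (Finset.mem_insert_self _ _)))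
    have hP₁P' : P₁ ≤ P' := le_sup_left.trans hm.1.2
    refine ⟨P', hm.1.1, h1.trans hP₁P', hle, ?_, ?_⟩
    · intro w hw
      rcases Finset.mem_insert.1 hw with rfl | hw
      · exact hm.1.2 (Ideal.mem_sup_right (Ideal.mem_span_singleton_self _))
      · exact hP₁P' (h3 w hw)
    · rw [Finset.card_insert_of_notMem hz]
      calc P'.height ≤ P₁.height + 1 := height_le_add_one_of_mem_minimalPrimes P₁ z P' hm
        _ ≤ P.height + Z.card + 1 := by gcongr
        _ = _ := by push_cast; ring

/-! ### Subrank bounds the codimension from below -/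

/-- The linear form with given coefficients. -/
noncomputable def linForm (K σ : Type) [Field K] [Fintype σ] : (σ → K) →ₗ[K] MvPolynomial σ K :=
  Fintype.linearCombination K MvPolynomial.X

lemma linForm_apply {K σ : Type} [Field K] [Fintype σ] (v : σ → K) :
    linForm K σ v = ∑ s, v s • MvPolynomial.X s := Fintype.linearCombination_apply _ _ _

lemma linForm_injective {K σ : Type} [Field K] [Fintype σ] :
    Function.Injective (linForm K σ) := by
  have := MvPolynomial.linearIndependent_X σ K
  exact linearIndependent_iff_injective_fintypeLinearCombination.1 this

/-- A prime ideal has height at least the dimension of the space of linear forms it contains. -/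
lemma finrank_le_height {K σ : Type} [Field K] [Fintype σ] (P : Ideal (MvPolynomial σ K))
    [P.IsPrime] (U : Submodule K (σ → K)) (hU : ∀ v ∈ U, linForm K σ v ∈ P) :
    (finrank K U : ℕ∞) ≤ P.height := by
  classical
  obtain ⟨J, hJ, hi⟩ := exists_indepMod σ P
  let φ : U →ₗ[K] ({s // s ∉ J} → K) :=
    (LinearMap.funLeft K K Subtype.val).comp U.subtype
  have hφ : Function.Injective φ := by
    rw [← LinearMap.ker_eq_bot, LinearMap.ker_eq_bot']
    intro v hv
    have h0 : ∀ s, s ∉ J → v.1 s = 0 := fun s hs => congrFun hv ⟨s, hs⟩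
    have h1 : linForm K σ v.1 = 0 := by
      refine hi _ ?_ (hU _ v.2)
      rw [linForm_apply]
      refine Subalgebra.sum_mem _ fun s _ => ?_
      by_cases hs : s ∈ J
      · exact Subalgebra.smul_mem _ (MvPolynomial.X_mem_supported.2 hs) _
      · rw [h0 s hs, zero_smul]; exact Subalgebra.zero_mem _
    exact Subtype.ext (linForm_injective (by simpa using h1))
  have h2 := LinearMap.finrank_le_finrank_of_injective hφ
  rw [Module.finrank_fintype_fun_eq_card, Fintype.card_subtype_compl, Fintype.card_coe] at h2
  rw [Nat.card_eq_fintype_card] at hJ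
  by_cases ht : P.height = ⊤
  · simp [ht]
  obtain ⟨h, hh⟩ := ENat.ne_top_iff_exists.1 ht
  rw [← hh] at hJ ⊢
  norm_cast at hJ ⊢
  omega

/-- The coordinate polynomials of the contraction map of the tensor with coordinates `a`. -/
noncomputable def coordPoly {K κ : Type} [Field K] {n : ℕ} {ι : Fin n → Type} [∀ i, Fintype (ι i)]
    (a : (∀ i, ι i) → κ → K) (c : κ) : MvPolynomial (Σ i, ι i) K :=
  ∑ g : ∀ i, ι i, MvPolynomial.C (a g c) * ∏ i, MvPolynomial.X (⟨i, g i⟩ : Σ i, ι i)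

lemma coordPoly_isHomogeneous {K κ : Type} [Field K] {n : ℕ} {ι : Fin n → Type}
    [∀ i, Fintype (ι i)] (a : (∀ i, ι i) → κ → K) (c : κ) :
    (coordPoly a c).IsHomogeneous n := by
  refine MvPolynomial.IsHomogeneous.sum _ _ _ fun g _ => ?_
  have h := (MvPolynomial.isHomogeneous_C (Σ i, ι i) (a g c)).mul
    (MvPolynomial.IsHomogeneous.prod Finset.univ
      (fun i => (MvPolynomial.X (⟨i, g i⟩ : Σ i, ι i) : MvPolynomial _ K)) (fun _ => 1)
      fun i _ => MvPolynomial.isHomogeneous_X K _)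
  simpa using h

attribute [local instance] MvPolynomial.gradedAlgebra in
/-- Below each prime ideal lies a prime ideal through the origin that contains the same
homogeneous polynomials. -/
lemma exists_prime_le_ker_constantCoeff {K σ : Type} [Field K] (P : Ideal (MvPolynomial σ K))
    [hP : P.IsPrime] :
    ∃ P₀ : Ideal (MvPolynomial σ K), P₀.IsPrime ∧ P₀ ≤ P ∧
      P₀ ≤ RingHom.ker (MvPolynomial.constantCoeff (σ := σ) (R := K)) ∧
      ∀ f n, MvPolynomial.IsHomogeneous f n → f ∈ P → f ∈ P₀ := by
  classical
  refine ⟨(P.homogeneousCore (MvPolynomial.homogeneousSubmodule σ K)).toIdeal,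
    Ideal.IsPrime.homogeneousCore hP, Ideal.toIdeal_homogeneousCore_le _ P, ?_, ?_⟩
  · intro f hf
    have h1 := (MvPolynomial.mem_iff_homogeneousComponent_mem
      (P.homogeneousCore (MvPolynomial.homogeneousSubmodule σ K)).isHomogeneous f).1 hf 0
    have h2 := Ideal.toIdeal_homogeneousCore_le _ P h1
    rw [MvPolynomial.homogeneousComponent_zero] at h2
    rw [RingHom.mem_ker]
    by_contra hne
    exact hP.ne_top (Ideal.eq_top_of_isUnit_mem _ h2
      ((IsUnit.mk0 _ hne).map (MvPolynomial.C (σ := σ) (R := K))))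
  · intro f n hf hfP
    exact Ideal.mem_homogeneousCore_of_homogeneous_of_mem ⟨n, hf⟩ hfP

section LowerCore

variable {K κ : Type} [Field K] [Fintype κ] {n r : ℕ} {ι : Fin n → Type} [∀ i, Fintype (ι i)]

open Classical in
/-- The form `v ↦ ⟨T, x_j, …, v, …, x_j, u_j⟩` with `v` in slot `i`, as a vector of
coefficients. -/
noncomputable def slotForm (a : (∀ i, ι i) → κ → K) (x : Fin r → (Σ i, ι i) → K)
    (u : Fin r → κ → K) (i : Fin n) (j : Fin r) : (Σ i, ι i) → K := fun s =>
  ∑ c, u j c * ∑ g : ∀ i, ι i, if (⟨i, g i⟩ : Σ i, ι i) = s then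
    a g c * ∏ i' ∈ Finset.univ.erase i, x j ⟨i', g i'⟩ else 0

open Classical in
/-- Pairing with the `i`-th block of `x_j`. -/
noncomputable def blockPair (x : Fin r → (Σ i, ι i) → K) (i : Fin n) (j : Fin r) :
    ((Σ i, ι i) → K) →ₗ[K] K :=
  ∑ s : Σ i, ι i, (if s.1 = i then x j s else 0) • LinearMap.proj s

lemma blockPair_apply (x : Fin r → (Σ i, ι i) → K) (i : Fin n) (j : Fin r)
    (v : (Σ i, ι i) → K) :
    blockPair x i j v = ∑ s : Σ i, ι i, (if s.1 = i then x j s else 0) * v s := by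
  classical
  rw [blockPair, LinearMap.sum_apply]
  refine Finset.sum_congr rfl fun s _ => ?_
  rw [LinearMap.smul_apply, LinearMap.proj_apply, smul_eq_mul]

/-- When the `x_j` and `u_j` produce the identity tensor, the slot forms are dual to the blocks. -/
lemma blockPair_slotForm (a : (∀ i, ι i) → κ → K) (x : Fin r → (Σ i, ι i) → K)
    (u : Fin r → κ → K)
    (h : ∀ (b : Fin n → Fin r) (j : Fin r),
      ∑ c, u j c * ∑ g : ∀ i, ι i, a g c * ∏ i, x (b i) ⟨i, g i⟩ =
        if ∀ i, b i = j then 1 else 0)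
    (i i' : Fin n) (j j' : Fin r) :
    blockPair x i j (slotForm a x u i' j') = if i = i' ∧ j = j' then 1 else 0 := by
  classical
  have h1 : blockPair x i j (slotForm a x u i' j') =
      ∑ c, u j' c * ∑ g : ∀ i, ι i, (if i' = i then x j ⟨i', g i'⟩ else 0) *
        (a g c * ∏ i'' ∈ Finset.univ.erase i', x j' ⟨i'', g i''⟩) := by
    rw [blockPair_apply]
    simp only [slotForm, Finset.mul_sum]
    rw [Finset.sum_comm]
    refine Finset.sum_congr rfl fun c _ => ?_
    rw [Finset.sum_comm]
    refine Finset.sum_congr rfl fun g _ => ?_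
    simp only [mul_ite, mul_zero]
    rw [Finset.sum_ite_eq]
    simp only [Finset.mem_univ, if_true]
    split_ifs <;> ring
  rw [h1]
  by_cases hi : i' = i
  · subst hi
    have h2 := h (Function.update (fun _ => j') i' j) j'
    simp only [if_true, true_and]
    have h3 : (∀ i, Function.update (fun _ => j') i' j i = j') ↔ j = j' := by
      constructor
      · intro h; simpa using h i'
      · rintro rfl; simp
    simp only [h3] at h2
    rw [← h2]
    refine Finset.sum_congr rfl fun c _ => ?_
    congr 1
    refine Finset.sum_congr rfl fun g _ => ?_
    rw [← Finset.mul_prod_erase Finset.univ _ (Finset.mem_univ i')]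
    simp only [Function.update_self]
    have h4 : ∏ i'' ∈ Finset.univ.erase i',
        x (Function.update (fun _ => j') i' j i'') ⟨i'', g i''⟩ =
        ∏ i'' ∈ Finset.univ.erase i', x j' ⟨i'', g i''⟩ :=
      Finset.prod_congr rfl fun i'' hi'' => by
        rw [Function.update_of_ne (Finset.ne_of_mem_erase hi'')]
    rw [h4]
    ring
  · simp [hi, Ne.symm hi]

/-- If `I_r` is produced from the tensor with coordinates `a`, each prime over the coordinate
polynomials has height at least `r`. -/
theorem lower_core (a : (∀ i, ι i) → κ → K) (x : Fin r → (Σ i, ι i) → K)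
    (u : Fin r → κ → K)
    (h : ∀ (b : Fin n → Fin r) (j : Fin r),
      ∑ c, u j c * ∑ g : ∀ i, ι i, a g c * ∏ i, x (b i) ⟨i, g i⟩ =
        if ∀ i, b i = j then 1 else 0)
    (P : Ideal (MvPolynomial (Σ i, ι i) K)) [P.IsPrime] (hP : ∀ c, coordPoly a c ∈ P) :
    (r : ℕ∞) ≤ P.height := by
  classical
  obtain ⟨P₀, hP₀, hle, hQ, hhom⟩ := exists_prime_le_ker_constantCoeff P
  refine le_trans ?_ (Ideal.height_mono hle)
  replace hP : ∀ c, coordPoly a c ∈ P₀ := fun c => hhom _ _ (coordPoly_isHomogeneous a c) (hP c)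
  clear hhom hle
  -- `Z` is the space of linear forms vanishing on all blocks of all `x_j`
  let t := slotForm a x u
  let Z : Submodule K ((Σ i, ι i) → K) :=
    Submodule.span K (Set.range fun s : Σ i, ι i => Pi.single s 1 - ∑ j, x j s • t s.1 j)
  have hZpair : ∀ z ∈ Z, ∀ i j, blockPair x i j z = 0 := by
    intro z hz i j
    refine Submodule.span_induction (p := fun z _ => blockPair x i j z = 0) ?_ (by simp) ?_ ?_ hz
    · rintro _ ⟨s, rfl⟩
      simp only [map_sub, map_sum, map_smul, t, blockPair_slotForm a x u h, smul_eq_mul]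
      rw [blockPair_apply]
      by_cases hs : i = s.1
      · subst hs
        simp [Pi.single_apply]
      · simp [Pi.single_apply, hs, Ne.symm hs]
    · intro y z _ _ hy hz; rw [map_add, hy, hz, add_zero]
    · intro c z _ hz; rw [map_smul, hz, smul_zero]
  have hZQ : ∀ v, linForm K _ v ∈ RingHom.ker
      (MvPolynomial.constantCoeff (σ := Σ i, ι i) (R := K)) := by
    intro v
    rw [RingHom.mem_ker, linForm_apply, map_sum]
    exact Finset.sum_eq_zero fun s _ => by
      simp [MvPolynomial.smul_eq_C_mul]
  have hQp : (RingHom.ker (MvPolynomial.constantCoeff (σ := Σ i, ι i) (R := K))).IsPrime :=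
    RingHom.ker_isPrime _
  let B := Module.finBasis K Z
  obtain ⟨P', hP', h0, hB, hht⟩ := exists_prime_height_le_add_card P₀ _ hQ
    (Finset.univ.image fun k => linForm K _ (B k).1) (by
      intro z hz
      obtain ⟨k, _, rfl⟩ := Finset.mem_image.1 hz
      exact hZQ _)
  have hcard : (Finset.univ.image fun k => linForm K _ (B k).1).card ≤ finrank K Z :=
    Finset.card_image_le.trans (by simp)
  have hZP : ∀ z ∈ Z, linForm K _ z ∈ P' := by
    intro z hz
    have := B.sum_repr ⟨z, hz⟩
    have h2 : z = ∑ k, B.repr ⟨z, hz⟩ k • (B k).1 := by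
      have h3 := congrArg Subtype.val this
      rw [Submodule.coe_sum] at h3
      exact h3.symm
    rw [h2, map_sum]
    refine Ideal.sum_mem _ fun k _ => ?_
    rw [map_smul, MvPolynomial.smul_eq_C_mul]
    exact Ideal.mul_mem_left _ _ (hB _ (Finset.mem_image_of_mem _ (Finset.mem_univ k)))
  -- modulo `Z`, the `j`-th combination of the coordinate polynomials is `∏ i, t i j`
  let q := Ideal.Quotient.mk P'
  have hX : ∀ s : Σ i, ι i, q (MvPolynomial.X s) =
      ∑ j, q (MvPolynomial.C (x j s)) * q (linForm K _ (t s.1 j)) := by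
    intro s
    have h1 := hZP _ (Submodule.subset_span ⟨s, rfl⟩)
    rw [← Ideal.Quotient.eq_zero_iff_mem] at h1
    have h2 : linForm K _ (Pi.single s 1) = MvPolynomial.X s := by
      rw [linForm_apply]; simp [Pi.single_apply]
    simp only [map_sub, map_sum, map_smul, h2, MvPolynomial.smul_eq_C_mul, map_mul] at h1
    exact sub_eq_zero.1 h1
  have hprod : ∀ j, ∏ i, q (linForm K _ (t i j)) = 0 := by
    intro j
    have h1 : q (∑ c, MvPolynomial.C (u j c) * coordPoly a c) = 0 := by
      rw [Ideal.Quotient.eq_zero_iff_mem]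
      exact Ideal.sum_mem _ fun c _ => Ideal.mul_mem_left _ _ (h0 (hP c))
    rw [← h1]
    have h2 : ∀ g : ∀ i, ι i, ∏ i, q (MvPolynomial.X (⟨i, g i⟩ : Σ i, ι i)) =
        ∑ b : Fin n → Fin r, q (MvPolynomial.C (∏ i, x (b i) ⟨i, g i⟩)) *
          ∏ i, q (linForm K _ (t i (b i))) := by
      intro g
      rw [Finset.prod_congr rfl fun i _ => hX ⟨i, g i⟩, Finset.prod_univ_sum,
        Fintype.piFinset_univ]
      exact Finset.sum_congr rfl fun b _ => by
        rw [Finset.prod_mul_distrib, map_prod, map_prod]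
    have h3 : q (∑ c, MvPolynomial.C (u j c) * coordPoly a c) =
        ∑ b : Fin n → Fin r, q (MvPolynomial.C (∑ c, u j c * ∑ g : ∀ i, ι i, a g c *
          ∏ i, x (b i) ⟨i, g i⟩)) * ∏ i, q (linForm K _ (t i (b i))) := by
      simp only [coordPoly, map_sum, map_mul, map_prod q, h2, Finset.mul_sum, Finset.sum_mul]
      conv_rhs => rw [Finset.sum_comm]
      refine Finset.sum_congr rfl fun c _ => ?_
      conv_rhs => rw [Finset.sum_comm]
      refine Finset.sum_congr rfl fun g _ => Finset.sum_congr rfl fun b _ => ?_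
      ring
    rw [h3]
    simp only [h]
    rw [Finset.sum_eq_single (fun _ => j)]
    · simp
    · intro b _ hb
      rw [if_neg (fun h' => hb (funext h'))]
      simp
    · simp
  have hex : ∀ j, ∃ i, linForm K _ (t i j) ∈ P' := by
    intro j
    obtain ⟨i, _, hi⟩ := Finset.prod_eq_zero_iff.1 (hprod j)
    exact ⟨i, Ideal.Quotient.eq_zero_iff_mem.1 hi⟩
  choose i₀ hi₀ using hex
  -- all linear forms in `P'`: they map onto `K ^ r` with kernel containing `Z`
  let U : Submodule K ((Σ i, ι i) → K) := (P'.restrictScalars K).comap (linForm K _)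
  have hU := finrank_le_height P' U fun v hv => hv
  let φ : U →ₗ[K] (Fin r → K) := (LinearMap.pi fun j => blockPair x (i₀ j) j).comp U.subtype
  have hφ : Function.Surjective φ := by
    rw [← LinearMap.range_eq_top, eq_top_iff, ← (Pi.basisFun K (Fin r)).span_eq,
      Submodule.span_le]
    rintro _ ⟨j, rfl⟩
    refine ⟨⟨t (i₀ j) j, hi₀ j⟩, ?_⟩
    ext j'
    simp only [φ, LinearMap.comp_apply, LinearMap.pi_apply, Submodule.subtype_apply, t,
      blockPair_slotForm a x u h, Pi.basisFun_apply, Pi.single_apply]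
    by_cases hj : j' = j
    · subst hj; simp
    · simp [hj]
  have hker : finrank K Z ≤ finrank K (LinearMap.ker φ) := by
    let ψ : Z →ₗ[K] LinearMap.ker φ :=
      LinearMap.codRestrict _ (Submodule.inclusion (show Z ≤ U from hZP)) (by
        intro z
        rw [LinearMap.mem_ker]
        ext j
        exact hZpair z.1 z.2 _ _)
    refine LinearMap.finrank_le_finrank_of_injective (f := ψ) ?_
    intro z w hzw
    have := congrArg (fun v => (v.1.1 : _ → K)) hzw
    exact Subtype.ext this
  have hrn := LinearMap.finrank_range_add_finrank_ker φ
  rw [LinearMap.range_eq_top.2 hφ, finrank_top, Module.finrank_fin_fun] at hrn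
  have hfin : ((r + finrank K Z : ℕ) : ℕ∞) ≤ P₀.height + finrank K Z :=
    calc ((r + finrank K Z : ℕ) : ℕ∞) ≤ (finrank K U : ℕ∞) := by
          rw [← hrn]; exact_mod_cast Nat.add_le_add_left hker r
      _ ≤ P'.height := hU
      _ ≤ _ := hht
      _ ≤ _ := by gcongr
  have hne : P₀.height ≠ ⊤ := Ideal.height_ne_top_of_isPrime
  obtain ⟨m, hm⟩ := ENat.ne_top_iff_exists.1 hne
  rw [← hm] at hfin ⊢
  norm_cast at hfin ⊢
  omega

end LowerCore

/-! ### Independent contractions over infinite fields -/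

/-- Finitely many rational functions, not all zero, become integral at a place centred at the origin
after division by one of them, namely one of maximal valuation. -/
lemma exists_valuationSubring_normalising {K σ B : Type} [Field K] [Finite B]
    (c : B → FractionRing (MvPolynomial σ K)) (hc : c ≠ 0) :
    ∃ O : ValuationSubring (FractionRing (MvPolynomial σ K)),
      (∀ f : MvPolynomial σ K, algebraMap _ (FractionRing (MvPolynomial σ K)) f ∈ O) ∧
      (∀ s, algebraMap _ (FractionRing (MvPolynomial σ K)) (MvPolynomial.X s : MvPolynomial σ K)
        ∈ O.nonunits) ∧
      ∃ b₀, c b₀ ≠ 0 ∧ ∀ b, c b / c b₀ ∈ O := by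
  let A := MvPolynomial σ K
  let F := FractionRing A
  let φ : A →+* F := algebraMap A F
  have hφ : Function.Injective φ := IsFractionRing.injective A F
  let e : A ≃+* φ.range := RingEquiv.ofBijective φ.rangeRestrict
    ⟨fun x y h => hφ (congrArg Subtype.val h), φ.rangeRestrict_surjective⟩
  let I : Ideal φ.range := (RingHom.ker (MvPolynomial.constantCoeff (σ := σ) (R := K))).comap
    (e.symm : φ.range →+* A)
  have hI : I ≠ ⊤ := by
    rw [Ne, Ideal.eq_top_iff_one]
    simp [I]
  obtain ⟨O, hO1, hO2⟩ := Ideal.image_subset_nonunits_valuationSubring I hI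
  refine ⟨O, fun f => hO1 ⟨f, rfl⟩, fun s => hO2 ⟨e (MvPolynomial.X s), ?_, rfl⟩, ?_⟩
  · simp [I, RingHom.mem_ker]
  · have hne : Nonempty B := by
      by_contra h
      rw [not_nonempty_iff] at h
      exact hc (Subsingleton.elim _ _)
    obtain ⟨b₀, hb₀⟩ := Finite.exists_max fun b => O.valuation (c b)
    have h0 : c b₀ ≠ 0 := by
      intro h0
      apply hc
      funext b
      have := hb₀ b
      rw [h0, map_zero] at this
      simpa using this
    refine ⟨b₀, h0, fun b => ?_⟩
    rw [← O.valuation_le_one_iff, map_div₀]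
    have hp : 0 < O.valuation (c b₀) := by
      rw [zero_lt_iff]; simpa using h0
    exact (div_le_one₀ hp).2 (hb₀ b)

section UpperInfinite

variable {K κ : Type} [Field K] [Fintype κ] {n r : ℕ} {ι : Fin n → Type} [∀ i, Fintype (ι i)]

/-- Generic linear independence specialises to linear independence at some point, because over an
infinite field a nonzero polynomial has a nonzero value. -/
lemma exists_linearIndependent_eval {σ B : Type} [Infinite K] [Finite B]
    (w : B → κ → MvPolynomial σ K)
    (h : LinearIndependent (FractionRing (MvPolynomial σ K))
      (fun b c => algebraMap _ (FractionRing (MvPolynomial σ K)) (w b c))) :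
    ∃ x : σ → K, LinearIndependent K (fun b c => MvPolynomial.eval x (w b c)) := by
  classical
  have := Fintype.ofFinite B
  let A := MvPolynomial σ K
  let F := FractionRing A
  obtain ⟨D, hD⟩ := LinearMap.exists_leftInverse_of_injective _
    (LinearMap.ker_eq_bot.2 h.fintypeLinearCombination_injective)
  obtain ⟨s, hs⟩ := IsLocalization.exist_integer_multiples_of_finite (nonZeroDivisors A)
    (fun p : κ × B => D (Pi.single p.1 1) p.2)
  choose d hd using hs
  have hmul : ∀ b b', ∑ c, w b c * d (c, b') = if b = b' then (s : A) else 0 := by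
    intro b b'
    apply IsFractionRing.injective A F
    have h1 := congrArg (fun v => v b') (LinearMap.congr_fun hD (Pi.single b 1))
    simp only [LinearMap.comp_apply, Fintype.linearCombination_apply_single, one_smul,
      LinearMap.id_apply] at h1
    rw [map_sum]
    have h2 : (fun c => algebraMap A F (w b c)) =
        ∑ c, algebraMap A F (w b c) • (Pi.single c 1 : κ → F) := by
      ext c'
      rw [Finset.sum_apply, Finset.sum_eq_single c']
      · rw [Pi.smul_apply, Pi.single_eq_same, smul_eq_mul, mul_one]
      · intro c _ hc
        rw [Pi.smul_apply, Pi.single_eq_of_ne hc.symm, smul_zero]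
      · simp
    rw [h2, map_sum, Finset.sum_apply] at h1
    have h3 : ∀ c, algebraMap A F (w b c * d (c, b')) =
        algebraMap A F s * (D (algebraMap A F (w b c) • (Pi.single c 1 : κ → F)) b') := by
      intro c
      rw [map_mul, hd, map_smul, Pi.smul_apply, smul_eq_mul, Algebra.smul_def]
      ring
    rw [Finset.sum_congr rfl fun c _ => h3 c, ← Finset.mul_sum, h1, Pi.single_apply]
    by_cases hb : b = b'
    · simp [hb]
    · simp [hb, Ne.symm hb]
  have hs0 : (s : A) ≠ 0 := nonZeroDivisors.coe_ne_zero s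
  obtain ⟨x, hx⟩ : ∃ x, MvPolynomial.eval x (s : A) ≠ 0 := by
    by_contra! hcon
    exact hs0 (MvPolynomial.funext fun x => by rw [hcon x, map_zero])
  refine ⟨x, Fintype.linearIndependent_iff.2 fun g hg b' => ?_⟩
  have h1 : ∑ c, (∑ b, g b * MvPolynomial.eval x (w b c)) * MvPolynomial.eval x (d (c, b')) =
      g b' * MvPolynomial.eval x (s : A) := by
    simp only [Finset.sum_mul]
    rw [Finset.sum_comm]
    have h2 : ∀ b, ∑ c, g b * MvPolynomial.eval x (w b c) * MvPolynomial.eval x (d (c, b')) =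
        if b = b' then g b * MvPolynomial.eval x (s : A) else 0 := by
      intro b
      have := congrArg (MvPolynomial.eval x) (hmul b b')
      rw [map_sum] at this
      simp only [map_mul] at this
      simp only [mul_assoc]
      rw [← Finset.mul_sum, this]
      split_ifs <;> simp
    rw [Finset.sum_congr rfl fun b _ => h2 b]
    simp
  have h2 : ∀ c, ∑ b, g b * MvPolynomial.eval x (w b c) = 0 := by
    intro c
    have := congrFun hg c
    simpa [Finset.sum_apply] using this
  simp only [h2, zero_mul, Finset.sum_const_zero] at h1
  exact (mul_eq_zero.1 h1.symm).resolve_right hx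

/-- Over an infinite field, if all primes over the coordinate polynomials have height more than `r ^
n`, then `r` vectors per slot can be chosen with all `r ^ n` contractions linearly independent. -/
theorem upper_core_infinite [Infinite K] (a : (∀ i, ι i) → κ → K) (R : ℕ)
    (hR : ∀ P : Ideal (MvPolynomial (Σ i, ι i) K), P.IsPrime → (∀ c, coordPoly a c ∈ P) →
      (R : ℕ∞) ≤ P.height) (hr : r ^ n < R) :
    ∃ x : Fin r → (Σ i, ι i) → K, LinearIndependent K
      (fun (b : Fin n → Fin r) c => MvPolynomial.eval (fun s => x (b s.1) s) (coordPoly a c)) := by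
  classical
  let σ := Fin r × Σ i, ι i
  let A := MvPolynomial σ K
  let F := FractionRing A
  let w : (Fin n → Fin r) → κ → A := fun b c =>
    MvPolynomial.rename (fun s => ((b s.1, s) : σ)) (coordPoly a c)
  by_cases hind : LinearIndependent F (fun b c => algebraMap A F (w b c))
  · obtain ⟨x, hx⟩ := exists_linearIndependent_eval w hind
    refine ⟨fun j s => x (j, s), ?_⟩
    convert hx using 3 with b c
    simp only [w, MvPolynomial.eval_rename]
    rfl
  exfalso
  rw [Fintype.linearIndependent_iff] at hind
  push Not at hind
  obtain ⟨c', hc', b', hb'⟩ := hind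
  obtain ⟨O, hOA, hOX, b₀, hb₀, hcO⟩ := exists_valuationSubring_normalising c'
    (fun h => hb' (by rw [h]; rfl))
  -- the relation, normalised to have coefficient one at `b₀`
  let d : (Fin n → Fin r) → O := fun b => ⟨c' b / c' b₀, hcO b⟩
  have hd : ∀ c, ∑ b, (d b : F) * algebraMap A F (w b c) = 0 := by
    intro c
    have h1 := congrFun hc' c
    simp only [Finset.sum_apply, Pi.smul_apply, smul_eq_mul, Pi.zero_apply] at h1
    simp only [d, div_mul_eq_mul_div]
    rw [← Finset.sum_div, h1, zero_div]
  -- evaluation of `r ^ n` additional variables at the coefficients of the relation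
  let ψ : MvPolynomial ((Fin n → Fin r) ⊕ σ) K →+* O := MvPolynomial.eval₂Hom
    ((algebraMap A F).comp MvPolynomial.C |>.codRestrict O.toSubring (fun f => hOA _))
    (Sum.elim d fun s => ⟨algebraMap A F (MvPolynomial.X s), hOA _⟩)
  have hψr : ∀ f : A, (ψ (MvPolynomial.rename Sum.inr f) : F) = algebraMap A F f := by
    intro f
    have : (O.subtype.comp ψ).comp (MvPolynomial.rename Sum.inr).toRingHom = algebraMap A F := by
      apply MvPolynomial.ringHom_ext
      · intro k; simp [ψ]
      · intro s; simp [ψ]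
    exact RingHom.congr_fun this f
  let P := RingHom.ker ψ
  have hPp : P.IsPrime := RingHom.ker_isPrime _
  let Q := (IsLocalRing.maximalIdeal O).comap ψ
  have hQp : Q.IsPrime := Ideal.comap_isPrime _ _
  have hPQ : P ≤ Q := Ideal.comap_mono bot_le
  have hPht : P.height ≤ Nat.card (Fin n → Fin r) := by
    apply height_le_of_rename_inr
    intro f hf
    apply IsFractionRing.injective A F
    rw [← hψr, (RingHom.mem_ker).1 hf, map_zero]
    rfl
  -- the coordinates of the vectors not used by `b₀`; they vanish at the centre of the place
  let zs : Finset σ := Finset.univ.filter fun p => p.1 ≠ b₀ p.2.1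
  obtain ⟨P', hP', hPP', hz, hht⟩ := exists_prime_height_le_add_card P Q hPQ
    (zs.image fun p => MvPolynomial.X (Sum.inr p)) (by
      intro z hz
      obtain ⟨p, _, rfl⟩ := Finset.mem_image.1 hz
      show ψ _ ∈ IsLocalRing.maximalIdeal O
      obtain ⟨h1, h2⟩ := O.mem_nonunits_iff_exists_mem_maximalIdeal.1 (hOX p)
      simpa [ψ] using h2)
  have hzcard : (zs.image fun p => (MvPolynomial.X (Sum.inr p) :
      MvPolynomial ((Fin n → Fin r) ⊕ σ) K)).card ≤ zs.card := Finset.card_image_le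
  have hzs : zs.card + Fintype.card (Σ i, ι i) = Fintype.card σ := by
    have h1 := Finset.card_filter_add_card_filter_not (s := (Finset.univ : Finset σ))
      (fun p => p.1 = b₀ p.2.1)
    have h2 : (Finset.univ.filter fun p : σ => p.1 = b₀ p.2.1) =
        Finset.univ.image fun s => ((b₀ s.1, s) : σ) := by
      ext ⟨j, s⟩
      simp only [Finset.mem_filter, Finset.mem_univ, true_and, Finset.mem_image]
      constructor
      · intro h; exact ⟨s, by rw [h]⟩
      · rintro ⟨s', h⟩; cases h; rfl
    rw [h2, Finset.card_image_of_injective _ (fun s s' h => congrArg Prod.snd h)] at h1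
    rw [Finset.card_univ, Finset.card_univ] at h1
    have h3 : zs.card = (Finset.univ.filter fun p : σ => ¬ p.1 = b₀ p.2.1).card := rfl
    omega
  let e : (Σ i, ι i) → (Fin n → Fin r) ⊕ σ := fun s => Sum.inr (b₀ s.1, s)
  have he : Function.Injective e := fun s s' h => congrArg Prod.snd (Sum.inr_injective h)
  -- `P'` contains the normalised relation, and `w b` for all `b ≠ b₀`, hence also `w b₀`
  let P₁ := P'.comap (MvPolynomial.rename e : MvPolynomial (Σ i, ι i) K →ₐ[K] _)
  have hP₁ : P₁.IsPrime := Ideal.comap_isPrime _ _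
  have hf : ∀ c, coordPoly a c ∈ P₁ := by
    intro c
    show MvPolynomial.rename e (coordPoly a c) ∈ P'
    have h1 : ∑ b, MvPolynomial.X (Sum.inl b) * MvPolynomial.rename Sum.inr (w b c) ∈ P' := by
      apply hPP'
      rw [RingHom.mem_ker]
      apply Subtype.ext
      refine Eq.trans ?_ (hd c)
      rw [map_sum]
      have : ∀ v : (Fin n → Fin r) → O, ((∑ b, v b : O) : F) = ∑ b, (v b : F) := fun v =>
        map_sum O.subtype v _
      rw [this]
      refine Finset.sum_congr rfl fun b _ => ?_
      rw [map_mul, ← hψr]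
      simp [ψ]
    have h2 : ∀ b, b ≠ b₀ → (MvPolynomial.rename Sum.inr (w b c) :
        MvPolynomial ((Fin n → Fin r) ⊕ σ) K) ∈ P' := by
      intro b hb
      simp only [w, coordPoly, map_sum, map_mul, map_prod, MvPolynomial.rename_X]
      refine Ideal.sum_mem _ fun g _ => Ideal.mul_mem_left _ _ ?_
      obtain ⟨i, hi⟩ := Function.ne_iff.1 hb
      refine Ideal.mem_of_dvd _ (Finset.dvd_prod_of_mem _ (Finset.mem_univ i)) (hz _ ?_)
      exact Finset.mem_image.2 ⟨(b i, ⟨i, g i⟩), by simpa [zs] using hi, rfl⟩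
    have h3 : MvPolynomial.X (Sum.inl b₀) - 1 ∈ P' := by
      apply hPP'
      rw [RingHom.mem_ker]
      apply Subtype.ext
      simp [ψ, d, div_self hb₀]
    rw [← Finset.add_sum_erase _ _ (Finset.mem_univ b₀)] at h1
    have h4 := (Ideal.add_mem_iff_left _ (Ideal.sum_mem _ fun b hb =>
      Ideal.mul_mem_left _ _ (h2 b (Finset.ne_of_mem_erase hb)))).1 h1
    have h5 : MvPolynomial.rename e (coordPoly a c) = (MvPolynomial.rename Sum.inr (w b₀ c) :
        MvPolynomial ((Fin n → Fin r) ⊕ σ) K) := by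
      simp only [w, MvPolynomial.rename_rename]
      rfl
    rw [h5]
    have h6 := P'.sub_mem h4 (P'.mul_mem_right (MvPolynomial.rename Sum.inr (w b₀ c)) h3)
    convert h6 using 1
    ring
  have hR₁ := hR P₁ hP₁ hf
  -- independent variables modulo `P'` are relation coefficients or coordinates used by `b₀`
  obtain ⟨J, hJ, hJi⟩ := exists_indepMod _ P'
  let J' : Finset (Σ i, ι i) := Finset.univ.filter fun s => e s ∈ J
  have hJ' : IndepMod P₁ J' := by
    intro f hf hfP
    apply MvPolynomial.rename_injective e he
    rw [map_zero]
    refine hJi _ ?_ hfP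
    rw [MvPolynomial.mem_supported] at hf ⊢
    intro t ht
    obtain ⟨s, hs, rfl⟩ := Finset.mem_image.1 (MvPolynomial.vars_rename e f ht)
    have := hf hs
    simpa [J'] using this
  have hJ'c := hJ'.height_add_card_le
  have hJc : J.card ≤ r ^ n + J'.card := by
    have hsub : J ⊆ (Finset.univ.image Sum.inl) ∪ J'.image e := by
      intro t ht
      rw [Finset.mem_union]
      rcases t with b | p
      · left; simp
      · right
        have hp : p.1 = b₀ p.2.1 := by
          by_contra hne
          have hX : (MvPolynomial.X (Sum.inr p) : MvPolynomial ((Fin n → Fin r) ⊕ σ) K) ∈ P' :=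
            hz _ (Finset.mem_image.2 ⟨p, by simpa [zs] using hne, rfl⟩)
          have := hJi _ (MvPolynomial.X_mem_supported.2 ht) hX
          exact MvPolynomial.X_ne_zero _ this
        have hp2 : e p.2 = Sum.inr p := by
          simp only [e, ← hp, Prod.mk.eta]
        exact Finset.mem_image.2 ⟨p.2, by simpa [J', hp2] using ht, hp2⟩
    refine (Finset.card_le_card hsub).trans ((Finset.card_union_le _ _).trans ?_)
    gcongr
    · exact Finset.card_image_le.trans (by simp)
    · exact Finset.card_image_le
  have hB : Nat.card (Fin n → Fin r) = r ^ n := by simp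
  rw [Nat.card_eq_fintype_card] at hJ'c
  rw [Nat.card_sum, Nat.card_eq_fintype_card (α := σ), hB] at hJ
  rw [hB] at hPht
  have h1 : P'.height ≤ r ^ n + zs.card :=
    hht.trans (add_le_add (by exact_mod_cast hPht) (by exact_mod_cast hzcard))
  have h2 : ((r ^ n + Fintype.card σ : ℕ) : ℕ∞) ≤ J.card + (r ^ n + zs.card) := by
    refine le_trans (by exact_mod_cast hJ) (add_le_add le_rfl h1)
  have h3 : (R : ℕ∞) + J'.card ≤ Fintype.card (Σ i, ι i) :=
    (add_le_add hR₁ le_rfl).trans hJ'c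
  norm_cast at h2 h3
  omega

end UpperInfinite

/-! ### Counting points of varieties on grids -/

/-- If `g` is a nonzerodivisor modulo `J` and `J + (g) ≤ J'`, then a family independent modulo `J'`
stays independent modulo `J` after multiplication by all powers of `g`. -/
lemma linearIndependent_mul_pow {F A ι : Type} [Field F] [CommRing A] [Algebra F A]
    (J J' : Ideal A) (hJ : J ≤ J') (g : A) (hg : g ∈ J') (hnz : ∀ f, g * f ∈ J → f ∈ J)
    (p : ι → A) (hp : LinearIndependent F fun i => Ideal.Quotient.mk J' (p i)) :
    LinearIndependent F fun x : ι × ℕ => Ideal.Quotient.mk J (p x.1 * g ^ x.2) := by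
  classical
  rw [linearIndependent_iff'']
  intro s c hc hsum
  have hmem : ∑ x ∈ s, algebraMap F A (c x) * (p x.1 * g ^ x.2) ∈ J := by
    rw [← Ideal.Quotient.eq_zero_iff_mem, ← hsum, map_sum]
    refine Finset.sum_congr rfl fun x _ => ?_
    rw [← Algebra.smul_def]
    rfl
  have hpow : ∀ m f, g ^ m * f ∈ J → f ∈ J := by
    intro m
    induction m with
    | zero => intro f hf; simpa using hf
    | succ m ih => intro f hf; exact ih f (hnz _ (by rwa [← mul_assoc, ← pow_succ']))
  have key : ∀ α i, c (i, α) = 0 := by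
    intro α
    induction α using Nat.strong_induction_on with
    | _ α ih =>
    have h1 : ∑ x ∈ s, algebraMap F A (c x) * (p x.1 * g ^ (x.2 - α)) ∈ J := by
      apply hpow α
      convert hmem using 1
      rw [Finset.mul_sum]
      refine Finset.sum_congr rfl fun x _ => ?_
      rcases lt_or_ge x.2 α with hx | hx
      · rw [show c x = 0 from ih x.2 hx x.1]; simp
      · rw [← Nat.sub_add_cancel hx, pow_add, Nat.add_sub_cancel]; ring
    have h2 := hJ h1
    have h3 : ∑ i ∈ s.image Prod.fst, c (i, α) • Ideal.Quotient.mk J' (p i) = 0 := by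
      rw [← Ideal.Quotient.eq_zero_iff_mem, map_sum] at h2
      rw [← h2]
      have h4 : ∀ x ∈ s, Ideal.Quotient.mk J' (algebraMap F A (c x) * (p x.1 * g ^ (x.2 - α))) =
          if x.2 = α then c x • Ideal.Quotient.mk J' (p x.1) else 0 := by
        intro x _
        split_ifs with hx
        · rw [hx, Nat.sub_self, pow_zero, mul_one, ← Algebra.smul_def]; rfl
        · rcases lt_or_gt_of_ne hx with hx | hx
          · rw [show c x = 0 from ih x.2 hx x.1]; simp
          · rw [Ideal.Quotient.eq_zero_iff_mem]
            exact Ideal.mul_mem_left _ _ (Ideal.mul_mem_left _ _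
              (Ideal.pow_mem_of_mem _ hg _ (by omega)))
      rw [Finset.sum_congr rfl h4, ← Finset.sum_filter]
      refine (Finset.sum_of_injOn (fun x => x.1) ?_ ?_ ?_ ?_).symm
      · intro x hx y hy hxy
        simp only [Finset.coe_filter, Set.mem_ofPred_eq] at hx hy
        exact Prod.ext hxy (hx.2.trans hy.2.symm)
      · intro x hx
        simp only [Finset.coe_filter, Set.mem_ofPred_eq] at hx
        simp only [Finset.coe_image, Set.mem_image, Finset.mem_coe]
        exact ⟨x, hx.1, rfl⟩
      · intro i _ hi
        have : (i, α) ∉ s := by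
          intro hs
          exact hi ⟨(i, α), by simpa using hs, rfl⟩
        rw [hc _ this, zero_smul]
      · intro x hx
        simp only [Finset.mem_filter] at hx
        rw [← hx.2]
    intro i
    by_cases hi : i ∈ s.image Prod.fst
    · exact linearIndependent_iff'.1 hp _ (fun i => c (i, α)) h3 i hi
    · refine hc _ fun hs => hi (Finset.mem_image_of_mem Prod.fst hs)
  exact fun x => key x.2 x.1

section Grid

variable {F σ : Type} [Field F] [Fintype σ]

lemma mul_mem_radical_of_forall_notMem {A : Type} [CommRing A] (I : Ideal A) (g : A)
    (hg : ∀ p ∈ I.minimalPrimes, g ∉ p) (f : A) (hf : g * f ∈ I.radical) : f ∈ I.radical := by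
  rw [← Ideal.sInf_minimalPrimes, Ideal.mem_sInf] at hf ⊢
  intro p hp
  have := hp.1.1
  exact (this.mem_or_mem (hf hp)).resolve_left (hg p hp)

/-- A long linearly independent family: starting from polynomials `p s` independent modulo a radical
ideal `I`, multiply by all monomials in `k` polynomials of `I` that successively avoid
the components of the previous ones. -/
lemma exists_independent_products {ι : Type} (I : Ideal (MvPolynomial σ F)) (hI : I.IsRadical)
    (p : ι → MvPolynomial σ F)
    (hp : LinearIndependent F fun i => Ideal.Quotient.mk I (p i)) (N : ℕ) (d : ℕ → ℕ)
    (hex : ∀ i < N, ∀ S : Set (Ideal (MvPolynomial σ F)), S.Finite →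
      (∀ q ∈ S, q.IsPrime ∧ q.height ≤ i) →
        ∃ g ∈ I, g.totalDegree ≤ d i ∧ ∀ q ∈ S, g ∉ q) :
    ∀ k ≤ N, ∀ G : Finset (MvPolynomial σ F), G.card ≤ N - k → (∀ g ∈ G, g ∈ I) →
      ∃ g : Fin k → MvPolynomial σ F, (∀ j, (g j).totalDegree ≤ d (N - k + j)) ∧
        LinearIndependent F fun x : ι × (Fin k → ℕ) =>
          Ideal.Quotient.mk (Ideal.span (G : Set (MvPolynomial σ F))).radical
            (p x.1 * ∏ j, g j ^ x.2 j) := by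
  classical
  intro k
  induction k with
  | zero =>
    intro _ G _ hG
    refine ⟨Fin.elim0, fun j => j.elim0, ?_⟩
    have hle : (Ideal.span (G : Set (MvPolynomial σ F))).radical ≤ I :=
      hI.radical_le_iff.2 (Ideal.span_le.2 hG)
    have h1 : LinearIndependent F fun i => Ideal.Quotient.mk
        (Ideal.span (G : Set (MvPolynomial σ F))).radical (p i) := by
      refine LinearIndependent.of_comp (Ideal.Quotient.factorₐ F hle).toLinearMap ?_
      exact hp
    have h2 := h1.comp (fun x : ι × (Fin 0 → ℕ) => x.1)
      (fun x y h => Prod.ext h (Subsingleton.elim _ _))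
    simpa [Function.comp_def] using h2
  | succ k ih =>
    intro hk G hG hGI
    obtain ⟨g, hgI, hgd, hgq⟩ := hex (N - (k + 1)) (by omega)
      (Ideal.span (G : Set (MvPolynomial σ F))).minimalPrimes
      (Ideal.finite_minimalPrimes_of_isNoetherianRing _ _)
      (fun q hq => ⟨hq.1.1, (Ideal.height_le_card_of_mem_minimalPrimes_span_finset hq).trans
        (by exact_mod_cast hG)⟩)
    obtain ⟨g', hg'd, hg'⟩ := ih (by omega) (insert g G)
      ((Finset.card_insert_le _ _).trans (by omega))
      (by
        intro f hf
        rcases Finset.mem_insert.1 hf with rfl | hf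
        · exact hgI
        · exact hGI f hf)
    have h1 := linearIndependent_mul_pow (F := F)
      (Ideal.span (G : Set (MvPolynomial σ F))).radical
      (Ideal.span ((insert g G : Finset _) : Set (MvPolynomial σ F))).radical
      (Ideal.radical_mono (Ideal.span_mono (by simp))) g
      (Ideal.le_radical (Ideal.subset_span (by simp)))
      (mul_mem_radical_of_forall_notMem _ g hgq) _ hg'
    refine ⟨Fin.cons g g', ?_, ?_⟩
    · intro j
      refine Fin.cases ?_ (fun j => ?_) j
      · simpa using hgd
      · simp only [Fin.cons_succ, Fin.val_succ]
        refine (hg'd j).trans (le_of_eq (congrArg d ?_))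
        omega
    · have h2 := h1.comp (fun x : ι × (Fin (k + 1) → ℕ) => ((x.1, Fin.tail x.2), x.2 0)) (by
        intro x y h
        simp only [Prod.mk.injEq] at h
        refine Prod.ext h.1.1 ?_
        rw [← Fin.cons_self_tail x.2, ← Fin.cons_self_tail y.2, h.1.2, h.2])
      convert h2 using 3 with x
      simp only [Function.comp_apply]
      rw [Fin.prod_univ_succ]
      simp only [Fin.cons_zero, Fin.cons_succ, Fin.tail]
      ring_nf

/-- Exponent vectors of total degree at most `D`. -/
def degBox (N D : ℕ) : Finset (Fin N → ℕ) :=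
  (Fintype.piFinset fun _ => Finset.range (D + 1)).filter fun α => ∑ i, α i ≤ D

lemma mem_degBox {N D : ℕ} {α : Fin N → ℕ} : α ∈ degBox N D ↔ ∑ i, α i ≤ D := by
  simp only [degBox, Finset.mem_filter, Fintype.mem_piFinset, Finset.mem_range,
    and_iff_right_iff_imp]
  intro h i
  exact Nat.lt_succ_of_le ((Finset.single_le_sum (fun _ _ => Nat.zero_le _)
    (Finset.mem_univ i)).trans h)

lemma card_degBox_le (N D : ℕ) : (degBox N D).card ≤ (D + 1) ^ N :=
  (Finset.card_filter_le _ _).trans (by simp)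

lemma finrank_restrictTotalDegree_le (D : ℕ) :
    finrank F (MvPolynomial.restrictTotalDegree σ F D) ≤ (degBox (Fintype.card σ) D).card := by
  classical
  let e := Fintype.equivFin σ
  rw [MvPolynomial.restrictTotalDegree,
    finrank_eq_nat_card_basis (MvPolynomial.basisRestrictSupport F _)]
  rw [← Fintype.card_coe, ← Nat.card_eq_fintype_card]
  refine Nat.card_le_card_of_injective (fun n => ⟨fun j => n.1 (e.symm j), ?_⟩) ?_
  · rw [mem_degBox]
    have h1 := n.2
    rw [Set.mem_ofPred_eq, Finsupp.sum_fintype _ _ (fun _ => rfl)] at h1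
    rwa [Equiv.sum_comp e.symm (fun i => n.1 i)]
  · intro n m h
    apply Subtype.ext
    ext i
    have := congrFun (congrArg Subtype.val h) (e i)
    simpa using this

/-- Division with remainder by `d` covers the exponent vectors. -/
lemma card_degBox_le_prod_mul (N D : ℕ) (d : Fin N → ℕ) (hd : ∀ i, 0 < d i) :
    (degBox N D).card ≤ (∏ i, d i) * ((degBox N D).filter fun α => ∑ i, d i * α i ≤ D).card := by
  classical
  have h1 : (∏ i, d i) = (Fintype.piFinset fun i => Finset.range (d i)).card := by simp
  rw [h1, ← Finset.card_product]
  refine Finset.card_le_card_of_injOn (fun β => (fun i => β i % d i, fun i => β i / d i)) ?_ ?_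
  · intro β hβ
    rw [Finset.mem_coe, mem_degBox] at hβ
    simp only [Finset.coe_product, Set.mem_prod, Finset.mem_coe, Fintype.mem_piFinset,
      Finset.mem_range, Finset.mem_filter, mem_degBox]
    refine ⟨fun i => Nat.mod_lt _ (hd i), ?_, ?_⟩
    · exact (Finset.sum_le_sum fun i _ => Nat.div_le_self _ _).trans hβ
    · exact (Finset.sum_le_sum fun i _ => Nat.mul_div_le _ _).trans hβ
  · intro β _ γ _ h
    simp only [Prod.mk.injEq] at h
    funext i
    rw [← Nat.mod_add_div (β i) (d i), ← Nat.mod_add_div (γ i) (d i)]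
    rw [show β i % d i = γ i % d i from congrFun h.1 i,
      show β i / d i = γ i / d i from congrFun h.2 i]

/-- A sequence of polynomial growth cannot grow geometrically. -/
lemma le_of_forall_mul_le (N s P E : ℕ) (M : ℕ → ℕ) (hM0 : 0 < M 0)
    (hM : ∀ D, M D ≤ (D + 1) ^ N) (h : ∀ D, s * M D ≤ P * M (D + E)) : s ≤ P := by
  by_contra! hlt
  have hP : 0 < P := by
    rcases Nat.eq_zero_or_pos P with rfl | hP
    · have := h 0
      simp at this
      omega
    · exact hP
  have h1 : ∀ k, s ^ k ≤ P ^ k * M (k * E) := by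
    intro k
    induction k with
    | zero => simpa using Nat.succ_le_of_lt hM0
    | succ k ih =>
      calc s ^ (k + 1) = s * s ^ k := pow_succ' _ _
        _ ≤ s * (P ^ k * M (k * E)) := Nat.mul_le_mul_left _ ih
        _ = P ^ k * (s * M (k * E)) := by ring
        _ ≤ P ^ k * (P * M (k * E + E)) := Nat.mul_le_mul_left _ (h _)
        _ = _ := by rw [Nat.succ_mul]; ring
  let r : ℝ := s / P
  have hP' : (0 : ℝ) < P := by exact_mod_cast hP
  have hr : 1 < r := by
    rw [one_lt_div hP']; exact_mod_cast hlt
  have h2 : ∀ k : ℕ, 1 ≤ k → (1 : ℝ) / (E + 1) ^ N ≤ (k : ℝ) ^ N / r ^ k * 1 := by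
    intro k hk
    have h3 : (s : ℝ) ^ k ≤ P ^ k * ((k : ℝ) * (E + 1)) ^ N := by
      have h4 : s ^ k ≤ P ^ k * (k * (E + 1)) ^ N := by
        refine (h1 k).trans (Nat.mul_le_mul_left _ ((hM _).trans ?_))
        exact Nat.pow_le_pow_left (by nlinarith) _
      exact_mod_cast h4
    rw [mul_one, div_le_div_iff₀ (by positivity) (by positivity), one_mul, ← mul_pow]
    simp only [r, div_pow]
    rw [div_le_iff₀ (by positivity)]
    linarith
  have h3 := tendsto_pow_const_div_const_pow_of_one_lt N hr
  have h4 : (0 : ℝ) < 1 / (E + 1) ^ N := by positivity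
  obtain ⟨k, hk1, hk2⟩ := ((h3.eventually (gt_mem_nhds h4)).and
    (Filter.eventually_ge_atTop 1)).exists
  have := h2 k hk2
  linarith

/-- Polynomials separating the points of a finite set. -/
lemma exists_interpolation (S : Finset (σ → F)) :
    ∃ p : S → MvPolynomial σ F, ∀ s t : S, MvPolynomial.eval t.1 (p s) = 0 ↔ s ≠ t := by
  classical
  have h : ∀ s t : S, ∃ f : MvPolynomial σ F, MvPolynomial.eval s.1 f ≠ 0 ∧
      (s ≠ t → MvPolynomial.eval t.1 f = 0) := by
    intro s t
    by_cases hst : s = t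
    · exact ⟨1, by simp, fun h => absurd hst h⟩
    · obtain ⟨i, hi⟩ := Function.ne_iff.1 (fun h => hst (Subtype.ext h) : s.1 ≠ t.1)
      exact ⟨MvPolynomial.X i - MvPolynomial.C (t.1 i), by simpa [sub_eq_zero] using hi,
        fun _ => by simp⟩
  choose f hf1 hf2 using h
  refine ⟨fun s => ∏ t, f s t, fun s t => ⟨?_, ?_⟩⟩
  · rintro h rfl
    rw [map_prod, Finset.prod_eq_zero_iff] at h
    obtain ⟨t, _, ht⟩ := h
    exact hf1 _ _ ht
  · intro hst
    rw [map_prod]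
    exact Finset.prod_eq_zero (Finset.mem_univ t) (hf2 s t hst)

/-- A Bézout-type bound for a finite set of points. -/
theorem card_le_prod_degrees (S : Finset (σ → F)) (d : ℕ → ℕ) (hd : ∀ i, 0 < d i)
    (hex : ∀ i < Fintype.card σ, ∀ 𝒮 : Set (Ideal (MvPolynomial σ F)), 𝒮.Finite →
      (∀ q ∈ 𝒮, q.IsPrime ∧ q.height ≤ i) →
        ∃ g : MvPolynomial σ F, (∀ s ∈ S, MvPolynomial.eval s g = 0) ∧
          g.totalDegree ≤ d i ∧ ∀ q ∈ 𝒮, g ∉ q) :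
    S.card ≤ ∏ i : Fin (Fintype.card σ), d i := by
  classical
  set N := Fintype.card σ
  let I : Ideal (MvPolynomial σ F) := ⨅ s : S, RingHom.ker (MvPolynomial.eval s.1)
  have hmemI : ∀ f, f ∈ I ↔ ∀ s ∈ S, MvPolynomial.eval s f = 0 := by
    intro f
    simp [I, RingHom.mem_ker]
  have hI : I.IsRadical := by
    intro f hf
    obtain ⟨m, hm⟩ := hf
    rw [hmemI] at hm ⊢
    intro s hs
    have := hm s hs
    rw [map_pow] at this
    exact eq_zero_of_pow_eq_zero this
  obtain ⟨p, hp⟩ := exists_interpolation S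
  have hpi : LinearIndependent F fun s => Ideal.Quotient.mk I (p s) := by
    rw [Fintype.linearIndependent_iff]
    intro c hc t
    have h1 : ∑ s, MvPolynomial.C (c s) * p s ∈ I := by
      rw [← Ideal.Quotient.eq_zero_iff_mem, ← hc, map_sum]
      refine Finset.sum_congr rfl fun s _ => ?_
      rw [← MvPolynomial.smul_eq_C_mul]
      rfl
    have h2 := (hmemI _).1 h1 t.1 t.2
    rw [map_sum, Finset.sum_eq_single t] at h2
    · rw [map_mul, MvPolynomial.eval_C] at h2
      refine (mul_eq_zero.1 h2).resolve_right fun h => ?_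
      exact ((hp t t).1 h) rfl
    · intro s _ hst
      rw [map_mul, (hp s t).2 hst, mul_zero]
    · simp
  obtain ⟨g, hgd, hg⟩ := exists_independent_products I hI p hpi N d
    (fun i hi 𝒮 h1 h2 => by
      obtain ⟨g, h3, h4, h5⟩ := hex i hi 𝒮 h1 h2
      exact ⟨g, (hmemI g).2 h3, h4, h5⟩) N le_rfl ∅ (by simp) (by simp)
  have hg' : LinearIndependent F fun x : S × (Fin N → ℕ) => p x.1 * ∏ j, g j ^ x.2 j := by
    refine LinearIndependent.of_comp (Ideal.Quotient.mkₐ F _).toLinearMap hg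
  let E := Finset.univ.sup fun s => (p s).totalDegree
  refine le_of_forall_mul_le N _ _ E (fun D => (degBox N D).card)
    (Finset.card_pos.2 ⟨0, by simp [mem_degBox]⟩) (card_degBox_le N) fun D => ?_
  let B := (degBox N D).filter fun α => ∑ i, d (i : Fin N) * α i ≤ D
  have h1 : S.card * B.card ≤ (degBox N (D + E)).card := by
    refine le_trans ?_ (finrank_restrictTotalDegree_le (F := F) (σ := σ) (D + E))
    have hdeg : ∀ x : S × B, p x.1 * ∏ j, g j ^ x.2.1 j ∈
        MvPolynomial.restrictTotalDegree σ F (D + E) := by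
      rintro ⟨s, α, hα⟩
      rw [MvPolynomial.mem_restrictTotalDegree]
      refine (MvPolynomial.totalDegree_mul _ _).trans ?_
      rw [add_comm D E]
      refine add_le_add (Finset.le_sup (f := fun s => (p s).totalDegree) (Finset.mem_univ s)) ?_
      refine (MvPolynomial.totalDegree_finsetProd _ _).trans ?_
      refine le_trans (Finset.sum_le_sum fun j _ => ?_) (Finset.mem_filter.1 hα).2
      refine (MvPolynomial.totalDegree_pow _ _).trans ?_
      rw [mul_comm]
      refine Nat.mul_le_mul_right _ ((hgd j).trans (le_of_eq (congrArg d ?_)))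
      omega
    have h2 : LinearIndependent F fun x : S × B =>
        (⟨_, hdeg x⟩ : MvPolynomial.restrictTotalDegree σ F (D + E)) := by
      refine LinearIndependent.of_comp (Submodule.subtype _) ?_
      exact hg'.comp (fun x : S × B => (x.1, x.2.1)) (fun x y h => by
        simp only [Prod.mk.injEq] at h
        exact Prod.ext h.1 (Subtype.ext h.2))
    have h3 := h2.fintype_card_le_finrank
    simpa using h3
  calc S.card * (degBox N D).card ≤ S.card * ((∏ i : Fin N, d i) * B.card) :=
        Nat.mul_le_mul_left _ (card_degBox_le_prod_mul N D (fun i => d i) fun i => hd _)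
    _ = (∏ i : Fin N, d i) * (S.card * B.card) := by ring
    _ ≤ _ := Nat.mul_le_mul_left _ h1

/-- A linear space of polynomials not contained in any of finitely many ideals has an element
outside all of them. -/
lemma exists_mem_span_notMem {F σ : Type} [Field F] [Infinite F] {ι : Type} (f : ι → MvPolynomial σ F)
    (𝒮 : Set (Ideal (MvPolynomial σ F))) (h𝒮 : 𝒮.Finite) (h : ∀ q ∈ 𝒮, ∃ i, f i ∉ q) :
    ∃ g ∈ Submodule.span F (Set.range f), ∀ q ∈ 𝒮, g ∉ q := by
  by_contra! hcon
  let U := Submodule.span F (Set.range f)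
  have := h𝒮.to_subtype
  obtain ⟨q, hq⟩ := Subspace.exists_eq_top_of_iUnion_eq_univ
    (p := fun q : 𝒮 => (q.1.restrictScalars F).comap U.subtype) (by
      rw [Set.eq_univ_iff_forall]
      rintro ⟨g, hg⟩
      obtain ⟨q, hq, hgq⟩ := hcon g hg
      exact Set.mem_iUnion.2 ⟨⟨q, hq⟩, hgq⟩)
  obtain ⟨i, hi⟩ := h q.1 q.2
  have h1 : (⟨f i, Submodule.subset_span ⟨i, rfl⟩⟩ : U) ∈
      (q.1.restrictScalars F).comap U.subtype := by
    rw [hq]; trivial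
  exact hi h1

/-- A prime ideal containing the ideal of a point has full height. -/
lemma card_le_height_of_forall_X_sub_C_mem (q : Ideal (MvPolynomial σ F)) [q.IsPrime] (t : σ → F)
    (h : ∀ i, MvPolynomial.X i - MvPolynomial.C (t i) ∈ q) :
    (Fintype.card σ : ℕ∞) ≤ q.height := by
  obtain ⟨J, hJ, hJi⟩ := exists_indepMod σ q
  have hJe : J = ∅ := by
    rw [Finset.eq_empty_iff_forall_notMem]
    intro i hi
    have h1 := hJi _ (Subalgebra.sub_mem _ (MvPolynomial.X_mem_supported.2 hi)
      (Subalgebra.algebraMap_mem _ (t i))) (h i)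
    have h2 := congrArg (MvPolynomial.eval (t + 1)) h1
    simp [MvPolynomial.algebraMap_eq] at h2
  simpa [hJe] using hJ

/-- The number of points of a finite grid `A ^ σ` on a variety of codimension at least `R` cut out
by polynomials of degree at most `n`. -/
theorem grid_count [Infinite F] {κ : Type} (f : κ → MvPolynomial σ F) (n R : ℕ) (hn : 0 < n)
    (hf : ∀ c, (f c).totalDegree ≤ n)
    (hR : ∀ P : Ideal (MvPolynomial σ F), P.IsPrime → (∀ c, f c ∈ P) → (R : ℕ∞) ≤ P.height)
    (hRN : R ≤ Fintype.card σ) (A : Finset F) (hA : 0 < A.card) (S : Finset (σ → F))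
    (hSA : ∀ s ∈ S, ∀ i, s i ∈ A) (hSf : ∀ s ∈ S, ∀ c, MvPolynomial.eval s (f c) = 0) :
    S.card ≤ n ^ R * A.card ^ (Fintype.card σ - R) := by
  classical
  let d : ℕ → ℕ := fun i => if i < R then n else A.card
  have h1 := card_le_prod_degrees S d (fun i => by simp only [d]; split_ifs <;> assumption) (by
    intro i hi 𝒮 h𝒮 hq
    by_cases hiR : i < R
    · obtain ⟨g, hg, hgq⟩ := exists_mem_span_notMem f 𝒮 h𝒮 (by
        intro q hqS
        by_contra! hcon
        have h2 := (hR q (hq q hqS).1 hcon).trans (hq q hqS).2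
        norm_cast at h2
        omega)
      refine ⟨g, fun s hs => ?_, ?_, hgq⟩
      · refine Submodule.span_induction (p := fun g _ => MvPolynomial.eval s g = 0)
          ?_ (map_zero _) ?_ ?_ hg
        · rintro _ ⟨c, rfl⟩; exact hSf s hs c
        · intro x y _ _ hx hy; rw [map_add, hx, hy, add_zero]
        · intro a x _ hx; rw [MvPolynomial.smul_eval, hx, mul_zero]
      · simp only [d, if_pos hiR]
        rw [← MvPolynomial.mem_restrictTotalDegree]
        refine (Submodule.span_le.2 ?_) hg
        rintro _ ⟨c, rfl⟩
        rw [SetLike.mem_coe, MvPolynomial.mem_restrictTotalDegree]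
        exact hf c
    · let y : σ → MvPolynomial σ F := fun j =>
        ∏ a ∈ A, (MvPolynomial.X j - MvPolynomial.C a)
      obtain ⟨g, hg, hgq⟩ := exists_mem_span_notMem y 𝒮 h𝒮 (by
        intro q hqS
        by_contra! hcon
        have := (hq q hqS).1
        have h3 : ∀ j, ∃ a, MvPolynomial.X j - MvPolynomial.C a ∈ q := by
          intro j
          obtain ⟨a, _, ha⟩ := (Ideal.IsPrime.prod_mem_iff).1 (hcon j)
          exact ⟨a, ha⟩
        choose t ht using h3
        have h2 := (card_le_height_of_forall_X_sub_C_mem q t ht).trans (hq q hqS).2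
        norm_cast at h2
        omega)
      refine ⟨g, fun s hs => ?_, ?_, hgq⟩
      · refine Submodule.span_induction (p := fun g _ => MvPolynomial.eval s g = 0)
          ?_ (map_zero _) ?_ ?_ hg
        · rintro _ ⟨j, rfl⟩
          simp only [y, map_prod]
          exact Finset.prod_eq_zero (hSA s hs j) (by simp)
        · intro x y _ _ hx hy; rw [map_add, hx, hy, add_zero]
        · intro a x _ hx; rw [MvPolynomial.smul_eval, hx, mul_zero]
      · simp only [d, if_neg hiR]
        rw [← MvPolynomial.mem_restrictTotalDegree]
        refine (Submodule.span_le.2 ?_) hg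
        rintro _ ⟨j, rfl⟩
        rw [SetLike.mem_coe, MvPolynomial.mem_restrictTotalDegree]
        refine (MvPolynomial.totalDegree_finsetProd _ _).trans ?_
        rw [Finset.card_eq_sum_ones]
        refine Finset.sum_le_sum fun a _ => ?_
        refine (MvPolynomial.totalDegree_sub _ _).trans ?_
        simp)
  refine h1.trans (le_of_eq ?_)
  rw [Fin.prod_univ_eq_prod_range d, ← Finset.prod_range_mul_prod_Ico d hRN]
  congr 1
  · rw [Finset.prod_congr rfl (g := fun _ => n) (fun i hi => if_pos (Finset.mem_range.1 hi))]
    simp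
  · rw [Finset.prod_congr rfl (g := fun _ => A.card)
      (fun i hi => if_neg (not_lt.2 (Finset.mem_Ico.1 hi).1))]
    simp

end Grid

/-! ### Densities of zeros and of boxes -/

section Box
open scoped BigOperators

lemma expect_pow_le {α : Type} [Fintype α] [Nonempty α] (f : α → ℝ) (hf : ∀ x, 0 ≤ f x) (d : ℕ) :
    (𝔼 x, f x) ^ d ≤ 𝔼 x, f x ^ d := by
  have h := Real.pow_arith_mean_le_arith_mean_pow Finset.univ
    (fun _ : α => (Fintype.card α : ℝ)⁻¹) f (fun _ _ => by positivity)
    (by simp) (fun x _ => hf x) d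
  simp only [← Finset.mul_sum] at h
  rw [Fintype.expect_eq_sum_div_card, Fintype.expect_eq_sum_div_card, div_eq_inv_mul,
    div_eq_inv_mul]
  exact h

lemma expect_consEquiv {n : ℕ} {X : Fin (n + 1) → Type} [∀ i, Fintype (X i)]
    (F : (∀ i, X i) → ℝ) :
    𝔼 y, F y = 𝔼 x : X 0, 𝔼 y : ∀ i : Fin n, X i.succ, F (Fin.cons x y) := by
  rw [← Finset.expect_product', Finset.univ_product_univ]
  exact (Fintype.expect_equiv (Fin.consEquiv X) _ _ fun p => rfl).symm

/-- Iterated Hölder inequality: passing to boxes. -/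
lemma expect_pow_le_expect_box (m : ℕ) : ∀ {n : ℕ} {X : Fin n → Type} [∀ i, Fintype (X i)]
    [∀ i, Nonempty (X i)] (F : (∀ i, X i) → ℝ), (∀ y, 0 ≤ F y) →
    (𝔼 y, F y) ^ (m ^ n) ≤
      𝔼 Y : ∀ i, Fin m → X i, ∏ e : Fin n → Fin m, F fun i => Y i (e i)
  | 0, X, _, _, F, hF => by
      simp only [Fintype.expect_eq_sum_div_card]
      simp
      apply le_of_eq; congr 1; exact Subsingleton.elim _ _
  | n + 1, X, _, _, F, hF => by
      have hpos : ∀ (z : Fin m → X 0) (y : ∀ i : Fin n, X i.succ),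
          0 ≤ ∏ j, F (Fin.cons (z j) y) := fun z y => Finset.prod_nonneg fun _ _ => hF _
      have h1 : (𝔼 y, F y) ^ m ≤ 𝔼 z : Fin m → X 0, 𝔼 y : ∀ i : Fin n, X i.succ,
          ∏ j, F (Fin.cons (z j) y) := by
        rw [expect_consEquiv, Finset.expect_comm]
        refine (expect_pow_le _ (fun y => Finset.expect_nonneg fun x _ => hF _) m).trans ?_
        simp only [Finset.expect_pow]
        rw [Finset.expect_comm]
        simp
      have h2 : ((𝔼 y, F y) ^ m) ^ (m ^ n) ≤ (𝔼 z : Fin m → X 0, 𝔼 y : ∀ i : Fin n, X i.succ,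
          ∏ j, F (Fin.cons (z j) y)) ^ (m ^ n) :=
        pow_le_pow_left₀ (pow_nonneg (Finset.expect_nonneg fun y _ => hF y) m) h1 _
      rw [pow_succ', pow_mul]
      refine h2.trans ((expect_pow_le _
        (fun z => Finset.expect_nonneg fun y _ => hpos z y) _).trans ?_)
      rw [expect_consEquiv (X := fun i => Fin m → X i)]
      refine Finset.expect_le_expect fun z _ => ?_
      refine (expect_pow_le_expect_box m (fun y => ∏ j, F (Fin.cons (z j) y)) (hpos z)).trans
        (le_of_eq ?_)
      refine Finset.expect_congr rfl fun Y _ => ?_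
      rw [← Fintype.prod_equiv (Fin.consEquiv fun _ : Fin (n + 1) => Fin m) (fun p =>
        F (Fin.cons (z p.1) fun i => Y i (p.2 i))) _ ?_, Fintype.prod_prod_type_right]
      rintro ⟨j, e⟩
      congr 1
      funext i
      refine Fin.cases ?_ (fun i => ?_) i <;> rfl

end Box

section Density
open scoped BigOperators Classical

variable {K : Type} [Field K]

/-- A fibre of a linear map is at most as dense as its kernel. -/
lemma expect_fibre_le {U W : Type} [AddCommGroup U] [Module K U] [Fintype U]
    [AddCommGroup W] [Module K W] (L : U →ₗ[K] W) (w : W) :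
    (𝔼 x, if L x = w then (1 : ℝ) else 0) ≤ 𝔼 x, if L x = 0 then (1 : ℝ) else 0 := by
  by_cases h : ∃ x₀, L x₀ = w
  · obtain ⟨x₀, rfl⟩ := h
    refine le_of_eq (Fintype.expect_equiv (Equiv.subRight x₀) _ _ fun x => ?_)
    simp [sub_eq_zero]
  · push Not at h
    simp only [h, if_false, Finset.expect_const_zero]
    exact Finset.expect_nonneg fun x _ => by positivity

lemma expect_sum_eq_zero_le {r : ℕ} {U W : Type} [AddCommGroup U] [Module K U] [Fintype U]
    [AddCommGroup W] [Module K W] (L : Fin r → U →ₗ[K] W) (j₀ : Fin r) :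
    (𝔼 Z : Fin r → U, if ∑ j, L j (Z j) = 0 then (1 : ℝ) else 0) ≤
      𝔼 x, if L j₀ x = 0 then (1 : ℝ) else 0 := by
  have h1 : (𝔼 Z : Fin r → U, if ∑ j, L j (Z j) = 0 then (1 : ℝ) else 0) =
      𝔼 Z : Fin r → U, 𝔼 x : U, if L j₀ x = -∑ j, L j (Z j) then (1 : ℝ) else 0 := by
    rw [Finset.expect_comm]
    rw [← Fintype.expect_const (ι := U)
      (𝔼 Z : Fin r → U, if ∑ j, L j (Z j) = 0 then (1 : ℝ) else 0)]
    refine Finset.expect_congr rfl fun x _ => ?_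
    refine (Fintype.expect_equiv (Equiv.addRight (Pi.single j₀ x)) _ _ fun Z => ?_).symm
    have : ∑ j, L j ((Pi.single j₀ x : Fin r → U) j) = L j₀ x := by
      rw [Finset.sum_eq_single j₀]
      · simp
      · intro j _ hj
        simp [Pi.single_eq_of_ne hj]
      · simp
    simp only [Equiv.coe_addRight, Pi.add_apply, map_add, Finset.sum_add_distrib, this]
    rw [eq_neg_iff_add_eq_zero, add_comm]
  rw [h1]
  exact (Finset.expect_le_expect fun Z _ => expect_fibre_le (L j₀) _).trans
    (Fintype.expect_const _).le

/-- Along a random box, a fixed nontrivial linear relation between the values of a multilinear map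
is at most as likely as the vanishing of the map at a random point. -/
lemma expect_relation_le {r : ℕ} {W : Type} [AddCommGroup W] [Module K W] :
    ∀ {n : ℕ} {X : Fin n → Type} [∀ i, AddCommGroup (X i)] [∀ i, Module K (X i)]
      [∀ i, Fintype (X i)] (f : MultilinearMap K X W) (c : (Fin n → Fin r) → K), c ≠ 0 →
      (𝔼 Y : ∀ i, Fin r → X i, if ∑ b, c b • f (fun i => Y i (b i)) = 0 then (1 : ℝ) else 0) ≤
        𝔼 y, if f y = 0 then (1 : ℝ) else 0
  | 0, X, _, _, _, f, c, hc => by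
      have hcne : c default ≠ 0 := fun h => hc (funext fun b => by
        rw [Subsingleton.elim b default, h]; rfl)
      refine le_of_eq (Fintype.expect_equiv (Equiv.ofUnique _ _) _ _ fun Y => ?_)
      have h : ∀ y : ∀ i : Fin 0, X i, f y = f default := fun y => by
        rw [Subsingleton.elim y default]
      simp [h, hcne]
  | n + 1, X, _, _, _, f, c, hc => by
      obtain ⟨b₀, hb₀⟩ := Function.ne_iff.1 hc
      set j₀ := b₀ 0
      have hcne : (fun b : Fin n → Fin r => c (Fin.cons j₀ b)) ≠ 0 := fun h => hb₀ (by
        have := congrFun h (Fin.tail b₀)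
        simpa [j₀, Fin.cons_self_tail] using this)
      rw [expect_consEquiv (X := fun i => Fin r → X i), Finset.expect_comm,
        expect_consEquiv (X := X)]
      let L : (∀ i : Fin n, Fin r → X i.succ) → Fin r → X 0 →ₗ[K] W := fun Y j =>
        { toFun := fun x => ∑ b : Fin n → Fin r,
            c (Fin.cons j b) • f.curryLeft x (fun i => Y i (b i))
          map_add' := fun x y => by
            simp only [map_add, add_apply, smul_add, Finset.sum_add_distrib]
          map_smul' := fun t x => by
            simp only [map_smul, smul_apply, Finset.smul_sum, RingHom.id_apply]
            exact Finset.sum_congr rfl fun b _ => smul_comm _ _ _ }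
      have hL : ∀ (Y : ∀ i : Fin n, Fin r → X i.succ) (Z : Fin r → X 0),
          ∑ b, c b • f (fun i => (Fin.cons Z Y : ∀ i, Fin r → X i) i (b i)) =
            ∑ j, L Y j (Z j) := by
        intro Y Z
        rw [← Fintype.sum_equiv (Fin.consEquiv fun _ : Fin (n + 1) => Fin r) (fun p =>
          c (Fin.cons p.1 p.2) • f.curryLeft (Z p.1) fun i => Y i (p.2 i)) _ ?_,
          Fintype.sum_prod_type]
        · rfl
        · rintro ⟨j, b⟩
          rw [MultilinearMap.curryLeft_apply]
          congr 2
          funext i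
          refine Fin.cases ?_ (fun i => ?_) i <;> rfl
      simp only [hL]
      refine (Finset.expect_le_expect fun Y _ => expect_sum_eq_zero_le (L Y) j₀).trans ?_
      rw [Finset.expect_comm]
      exact Finset.expect_le_expect fun x _ => expect_relation_le (f.curryLeft x) _ hcne

/-- Union bound over all possible linear relations. -/
lemma exists_linearIndependent_box [Fintype K] {n r : ℕ} {W : Type} [AddCommGroup W] [Module K W]
    {X : Fin n → Type} [∀ i, AddCommGroup (X i)] [∀ i, Module K (X i)]
    [∀ i, Fintype (X i)] (f : MultilinearMap K X W)
    (h : (Fintype.card K : ℝ) ^ r ^ n * (𝔼 y, if f y = 0 then (1 : ℝ) else 0) < 1) :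
    ∃ Y : ∀ i, Fin r → X i, LinearIndependent K fun b : Fin n → Fin r => f fun i => Y i (b i) := by
  by_contra hcon
  push Not at hcon
  refine h.not_ge ?_
  set δ := 𝔼 y, if f y = 0 then (1 : ℝ) else 0
  have hδ : 0 ≤ δ := Finset.expect_nonneg fun x _ => by positivity
  calc (1 : ℝ) = 𝔼 Y : ∀ i, Fin r → X i, (1 : ℝ) := (Fintype.expect_const _).symm
    _ ≤ 𝔼 Y : ∀ i, Fin r → X i, ∑ c ∈ Finset.univ.filter (fun c : (Fin n → Fin r) → K => c ≠ 0),
          if ∑ b, c b • f (fun i => Y i (b i)) = 0 then (1 : ℝ) else 0 := by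
        refine Finset.expect_le_expect fun Y _ => ?_
        obtain ⟨c, hc, i, hi⟩ := Fintype.not_linearIndependent_iff.1 (hcon Y)
        refine le_trans ?_ (Finset.single_le_sum
          (f := fun c : (Fin n → Fin r) → K =>
            if ∑ b, c b • f (fun i => Y i (b i)) = 0 then (1 : ℝ) else 0)
          (fun _ _ => by positivity) (a := c) ?_)
        · simp [hc]
        · simp only [Finset.mem_filter, Finset.mem_univ, true_and]
          exact fun h0 => hi (by rw [h0]; rfl)
    _ = ∑ c ∈ Finset.univ.filter (fun c : (Fin n → Fin r) → K => c ≠ 0),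
          𝔼 Y : ∀ i, Fin r → X i,
          if ∑ b, c b • f (fun i => Y i (b i)) = 0 then (1 : ℝ) else 0 :=
        Finset.expect_sum_comm _ _ _
    _ ≤ ∑ c ∈ Finset.univ.filter (fun c : (Fin n → Fin r) → K => c ≠ 0), δ :=
        Finset.sum_le_sum fun c hc => expect_relation_le f c (by simpa using hc)
    _ ≤ ∑ c : (Fin n → Fin r) → K, δ :=
        Finset.sum_le_sum_of_subset_of_nonneg (Finset.filter_subset _ _) fun _ _ _ => hδ
    _ = (Fintype.card K : ℝ) ^ r ^ n * δ := by simp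

end Density

/-! ### Independent contractions over finite fields -/

section UpperFinite
open scoped BigOperators Classical

/-- Lower bounds on heights of primes over a family of polynomials persist under field
extension. -/
lemma le_height_of_map_mem {K F σ κ : Type} [Field K] [Field F] [Algebra K F] [Fintype σ]
    (f : κ → MvPolynomial σ K) (R : ℕ)
    (hR : ∀ P : Ideal (MvPolynomial σ K), P.IsPrime → (∀ c, f c ∈ P) → (R : ℕ∞) ≤ P.height)
    (P : Ideal (MvPolynomial σ F)) (hP : P.IsPrime)
    (hf : ∀ c, MvPolynomial.map (algebraMap K F) (f c) ∈ P) : (R : ℕ∞) ≤ P.height := by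
  obtain ⟨J, hJ, hJi⟩ := exists_indepMod σ P
  let Q : Ideal (MvPolynomial σ K) := P.comap (MvPolynomial.map (algebraMap K F))
  have hQ : Q.IsPrime := Ideal.comap_isPrime _ _
  have hQi : IndepMod Q J := by
    intro p hp hpQ
    apply MvPolynomial.map_injective (algebraMap K F) (algebraMap K F).injective
    rw [map_zero]
    refine hJi _ ?_ hpQ
    rw [MvPolynomial.mem_supported] at hp ⊢
    exact fun x hx => hp (MvPolynomial.vars_map _ _ hx)
  have h1 := hQi.height_add_card_le
  have h2 := hR Q hQ hf
  have h3 : (R : ℕ∞) + J.card ≤ P.height + J.card := by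
    rw [add_comm P.height]
    exact (add_le_add h2 le_rfl).trans (h1.trans hJ)
  exact (ENat.add_le_add_iff_right (ENat.natCast_ne_top _)).1 h3

/-- The multilinear map with coordinates `a`. -/
noncomputable def coordMultilinear {K κ : Type} [Field K] {n : ℕ} {ι : Fin n → Type}
    [∀ i, Fintype (ι i)] (a : (∀ i, ι i) → κ → K) :
    MultilinearMap K (fun i : Fin n => ι i → K) (κ → K) :=
  ∑ g : ∀ i, ι i, ((MultilinearMap.mkPiAlgebra K (Fin n) K).compLinearMap
    fun i => LinearMap.proj (g i)).smulRight (a g)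

lemma coordMultilinear_apply {K κ : Type} [Field K] {n : ℕ} {ι : Fin n → Type}
    [∀ i, Fintype (ι i)] (a : (∀ i, ι i) → κ → K) (y : ∀ i, ι i → K) (c : κ) :
    coordMultilinear a y c = ∑ g : ∀ i, ι i, a g c * ∏ i, y i (g i) := by
  simp [coordMultilinear, mul_comm]

lemma eval_coordPoly {K κ : Type} [Field K] {n : ℕ} {ι : Fin n → Type}
    [∀ i, Fintype (ι i)] (a : (∀ i, ι i) → κ → K) (s : (Σ i, ι i) → K) (c : κ) :
    MvPolynomial.eval s (coordPoly a c) = ∑ g : ∀ i, ι i, a g c * ∏ i, s ⟨i, g i⟩ := by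
  simp [coordPoly]

/-- Expanding a multilinear expression at a combination `∑ k, Y k • θ k` of vectors over `K`. -/
lemma eval_map_coordPoly {K F κ : Type} [Field K] [Field F] [Algebra K F] {n m : ℕ}
    {ι : Fin n → Type} [∀ i, Fintype (ι i)] (a : (∀ i, ι i) → κ → K) (θ : Fin m → F)
    (Y : ∀ i, Fin m → ι i → K) (c : κ) :
    MvPolynomial.eval (fun s : Σ i, ι i => ∑ k, Y s.1 k s.2 • θ k)
      (MvPolynomial.map (algebraMap K F) (coordPoly a c)) =
      ∑ e : Fin n → Fin m, coordMultilinear a (fun i => Y i (e i)) c • ∏ i, θ (e i) := by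
  simp only [coordPoly, coordMultilinear_apply, map_sum, map_mul, map_prod, MvPolynomial.map_C,
    MvPolynomial.map_X, MvPolynomial.eval_C, MvPolynomial.eval_X, Finset.prod_univ_sum,
    Fintype.piFinset_univ, Finset.sum_smul, Finset.mul_sum]
  rw [Finset.sum_comm]
  refine Finset.sum_congr rfl fun e _ => Finset.sum_congr rfl fun g _ => ?_
  simp only [Algebra.smul_def, Finset.prod_mul_distrib, map_mul, map_prod]
  ring

lemma exists_linearIndependent_fin (K F : Type) [Field K] [Fintype K] [Field F] [Algebra K F]
    [Infinite F] (m : ℕ) : ∃ θ : Fin m → F, LinearIndependent K θ := by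
  let B := Basis.ofVectorSpace K F
  have : Infinite (Basis.ofVectorSpaceIndex K F) := by
    by_contra h
    rw [not_infinite_iff_finite] at h
    have : Module.Finite K F := Module.Finite.of_basis B
    have : Finite F := Module.finite_of_finite K
    exact not_finite F
  exact ⟨fun j => B (Infinite.natEmbedding _ j.1), B.linearIndependent.comp _
    fun i j h => Fin.ext ((Infinite.natEmbedding _).injective h)⟩

/-- The density of boxes on which the multilinear map vanishes. -/
lemma expect_box_le {K κ : Type} [Field K] [Fintype K] {n : ℕ} (hn : 0 < n) {ι : Fin n → Type}
    [∀ i, Fintype (ι i)] (a : (∀ i, ι i) → κ → K) (R : ℕ)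
    (hR : ∀ P : Ideal (MvPolynomial (Σ i, ι i) K), P.IsPrime → (∀ c, coordPoly a c ∈ P) →
      (R : ℕ∞) ≤ P.height) (m : ℕ) :
    (𝔼 Y : ∀ i, Fin m → ι i → K, ∏ e : Fin n → Fin m,
      if coordMultilinear a (fun i => Y i (e i)) = 0 then (1 : ℝ) else 0) *
        (Fintype.card K : ℝ) ^ (m * R) ≤ n ^ R := by
  let F := AlgebraicClosure K
  have : Infinite F := IsAlgClosed.instInfinite
  set q := Fintype.card K
  set N := Fintype.card (Σ i, ι i)
  have hRN : R ≤ N := by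
    let P : Ideal (MvPolynomial (Σ i, ι i) K) := RingHom.ker MvPolynomial.constantCoeff
    have hP : P.IsPrime := RingHom.ker_isPrime _
    have h1 := hR P hP fun c => by
      rw [RingHom.mem_ker, MvPolynomial.constantCoeff_eq]
      exact (coordPoly_isHomogeneous a c).coeff_eq_zero (by simp; omega)
    have h2 : IndepMod P ∅ := by
      intro p hp hpP
      rw [Finset.coe_empty, MvPolynomial.supported_empty] at hp
      obtain ⟨t, rfl⟩ := Algebra.mem_bot.1 hp
      have : t = 0 := by simpa [P, RingHom.mem_ker, MvPolynomial.algebraMap_eq] using hpP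
      rw [this, map_zero]
    have h3 := h2.height_add_card_le
    rw [Nat.card_eq_fintype_card] at h3
    have h4 : (R : ℕ∞) ≤ N := h1.trans (le_self_add.trans h3)
    exact_mod_cast h4
  obtain ⟨θ, hθ⟩ := exists_linearIndependent_fin K F m
  have hinj := hθ.fintypeLinearCombination_injective
  let A : Finset F := Finset.univ.image (Fintype.linearCombination K θ)
  have hA : A.card = q ^ m := by
    rw [Finset.card_image_of_injective _ hinj]
    simp [q]
  let W : Finset (∀ i, Fin m → ι i → K) := Finset.univ.filter fun Y =>
    ∀ e : Fin n → Fin m, coordMultilinear a (fun i => Y i (e i)) = 0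
  -- the `m` vectors of a box in each slot are packed into one vector over the algebraic closure
  let φ : (∀ i, Fin m → ι i → K) → (Σ i, ι i) → F := fun Y s => ∑ k, Y s.1 k s.2 • θ k
  have hφ : Function.Injective φ := by
    intro Y Y' h
    funext i k j
    have h1 := congrFun h ⟨i, j⟩
    have h2 := @hinj (fun k => Y i k j) (fun k => Y' i k j) (by
      simpa [φ, Fintype.linearCombination_apply] using h1)
    exact congrFun h2 k
  have hcount := grid_count (fun c => MvPolynomial.map (algebraMap K F) (coordPoly a c)) n R hn
    (fun c => ((coordPoly_isHomogeneous a c).map _).totalDegree_le)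
    (fun P hP hf => le_height_of_map_mem _ R hR P hP hf) hRN A
    (by rw [hA]; exact pow_pos Fintype.card_pos _) (W.image φ)
    (by
      intro s hs i
      obtain ⟨Y, -, rfl⟩ := Finset.mem_image.1 hs
      exact Finset.mem_image.2 ⟨fun k => Y i.1 k i.2, Finset.mem_univ _, by
        simp [φ, Fintype.linearCombination_apply]⟩)
    (by
      intro s hs c
      obtain ⟨Y, hY, rfl⟩ := Finset.mem_image.1 hs
      rw [eval_map_coordPoly]
      refine Finset.sum_eq_zero fun e _ => ?_
      rw [(Finset.mem_filter.1 hY).2 e, Pi.zero_apply, zero_smul])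
  rw [Finset.card_image_of_injective _ hφ, hA] at hcount
  have hcard : Fintype.card (∀ i, Fin m → ι i → K) = q ^ (m * N) := by
    simp only [Fintype.card_pi, Finset.prod_const, Finset.card_univ, Fintype.card_fin, N,
      Fintype.card_sigma, q, ← pow_mul]
    rw [Finset.prod_pow_eq_pow_sum, ← Finset.sum_mul, mul_comm]
  have hsum : (𝔼 Y : ∀ i, Fin m → ι i → K, ∏ e : Fin n → Fin m,
      if coordMultilinear a (fun i => Y i (e i)) = 0 then (1 : ℝ) else 0) =
      W.card / (q : ℝ) ^ (m * N) := by
    rw [Fintype.expect_eq_sum_div_card, hcard]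
    push_cast
    congr 1
    rw [Finset.card_filter]
    push_cast
    refine Finset.sum_congr rfl fun Y _ => ?_
    rw [Finset.prod_ite_zero]
    simp
  have hq : (0 : ℝ) < q := by exact_mod_cast Fintype.card_pos
  rw [hsum, div_mul_eq_mul_div, div_le_iff₀ (by positivity)]
  have h5 : (W.card : ℝ) ≤ n ^ R * (q ^ m) ^ (N - R) := by exact_mod_cast hcount
  calc (W.card : ℝ) * q ^ (m * R) ≤ n ^ R * (q ^ m) ^ (N - R) * q ^ (m * R) := by gcongr
    _ = n ^ R * q ^ (m * N) := by
      rw [← pow_mul, mul_assoc, ← pow_add, ← mul_add, Nat.sub_add_cancel hRN]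

/-- Over a finite field, if all primes over the coordinate polynomials have height more than `(2 n
r) ^ n`, then `r` vectors per slot can be chosen with all `r ^ n` contractions linearly independent.
-/
lemma upper_core_finite {K κ : Type} [Field K] [Finite K] {n r : ℕ} (hn : 0 < n)
    {ι : Fin n → Type} [∀ i, Fintype (ι i)] (a : (∀ i, ι i) → κ → K) (R : ℕ)
    (hR : ∀ P : Ideal (MvPolynomial (Σ i, ι i) K), P.IsPrime → (∀ c, coordPoly a c ∈ P) →
      (R : ℕ∞) ≤ P.height) (hr : (2 * n) ^ n * r ^ n < R) :
    ∃ x : Fin r → (Σ i, ι i) → K, LinearIndependent K (fun (b : Fin n → Fin r) c =>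
      MvPolynomial.eval (fun s => x (b s.1) s) (coordPoly a c)) := by
  have := Fintype.ofFinite K
  set δ : ℝ := 𝔼 y : ∀ i, ι i → K, if coordMultilinear a y = 0 then (1 : ℝ) else 0
  have hδ : 0 ≤ δ := Finset.expect_nonneg fun x _ => by positivity
  set q := Fintype.card K
  have hq : 1 < q := Fintype.one_lt_card
  have hq' : (0 : ℝ) < q := by positivity
  -- boxes of side `2 * n`: half of the exponent absorbs the factor `n ^ R ≤ q ^ (n * R)`
  have key : (q : ℝ) ^ r ^ n * δ < 1 := by
    by_contra hcon
    push Not at hcon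
    have h1 : δ ^ (2 * n) ^ n * (q : ℝ) ^ (2 * n * R) ≤ n ^ R :=
      (mul_le_mul_of_nonneg_right (expect_pow_le_expect_box (2 * n)
        (fun y : ∀ i, ι i → K => if coordMultilinear a y = 0 then (1 : ℝ) else 0)
        fun y => by positivity) (by positivity)).trans (expect_box_le hn a R hR (2 * n))
    have h2 : (1 : ℝ) ≤ (q : ℝ) ^ (r ^ n * (2 * n) ^ n) * δ ^ (2 * n) ^ n := by
      rw [pow_mul, ← mul_pow]
      exact one_le_pow₀ hcon
    have h3 : (n : ℝ) ≤ q ^ n := by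
      have h := (Nat.lt_two_pow_self (n := n)).le.trans (Nat.pow_le_pow_left hq n)
      exact_mod_cast h
    have h4 : (q : ℝ) ^ (2 * n * R) ≤ (q : ℝ) ^ (r ^ n * (2 * n) ^ n + n * R) := by
      calc (q : ℝ) ^ (2 * n * R) ≤
          ((q : ℝ) ^ (r ^ n * (2 * n) ^ n) * δ ^ (2 * n) ^ n) * (q : ℝ) ^ (2 * n * R) :=
            le_mul_of_one_le_left (by positivity) h2
        _ = (q : ℝ) ^ (r ^ n * (2 * n) ^ n) * (δ ^ (2 * n) ^ n * (q : ℝ) ^ (2 * n * R)) := by ring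
        _ ≤ (q : ℝ) ^ (r ^ n * (2 * n) ^ n) * (q ^ n) ^ R := by
            gcongr
            exact h1.trans (by gcongr)
        _ = _ := by rw [pow_add, pow_mul _ n R]
    have h5 := (pow_le_pow_iff_right₀ (by exact_mod_cast hq : (1 : ℝ) < q)).1 h4
    have h6 : R ≤ n * R := Nat.le_mul_of_pos_left R hn
    nlinarith
  obtain ⟨Y, hY⟩ := exists_linearIndependent_box (coordMultilinear a) key
  refine ⟨fun j s => Y s.1 j s.2, ?_⟩
  have hw : (fun (b : Fin n → Fin r) c =>
      MvPolynomial.eval (fun s : Σ i, ι i => Y s.1 (b s.1) s.2) (coordPoly a c)) =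
      fun b => coordMultilinear a fun i => Y i (b i) := by
    funext b c
    rw [eval_coordPoly, coordMultilinear_apply]
  rw [hw]
  exact hY

end UpperFinite

/-! ### Subrank in coordinates -/

section Bridge

lemma fullContract_tprod {K : Type} [Field K] {k : ℕ} {V : Fin k → Type}
    [∀ i, AddCommGroup (V i)] [∀ i, Module K (V i)] (v : ∀ i, V i) (ℓ : ∀ i, Dual K (V i)) :
    fullContract (PiTensorProduct.tprod K v) ℓ = ∏ i, ℓ i (v i) := by
  simp [fullContract]

lemma fullContract_sum_smul {K : Type} [Field K] {k : ℕ} {V : Fin k → Type}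
    [∀ i, AddCommGroup (V i)] [∀ i, Module K (V i)] (T : ⨂[K] i, V i) {β : Fin k → Type}
    [∀ i, Fintype (β i)] (x : ∀ i, β i → K) (ℓ : ∀ i, β i → Dual K (V i)) :
    fullContract T (fun i => ∑ j, x i j • ℓ i j) =
      ∑ g : ∀ i, β i, (∏ i, x i (g i)) * fullContract T (fun i => ℓ i (g i)) := by
  induction T using PiTensorProduct.induction_on with
  | smul_tprod c v =>
    simp only [fullContract, map_smul]
    simp only [← fullContract.eq_1, fullContract_tprod]
    simp only [LinearMap.sum_apply, LinearMap.smul_apply, smul_eq_mul, Finset.prod_univ_sum,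
      Fintype.piFinset_univ, Finset.mul_sum, Finset.prod_mul_distrib]
    exact Finset.sum_congr rfl fun g _ => by ring
  | add T₁ T₂ h₁ h₂ =>
    simp only [fullContract, map_add] at h₁ h₂ ⊢
    rw [h₁, h₂, ← Finset.sum_add_distrib]
    exact Finset.sum_congr rfl fun g _ => by ring

/-- The coordinates of `(g₁, …, g_k) · T` are the contractions of `T` by the rows of the `g_i`. -/
lemma repr_map_eq_fullContract {K : Type} [Field K] {k r : ℕ} {V : Fin k → Type}
    [∀ i, AddCommGroup (V i)] [∀ i, Module K (V i)] (T : ⨂[K] i, V i)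
    (g : ∀ i, V i →ₗ[K] (Fin r → K)) (b : Fin k → Fin r) :
    (Basis.piTensorProduct fun _ : Fin k => Pi.basisFun K (Fin r)).repr
      (PiTensorProduct.map g T) b = fullContract T (fun i => LinearMap.proj (b i) ∘ₗ g i) := by
  induction T using PiTensorProduct.induction_on with
  | smul_tprod c v =>
    simp only [fullContract, map_smul, PiTensorProduct.map_tprod]
    simp only [← fullContract.eq_1, fullContract_tprod]
    simp [Basis.piTensorProduct_repr_tprod_apply]
  | add T₁ T₂ h₁ h₂ =>
    simp only [fullContract, map_add, Finsupp.add_apply] at h₁ h₂ ⊢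
    rw [h₁, h₂]

/-- `I_r` is a restriction of `T` iff it can be produced by contractions. -/
lemma exists_map_eq_iff {K : Type} [Field K] {n r : ℕ} {V : Fin (n + 1) → Type}
    [∀ i, AddCommGroup (V i)] [∀ i, Module K (V i)] (T : ⨂[K] i, V i) :
    (∃ g : ∀ i, V i →ₗ[K] (Fin r → K), PiTensorProduct.map g T =
      ∑ j : Fin r, PiTensorProduct.tprod K fun _ => Pi.single j (1 : K)) ↔
    ∃ ℓ : ∀ i, Fin r → Dual K (V i), ∀ (b : Fin n → Fin r) (j : Fin r),
      fullContract T (fun i => ℓ i ((Fin.snoc b j : Fin (n + 1) → Fin r) i)) =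
        if ∀ i, b i = j then 1 else 0 := by
  let B := Basis.piTensorProduct fun _ : Fin (n + 1) => Pi.basisFun K (Fin r)
  have hI : ∀ (b : Fin n → Fin r) (j : Fin r),
      B.repr (∑ j : Fin r, PiTensorProduct.tprod K fun _ => Pi.single j (1 : K)) (Fin.snoc b j) =
        if ∀ i, b i = j then 1 else 0 := by
    intro b j
    simp only [B, map_sum, Finsupp.finsetSum_apply, Basis.piTensorProduct_repr_tprod_apply,
      Fin.prod_univ_castSucc, Fin.snoc_castSucc, Fin.snoc_last, Pi.basisFun_repr]
    rw [Finset.sum_eq_single j]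
    · simp only [Pi.single_apply, if_true, mul_one, Finset.prod_ite_zero]
      simp
    · intro j' _ hj'
      simp [Pi.single_apply, Ne.symm hj']
    · simp
  constructor
  · rintro ⟨g, hg⟩
    refine ⟨fun i j => LinearMap.proj j ∘ₗ g i, fun b j => ?_⟩
    rw [← hI b j, ← hg]
    exact (repr_map_eq_fullContract T g _).symm
  · rintro ⟨ℓ, hℓ⟩
    refine ⟨fun i => LinearMap.pi (ℓ i), B.repr.injective (Finsupp.ext fun b => ?_)⟩
    have hb : (Fin.snoc (Fin.init b) (b (Fin.last n)) : Fin (n + 1) → Fin r) = b :=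
      Fin.snoc_init_self b
    rw [repr_map_eq_fullContract]
    have h1 := hI (Fin.init b) (b (Fin.last n))
    have h2 := hℓ (Fin.init b) (b (Fin.last n))
    rw [hb] at h1 h2
    rw [h1, ← h2]
    rfl

/-- The coordinates of a tensor with respect to the chosen bases of the dual spaces. -/
noncomputable def tensorCoord {K : Type} [Field K] {n : ℕ} {V : Fin (n + 1) → Type}
    [∀ i, AddCommGroup (V i)] [∀ i, Module K (V i)] [∀ i, FiniteDimensional K (V i)]
    (T : ⨂[K] i, V i) (g : ∀ i : Fin n, Free.ChooseBasisIndex K (Dual K (V i.castSucc)))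
    (c : Free.ChooseBasisIndex K (Dual K (V (Fin.last n)))) : K :=
  fullContract T (Fin.snoc (fun i : Fin n => Free.chooseBasis K (Dual K (V i.castSucc)) (g i))
    (Free.chooseBasis K (Dual K (V (Fin.last n))) c))

/-- The contraction of `T` by functionals given in coordinates. -/
lemma fullContract_snoc {K : Type} [Field K] {n r : ℕ} {V : Fin (n + 1) → Type}
    [∀ i, AddCommGroup (V i)] [∀ i, Module K (V i)] [∀ i, FiniteDimensional K (V i)]
    (T : ⨂[K] i, V i) (z : ∀ i, Fin r → Free.ChooseBasisIndex K (Dual K (V i)) → K)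
    (b : Fin n → Fin r) (j : Fin r) :
    fullContract T (fun i => ∑ t, z i ((Fin.snoc b j : Fin (n + 1) → Fin r) i) t •
        Free.chooseBasis K (Dual K (V i)) t) =
      ∑ c, z (Fin.last n) j c * ∑ g, tensorCoord T g c * ∏ i : Fin n, z i.castSucc (b i) (g i) := by
  rw [fullContract_sum_smul, ← Fintype.sum_equiv
    (Fin.snocEquiv fun i => Free.ChooseBasisIndex K (Dual K (V i)))
    (fun p => z (Fin.last n) j p.1 * (tensorCoord T p.2 p.1 *
      ∏ i : Fin n, z i.castSucc (b i) (p.2 i))) _ ?_, Fintype.sum_prod_type]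
  · simp only [Finset.mul_sum]
  · rintro ⟨c, g⟩
    have h : (fun i => Free.chooseBasis K (Dual K (V i))
        ((Fin.snocEquiv fun i => Free.ChooseBasisIndex K (Dual K (V i))) (c, g) i)) =
        (Fin.snoc (fun i : Fin n => Free.chooseBasis K (Dual K (V i.castSucc)) (g i))
          (Free.chooseBasis K (Dual K (V (Fin.last n))) c) : ∀ i, Dual K (V i)) := by
      funext i
      refine Fin.lastCases ?_ (fun i => ?_) i <;> simp
    rw [h]
    simp only [Fin.prod_univ_castSucc, Fin.snocEquiv_apply, Fin.snoc_castSucc, Fin.snoc_last,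
      tensorCoord]
    ring

/-- The condition defining the subrank, in coordinates. -/
lemma mem_subrank_iff {K : Type} [Field K] {n r : ℕ} {V : Fin (n + 1) → Type}
    [∀ i, AddCommGroup (V i)] [∀ i, Module K (V i)] [∀ i, FiniteDimensional K (V i)]
    (T : ⨂[K] i, V i) :
    (∃ g : ∀ i, V i →ₗ[K] (Fin r → K), PiTensorProduct.map g T =
      ∑ j : Fin r, PiTensorProduct.tprod K fun _ => Pi.single j (1 : K)) ↔
    ∃ (x : Fin r → (Σ i : Fin n, Free.ChooseBasisIndex K (Dual K (V i.castSucc))) → K)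
      (u : Fin r → Free.ChooseBasisIndex K (Dual K (V (Fin.last n))) → K),
      ∀ (b : Fin n → Fin r) (j : Fin r), ∑ c, u j c * ∑ g, tensorCoord T g c *
        ∏ i, x (b i) ⟨i, g i⟩ = if ∀ i, b i = j then 1 else 0 := by
  rw [exists_map_eq_iff]
  constructor
  · rintro ⟨ℓ, hℓ⟩
    let z : ∀ i, Fin r → Free.ChooseBasisIndex K (Dual K (V i)) → K := fun i j =>
      (Free.chooseBasis K (Dual K (V i))).repr (ℓ i j)
    refine ⟨fun j s => z s.1.castSucc j s.2, z (Fin.last n), fun b j => ?_⟩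
    rw [← hℓ b j, ← fullContract_snoc T z b j]
    congr 1
    funext i
    exact (Free.chooseBasis K (Dual K (V i))).sum_repr _
  · rintro ⟨x, u, h⟩
    let z : ∀ i, Fin r → Free.ChooseBasisIndex K (Dual K (V i)) → K :=
      Fin.snoc (α := fun i => Fin r → Free.ChooseBasisIndex K (Dual K (V i)) → K)
        (fun i j t => x j ⟨i, t⟩) u
    refine ⟨fun i j => ∑ t, z i j t • Free.chooseBasis K (Dual K (V i)) t, fun b j => ?_⟩
    rw [← h b j, fullContract_snoc]
    simp only [z, Fin.snoc_castSucc, Fin.snoc_last]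

end Bridge

/-! ### Comparison of subrank and geometric rank -/

section Final

/-- Linearly independent contraction values can be mapped by functionals to any prescribed
values, in particular to those of the identity tensor. -/
lemma exists_functionals {K κ : Type} [Field K] [Fintype κ] {n r : ℕ} {ι : Fin n → Type}
    [∀ i, Fintype (ι i)] (a : (∀ i, ι i) → κ → K) (x : Fin r → (Σ i, ι i) → K)
    (hx : LinearIndependent K (fun (b : Fin n → Fin r) c =>
      MvPolynomial.eval (fun s => x (b s.1) s) (coordPoly a c))) :
    ∃ u : Fin r → κ → K, ∀ (b : Fin n → Fin r) (j : Fin r),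
      ∑ c, u j c * ∑ g, a g c * ∏ i, x (b i) ⟨i, g i⟩ = if ∀ i, b i = j then 1 else 0 := by
  classical
  obtain ⟨p, hp⟩ := LinearMap.exists_leftInverse_of_injective _
    (LinearMap.ker_eq_bot.2 hx.fintypeLinearCombination_injective)
  have hp' : ∀ b, p (fun c => MvPolynomial.eval (fun s => x (b s.1) s) (coordPoly a c)) =
      Pi.single b 1 := by
    intro b
    have := LinearMap.congr_fun hp (Pi.single b 1)
    simpa [Fintype.linearCombination_apply_single] using this
  refine ⟨fun j c => p (Pi.single c 1) fun _ => j, fun b j => ?_⟩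
  have h1 : p (fun c => MvPolynomial.eval (fun s => x (b s.1) s) (coordPoly a c)) (fun _ => j) =
      if ∀ i, b i = j then 1 else 0 := by
    rw [hp', Pi.single_apply]
    simp only [funext_iff, eq_comm]
  rw [← h1]
  conv_rhs => rw [pi_eq_sum_univ' (fun c => MvPolynomial.eval (fun s => x (b s.1) s)
    (coordPoly a c)), map_sum, Finset.sum_apply]
  refine Finset.sum_congr rfl fun c _ => ?_
  rw [map_smul, Pi.smul_apply, smul_eq_mul, eval_coordPoly, mul_comm]

/-- Geometric rank larger than `(2 n r) ^ n` forces `I_r` to be a restriction of the tensor. -/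
lemma upper_core {K κ : Type} [Field K] [Fintype κ] {n r : ℕ} (hn : 0 < n)
    {ι : Fin n → Type} [∀ i, Fintype (ι i)] (a : (∀ i, ι i) → κ → K) (R : ℕ)
    (hR : ∀ P : Ideal (MvPolynomial (Σ i, ι i) K), P.IsPrime → (∀ c, coordPoly a c ∈ P) →
      (R : ℕ∞) ≤ P.height) (hr : (2 * n) ^ n * r ^ n < R) :
    ∃ (x : Fin r → (Σ i, ι i) → K) (u : Fin r → κ → K), ∀ (b : Fin n → Fin r) (j : Fin r),
      ∑ c, u j c * ∑ g, a g c * ∏ i, x (b i) ⟨i, g i⟩ = if ∀ i, b i = j then 1 else 0 := by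
  rcases finite_or_infinite K with hK | hK
  · obtain ⟨x, hx⟩ := upper_core_finite hn a R hR hr
    exact ⟨x, exists_functionals a x hx⟩
  · have h1 : 1 ≤ (2 * n) ^ n := Nat.one_le_pow _ _ (by omega)
    obtain ⟨x, hx⟩ := upper_core_infinite a R hR
      (lt_of_le_of_lt (Nat.le_mul_of_pos_left _ h1) hr)
    exact ⟨x, exists_functionals a x hx⟩

lemma le_idealHeight_iff {S : Type*} [CommRing S] (I : Ideal S) (R : ℕ∞) :
    R ≤ idealHeight I ↔ ∀ P : Ideal S, P.IsPrime → I ≤ P → R ≤ P.height := by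
  simp only [idealHeight, le_iInf_iff, Set.mem_ofPred_eq]
  constructor
  · intro h P hP hIP
    have := h ⟨P, hP⟩ hIP
    rwa [← PrimeSpectrum.height_eq_orderHeight] at this
  · intro h p hp
    rw [← PrimeSpectrum.height_eq_orderHeight]
    exact h _ p.2 hp

/-- Geometric rank in terms of `coordPoly` and of heights of prime ideals. -/
lemma le_tensorGeomRank_iff {K : Type} [Field K] {n : ℕ} {V : Fin (n + 1) → Type}
    [∀ i, AddCommGroup (V i)] [∀ i, Module K (V i)] [∀ i, FiniteDimensional K (V i)]
    (T : ⨂[K] i, V i) (R : ℕ∞) : R ≤ tensorGeomRank T ↔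
      ∀ P : Ideal (MvPolynomial (Σ i : Fin n, Free.ChooseBasisIndex K (Dual K (V i.castSucc))) K),
        P.IsPrime → (∀ c, coordPoly (tensorCoord T) c ∈ P) → R ≤ P.height := by
  rw [tensorGeomRank, le_idealHeight_iff]
  simp only [Ideal.span_le, Set.range_subset_iff, SetLike.mem_coe]
  rfl

lemma tensorGeomRank_le_height {K : Type} [Field K] {n : ℕ} {V : Fin (n + 1) → Type}
    [∀ i, AddCommGroup (V i)] [∀ i, Module K (V i)] [∀ i, FiniteDimensional K (V i)]
    (T : ⨂[K] i, V i)
    (P : Ideal (MvPolynomial (Σ i : Fin n, Free.ChooseBasisIndex K (Dual K (V i.castSucc))) K))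
    [hP : P.IsPrime] (h : ∀ c, coordPoly (tensorCoord T) c ∈ P) : tensorGeomRank T ≤ P.height :=
  (le_tensorGeomRank_iff T _).1 le_rfl P hP h

lemma tensorGeomRank_ne_top {K : Type} [Field K] {n : ℕ} (hn : 1 ≤ n) {V : Fin (n + 1) → Type}
    [∀ i, AddCommGroup (V i)] [∀ i, Module K (V i)] [∀ i, FiniteDimensional K (V i)]
    (T : ⨂[K] i, V i) : tensorGeomRank T ≠ ⊤ := by
  have hP := RingHom.ker_isPrime (MvPolynomial.constantCoeff (R := K)
    (σ := Σ i : Fin n, Free.ChooseBasisIndex K (Dual K (V i.castSucc))))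
  refine ne_top_of_le_ne_top (Ideal.height_ne_top hP.ne_top) (tensorGeomRank_le_height T _ ?_)
  intro c
  rw [RingHom.mem_ker, MvPolynomial.constantCoeff_eq]
  exact (coordPoly_isHomogeneous _ c).coeff_eq_zero (by simp; omega)

end Final

/-- **Subrank vs. geometric rank (upper bound).**  For every order `k = n+1 ≥ 2` there is a
constant `C = C(k) > 0` such that `Q(T) ≤ GR(T) ≤ C·Q(T)^{k-1}` for every tensor
`T ∈ V₁ ⊗ ⋯ ⊗ V_k` over any field. -/
theorem subrank_vs_geomRank (n : ℕ) (hn : 1 ≤ n) :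
    ∃ C : ℕ, 0 < C ∧
      ∀ (K : Type) [Field K] (V : Fin (n + 1) → Type)
        [∀ i, AddCommGroup (V i)] [∀ i, Module K (V i)] [∀ i, FiniteDimensional K (V i)]
        (T : ⨂[K] i, V i),
        (subrank T : ℕ∞) ≤ tensorGeomRank T ∧
          tensorGeomRank T ≤ ((C * subrank T ^ n : ℕ) : ℕ∞) := by
  refine ⟨(4 * n) ^ n, by positivity, fun K _ V _ _ _ T => ?_⟩
  obtain ⟨R, hR⟩ := ENat.ne_top_iff_exists.1 (tensorGeomRank_ne_top hn T)
  have hRP := (le_tensorGeomRank_iff T R).1 hR.le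
  have hset : subrank T = sSup {r : ℕ |
      ∃ (x : Fin r → (Σ i : Fin n, Free.ChooseBasisIndex K (Dual K (V i.castSucc))) → K)
        (u : Fin r → Free.ChooseBasisIndex K (Dual K (V (Fin.last n))) → K),
        ∀ (b : Fin n → Fin r) (j : Fin r), ∑ c, u j c * ∑ g, tensorCoord T g c *
          ∏ i, x (b i) ⟨i, g i⟩ = if ∀ i, b i = j then 1 else 0} := by
    simp only [subrank, mem_subrank_iff]
  set S := {r : ℕ |
      ∃ (x : Fin r → (Σ i : Fin n, Free.ChooseBasisIndex K (Dual K (V i.castSucc))) → K)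
        (u : Fin r → Free.ChooseBasisIndex K (Dual K (V (Fin.last n))) → K),
        ∀ (b : Fin n → Fin r) (j : Fin r), ∑ c, u j c * ∑ g, tensorCoord T g c *
          ∏ i, x (b i) ⟨i, g i⟩ = if ∀ i, b i = j then 1 else 0}
  have hbound : ∀ r ∈ S, r ≤ R := by
    rintro r ⟨x, u, h⟩
    have : (r : ℕ∞) ≤ tensorGeomRank T := (le_tensorGeomRank_iff T r).2 fun P hP hc =>
      lower_core (tensorCoord T) x u h P hc
    rw [← hR] at this
    exact_mod_cast this
  have hbdd : BddAbove S := ⟨R, hbound⟩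
  have h0 : 0 ∈ S := ⟨Fin.elim0, Fin.elim0, fun _ j => j.elim0⟩
  have hQ : subrank T ∈ S := hset ▸ Nat.sSup_mem ⟨0, h0⟩ hbdd
  have hle : ∀ r ∈ S, r ≤ subrank T := fun r hr => hset ▸ le_csSup hbdd hr
  rw [← hR]
  refine ⟨by exact_mod_cast hbound _ hQ, ?_⟩
  norm_cast
  -- both sides vanish for `T = 0`; otherwise `1 ≤ Q`, so that `Q + 1 ≤ 2 * Q`
  by_cases hzero : ∀ g c, tensorCoord T g c = 0
  · have h1 := tensorGeomRank_le_height T ⊥ fun c => by simp [coordPoly, hzero]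
    rw [← hR, Ideal.height_bot] at h1
    have : R ≤ 0 := by exact_mod_cast h1
    omega
  · push Not at hzero
    obtain ⟨g₀, c₀, hgc⟩ := hzero
    classical
    have h1 : 1 ∈ S := by
      refine ⟨fun _ s => if g₀ s.1 = s.2 then 1 else 0,
        fun _ c => if c = c₀ then (tensorCoord T g₀ c₀)⁻¹ else 0, fun b j => ?_⟩
      have hprod : ∀ g : ∀ i : Fin n, Free.ChooseBasisIndex K (Dual K (V i.castSucc)),
          (∏ i, if g₀ i = g i then (1 : K) else 0) = if g = g₀ then 1 else 0 := by
        intro g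
        rw [Finset.prod_ite_zero]
        simp [funext_iff, eq_comm]
      simp only [hprod, ite_mul, zero_mul, Finset.sum_ite_eq', Finset.mem_univ, if_true, mul_ite,
        mul_one, mul_zero, inv_mul_cancel₀ hgc]
      rw [if_pos fun i => Subsingleton.elim _ _]
    have hQ1 := hle 1 h1
    by_contra hlt
    push Not at hlt
    have h2 : (2 * n) ^ n * (subrank T + 1) ^ n < R := by
      refine lt_of_le_of_lt ?_ hlt
      rw [← mul_pow, ← mul_pow]
      exact Nat.pow_le_pow_left (by nlinarith) n
    have h3 := hle _ (upper_core hn (tensorCoord T) R hRP h2)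
    omega
end

section
/- For every integer k ≥ 2 there is a constant C(k) > 0 such that for any field K and any two tensors S ∈ V_1 ⊗ ... ⊗ V_k and T ∈ V_1' ⊗ ... ⊗ V_k' of order k over K (with all spaces finite-dimensional), one has Q(S) + Q(T) ≤ Q(S ⊕ T) ≤ C(k) · (Q(S)^{k-1} + Q(T)^{k-1}), where S ⊕ T denotes the direct sum tensor in (V_1 ⊕ V_1') ⊗ ... ⊗ (V_k ⊕ V_k'). -/
/-!
The lower bound is obtained by placing optimal diagonals of `S` and `T` side by side. For the upper
bound, regard a tensor as a multilinear form on the dual spaces (`tensorForm`). Then `Q(T) ≥ r` means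
that the form has a *diagonal* of size `r`: `r` tuples of vectors on which it takes the value `1` and
on all proper mixtures of which it vanishes (`HasDiagonal`, `restricts_iff`).

Write `k = n + 1` and `r = Q(S ⊕ T)`. Pulling back along an optimal restriction gives two forms `a`,
`b` on `K^r` with `a(x) + b(x) = ∑ l, ∏ i, x i l`. Choose a diagonal `u` of `a` and a diagonal `w` of
`b`, both of maximal size, `s ≤ Q(S)` and `t ≤ Q(T)`. If some tuple `x` satisfies
`(a + b)(x) ≠ 0` while `a` vanishes on all proper mixtures of `x` with members of `u` and `b` on all
proper mixtures of `x` with members of `w`, then `x`, rescaled, extends one of the two diagonals,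
contrary to maximality (`HasDiagonal.option`). The number of these mixture conditions is
`O_k(s^n + t^n)` (`card_mixed_le`), so it suffices to find such an `x` as soon as `r` exceeds a
constant multiple of the number of conditions (`diagonal_bound`).

To do so, single out the last variable. Conditions in which it is replaced by a member of a diagonal
are polynomial equations `F α` in `x_1, …, x_n`; the others require the last vector to lie in the
kernel of functionals `G β` depending on `x_1, …, x_n`. A suitable last vector exists exactly when the
functional `D x = (a + b)(x, ·)`, which is coordinatewise multiplication `∏ i, x i l`, is not in the
span of the `G β`. Such a point `x` of the zero locus of the `F α` is supplied by `escape`. What makes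
it true is that every `F α` is linear in the last variable it involves (`IsTriangular`), that every
`G β` has degree less than `n`, and that `D` is the top-degree part of `D - ∑ β, c β • G β`.

* Infinite `K` (`escape_infinite`): suppose `D` is always in the span. At a point `p` of the locus
  where the span has maximal dimension, write `D p = ∑ c β • G β`, and choose a direction `y` killing
  every positive-degree component along `p + t y` of the `F α` and of the coordinates of
  `D - ∑ c β • G β` with respect to a basis of the span; triangularity allows this with at least one
  coordinate of all `y i` equal to `1` (`exists_triangular`). Then `D - ∑ c β • G β` vanishes for all
  but finitely many `t`, so its top coefficient `D y` is zero, a contradiction.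
* Finite `K` with `q` elements (`escape_finite`): suppose `D` is always in the span. The locus has
  density at least `q ^ (-#F)` (`card_triangular`), so for some coefficients `c` the equation
  `D = ∑ c β • G β` holds on a set of density at least `q ^ (-(#F + #G))`. By repeated Cauchy–Schwarz
  (`box_density`) a proportion at least `q ^ (-2^n (#F + #G))` of all boxes lies in this set, and on
  each of these the alternating sum shows that `D` vanishes at the difference vector
  (`map_sub_eq_zero`). But `D y = 0` for only a proportion `(1 - (1 - 1/q)^n)^r` of all `y`, which is
  too small (`exists_exponent`).

Polynomials in `x_1, …, x_n` of degree at most one in each variable are encoded as multilinear maps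
`H` on pairs `(K × X)^n`, evaluated at `(1, x i)`; replacing entries by `(0, y i)` extracts
components of higher degree.
-/

open Module
open scoped TensorProduct

section Defs

variable {K : Type} [Field K] {k : ℕ} {V V' : Fin k → Type}
  [∀ i, AddCommGroup (V i)] [∀ i, Module K (V i)]
  [∀ i, AddCommGroup (V' i)] [∀ i, Module K (V' i)]

/-- The direct sum `S ⊕ T ∈ (V₁ ⊕ V₁') ⊗ ⋯ ⊗ (V_k ⊕ V_k')` of tensors `S ∈ V₁ ⊗ ⋯ ⊗ V_k`
and `T ∈ V₁' ⊗ ⋯ ⊗ V_k'`: the sum of the images of `S` and `T` under the natural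
inclusions. -/
noncomputable def tensorDirectSum (S : ⨂[K] i, V i) (T : ⨂[K] i, V' i) :
    ⨂[K] i, (V i × V' i) :=
  PiTensorProduct.map (fun i => LinearMap.inl K (V i) (V' i)) S +
    PiTensorProduct.map (fun i => LinearMap.inr K (V i) (V' i)) T

end Defs

/-! ### Triangular systems of equations -/

/-- A function of `n` vectors is triangular if, for some index `m`, it depends only on the vectors with
index at most `m` and is linear in the vector with index `m`. Given the earlier vectors, the equation
`f = 0` is then a single linear condition on that vector. -/
def IsTriangular {K X : Type} [Field K] [AddCommGroup X] [Module K X] {n : ℕ}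
    (f : (Fin n → X) → K) : Prop :=
  ∃ m : Fin n, (∀ y, IsLinearMap K fun z => f (Function.update y m z)) ∧
    ∀ y y', (∀ i ≤ m, y i = y' i) → f y = f y'

section triangular

variable {K X : Type} [Field K] [AddCommGroup X] [Module K X]

/-- Fixing the first vector splits a triangular family into linear forms in that vector and functions
which stay triangular in the remaining vectors. -/
lemma triangular_split {n : ℕ} {A : Type} [Fintype A] (f : A → (Fin (n + 1) → X) → K)
    (hf : ∀ α, IsTriangular (f α)) :
    ∃ (p : A → Prop) (l : {α // p α} → X →ₗ[K] K),
      (∀ (α : {α // p α}) (z : X) (y : Fin n → X), f α (Fin.cons z y) = l α z) ∧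
      ∀ (α : {α // ¬ p α}) (z : X), IsTriangular fun y : Fin n → X => f α (Fin.cons z y) := by
  choose m hm hm' using hf
  refine ⟨fun α => m α = 0, fun α => (hm α.1 0).mk', ?_, ?_⟩
  · rintro ⟨α, h⟩ z y
    change f α _ = f α (Function.update 0 (m α) z)
    apply hm'
    intro i hi
    rw [h] at hi
    obtain rfl : i = 0 := by simpa using hi
    simp [h]
  · rintro ⟨α, h⟩ z
    obtain ⟨m', h'⟩ := Fin.exists_succ_eq.2 h
    refine ⟨m', fun y => ?_, fun y y' hy => ?_⟩
    · have := hm α (Fin.cons z y)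
      rw [← h'] at this
      simpa only [Fin.cons_update] using this
    · apply hm'
      rw [← h']
      intro i hi
      induction i using Fin.cases with
      | zero => rfl
      | succ i => simpa using hy i (by simpa using hi)

/-- A system of triangular equations is solved by a proportion of at least `|K| ^ (-#A)` of all
points. -/
lemma card_triangular [Finite K] [Finite X] (n : ℕ) : ∀ (A : Type) [Fintype A]
    (f : A → (Fin n → X) → K), (∀ α, IsTriangular (f α)) →
    Nat.card X ^ n ≤ Nat.card {y // ∀ α, f α y = 0} * Nat.card K ^ Fintype.card A := by
  classical
  induction n with
  | zero =>
    intro A _ f hf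
    have : IsEmpty A := ⟨fun α => (hf α).choose.elim0⟩
    simp
  | succ n ih =>
    intro A _ f hf
    obtain ⟨p, l, hl, ht⟩ := triangular_split f hf
    let L : X →ₗ[K] ({α // p α} → K) := LinearMap.pi l
    have h1 : Nat.card X ≤ Nat.card (LinearMap.ker L) * Nat.card K ^ Fintype.card {α // p α} := by
      rw [Submodule.card_eq_card_quotient_mul_card (LinearMap.ker L)]
      refine Nat.mul_le_mul_left _ ?_
      rw [Nat.card_congr L.quotKerEquivRange.toEquiv]
      refine (Nat.card_le_card_of_injective _ Subtype.val_injective).trans ?_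
      simp [Nat.card_pi]
    have h2 : ∀ z : X, Nat.card X ^ n ≤
        Nat.card {y : Fin n → X // ∀ α : {α // ¬ p α}, f α (Fin.cons z y) = 0} *
          Nat.card K ^ Fintype.card {α // ¬ p α} := fun z => ih _ _ fun α => ht α z
    have h3 : Nat.card ((z : LinearMap.ker L) ×
        {y : Fin n → X // ∀ α : {α // ¬ p α}, f α (Fin.cons z.1 y) = 0}) ≤
        Nat.card {y // ∀ α, f α y = 0} := by
      refine Nat.card_le_card_of_injective (fun q => ⟨Fin.cons q.1.1 q.2.1, fun α => ?_⟩) ?_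
      · by_cases h : p α
        · rw [hl ⟨α, h⟩]
          exact congrFun (LinearMap.mem_ker.1 q.1.2) ⟨α, h⟩
        · exact q.2.2 ⟨α, h⟩
      · rintro ⟨⟨z, hz⟩, y, hy⟩ ⟨⟨z', hz'⟩, y', hy'⟩ h
        have h := congrArg Subtype.val h
        simp only [Fin.cons_inj] at h
        obtain ⟨rfl, rfl⟩ := h
        rfl
    have : Fintype (LinearMap.ker L) := Fintype.ofFinite _
    rw [Nat.card_sigma] at h3
    have hc : Fintype.card A = Fintype.card {α // p α} + Fintype.card {α // ¬ p α} := by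
      rw [← Fintype.card_sum]; exact Fintype.card_congr (Equiv.sumCompl p).symm
    calc Nat.card X ^ (n + 1) = Nat.card X * Nat.card X ^ n := by ring
      _ ≤ (Nat.card (LinearMap.ker L) * Nat.card K ^ Fintype.card {α // p α}) *
          Nat.card X ^ n := Nat.mul_le_mul_right _ h1
      _ = (∑ z : LinearMap.ker L, Nat.card X ^ n) * Nat.card K ^ Fintype.card {α // p α} := by
        rw [Finset.sum_const, Finset.card_univ,
          ← Nat.card_eq_fintype_card (α := LinearMap.ker L), smul_eq_mul]; ring
      _ ≤ (∑ z : LinearMap.ker L,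
          Nat.card {y : Fin n → X // ∀ α : {α // ¬ p α}, f α (Fin.cons z.1 y) = 0} *
          Nat.card K ^ Fintype.card {α // ¬ p α}) * Nat.card K ^ Fintype.card {α // p α} := by
        gcongr with z; exact h2 z.1
      _ = (∑ z : LinearMap.ker L,
          Nat.card {y : Fin n → X // ∀ α : {α // ¬ p α}, f α (Fin.cons z.1 y) = 0}) *
          Nat.card K ^ Fintype.card A := by
        rw [← Finset.sum_mul, hc, pow_add]; ring
      _ ≤ _ := Nat.mul_le_mul_right _ h3

end triangular

section supports

variable {K : Type} [Field K] {r : ℕ}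

/-- Finitely many linear conditions have a solution equal to `1` in all but as many coordinates as
there are conditions. -/
lemma exists_ones {A : Type} [Fintype A] (l : A → (Fin r → K) →ₗ[K] K) (S : Finset (Fin r)) :
    ∃ y, (∀ α, l α y = 0) ∧ ∃ S' ⊆ S, S.card ≤ S'.card + Fintype.card A ∧ ∀ j ∈ S', y j = 1 := by
  classical
  let L : (Fin r → K) →ₗ[K] (A → K) := LinearMap.pi l
  obtain ⟨κ, a, ha, hspan, hli⟩ := exists_linearIndependent' K fun j : Fin r => L (Pi.single j 1)
  have : Finite κ := Finite.of_injective a ha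
  have := Fintype.ofFinite κ
  have hκ : Fintype.card κ ≤ Fintype.card A := by simpa using hli.fintype_card_le_finrank
  have hmem : L 1 ∈ Submodule.span K (Set.range ((fun j : Fin r => L (Pi.single j 1)) ∘ a)) := by
    rw [hspan]
    have : (1 : Fin r → K) = ∑ j, Pi.single j 1 := by
      ext i; simp [Finset.sum_apply, Pi.single_apply]
    rw [this, map_sum]
    exact Submodule.sum_mem _ fun j _ => Submodule.subset_span ⟨j, rfl⟩
  obtain ⟨c, hc⟩ := (Submodule.mem_span_range_iff_exists_fun K).1 hmem
  refine ⟨1 - ∑ x, c x • Pi.single (a x) 1, fun α => ?_, S \ Finset.univ.image a,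
    Finset.sdiff_subset, ?_, fun j hj => ?_⟩
  · have : L (1 - ∑ x, c x • Pi.single (a x) 1) = 0 := by
      rw [map_sub, ← hc, map_sum]
      simp
    exact congrFun this α
  · have h1 := Finset.le_card_sdiff (Finset.univ.image a) S
    have h2 : (Finset.univ.image a).card ≤ Fintype.card κ := Finset.card_image_le
    omega
  · simp only [Finset.mem_sdiff, Finset.mem_image, Finset.mem_univ, true_and, not_exists] at hj
    have : ∀ x, (Pi.single (a x) 1 : Fin r → K) j = 0 := fun x =>
      Pi.single_eq_of_ne (fun h => hj.2 x h.symm) _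
    simp [Finset.sum_apply, this]

/-- A system of triangular equations has a solution all of whose vectors equal `1` in all but as many
coordinates as there are equations. -/
lemma exists_triangular (n : ℕ) : ∀ (A : Type) [Fintype A]
    (f : A → (Fin n → Fin r → K) → K), (∀ α, IsTriangular (f α)) → ∀ S : Finset (Fin r),
    ∃ y, (∀ α, f α y = 0) ∧
      ∃ S' ⊆ S, S.card ≤ S'.card + Fintype.card A ∧ ∀ j ∈ S', ∀ i, y i j = 1 := by
  classical
  induction n with
  | zero =>
    intro A _ f hf S
    have : IsEmpty A := ⟨fun α => (hf α).choose.elim0⟩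
    exact ⟨0, fun α => this.elim α, S, subset_rfl, by simp, fun j _ i => i.elim0⟩
  | succ n ih =>
    intro A _ f hf S
    obtain ⟨p, l, hl, ht⟩ := triangular_split f hf
    obtain ⟨z, hz, S₁, hS₁, hc₁, h₁⟩ := exists_ones l S
    obtain ⟨y, hy, S₂, hS₂, hc₂, h₂⟩ := ih _ _ (fun α : {α // ¬ p α} => ht α z) S₁
    have hc : Fintype.card A = Fintype.card {α // p α} + Fintype.card {α // ¬ p α} := by
      rw [← Fintype.card_sum]; exact Fintype.card_congr (Equiv.sumCompl p).symm
    refine ⟨Fin.cons z y, fun α => ?_, S₂, hS₂.trans hS₁, by omega, fun j hj i => ?_⟩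
    · by_cases h : p α
      · rw [hl ⟨α, h⟩, hz]
      · exact hy ⟨α, h⟩
    · induction i using Fin.cases with
      | zero => exact h₁ j (hS₂ hj)
      | succ i => exact h₂ j hj i

end supports

/-! ### Restriction of multilinear maps to lines -/

section lines

variable {K : Type} [Field K] {X : Type} [AddCommGroup X] [Module K X]
  {M : Type} [AddCommGroup M] [Module K M] {n : ℕ}

/-- Expansion of `t ↦ H(1, p + t y)` in powers of `t`. -/
lemma map_line (H : MultilinearMap K (fun _ : Fin n => K × X) M) (p y : Fin n → X) (t : K) :
    H (fun i => (1, p i + t • y i)) =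
      ∑ J : Finset (Fin n), t ^ J.card •
        H (J.piecewise (fun i => (0, y i)) (fun i => (1, p i))) := by
  have h : (fun i => ((1 : K), p i + t • y i)) =
      (fun i => t • ((0 : K), y i)) + fun i => ((1 : K), p i) := by
    ext i <;> simp [add_comm]
  rw [h, H.map_add_univ]
  refine Finset.sum_congr rfl fun J _ => ?_
  have := H.map_piecewise_smul (fun _ => t)
    (J.piecewise (fun i => (0, y i)) (fun i => (1, p i))) J
  rw [Finset.prod_const] at this
  rw [← this]
  congr 1
  ext1 i
  by_cases hi : i ∈ J <;> simp [hi]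

open Polynomial in
lemma exists_line_poly (H : MultilinearMap K (fun _ : Fin n => K × X) K) (p y : Fin n → X) :
    ∃ P : K[X], (∀ t, P.eval t = H (fun i => (1, p i + t • y i))) ∧
      P.coeff n = H (fun i => (0, y i)) := by
  refine ⟨∑ J : Finset (Fin n), C (H (J.piecewise (fun i => (0, y i)) (fun i => (1, p i)))) *
    Polynomial.X ^ J.card, fun t => ?_, ?_⟩
  · rw [map_line, eval_finsetSum]
    exact Finset.sum_congr rfl fun J _ => by
      simp only [eval_mul, eval_C, eval_pow, eval_X, smul_eq_mul, mul_comm]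
  · rw [finsetSum_coeff, Finset.sum_eq_single Finset.univ]
    · simp
    · intro J _ hJ
      rw [coeff_C_mul, coeff_X_pow, if_neg, mul_zero]
      intro h
      exact hJ (Finset.eq_univ_of_card J (by simp [← h]))
    · simp

/-- The component of `y ↦ H(1, p + y)` which is multilinear in the variables of a nonempty set `J` is
triangular, with respect to the largest element of `J`. -/
lemma isTriangular_piecewise (H : MultilinearMap K (fun _ : Fin n => K × X) K) (p : Fin n → X)
    (J : Finset (Fin n)) (hJ : J.Nonempty) :
    IsTriangular fun y : Fin n → X =>
      H (J.piecewise (fun i => (0, y i)) (fun i => (1, p i))) := by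
  refine ⟨J.max' hJ, fun y => ?_, fun y y' h => ?_⟩
  · have key : ∀ z, J.piecewise (fun i => ((0 : K), Function.update y (J.max' hJ) z i))
        (fun i => ((1 : K), p i)) = Function.update
        (J.piecewise (fun i => ((0 : K), y i)) (fun i => ((1 : K), p i))) (J.max' hJ) (0, z) := by
      intro z
      ext1 i
      by_cases hi : i = J.max' hJ
      · subst hi; simp [J.max'_mem hJ]
      · by_cases hi' : i ∈ J <;> simp [hi, hi']
    simp only [key]
    constructor
    · intro a b
      rw [← H.map_update_add]; simp
    · intro c a
      rw [← H.map_update_smul]; simp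
  · dsimp only
    congr 1
    ext1 i
    by_cases hi : i ∈ J
    · simp [hi, h i (J.le_max' i hi)]
    · simp [hi]

end lines

/-! ### Escaping a span over an infinite field -/

section infinite

variable {K : Type} [Field K] {M : Type} [AddCommGroup M] [Module K M] {n r : ℕ}

/-- Over an infinite field, a point of the zero locus of the `F α` at which `D` is not in the span of
the `G β`. The hypothesis on `G` says that each `G β` has degree less than `n`. -/
lemma escape_infinite [Infinite K] {A B : Type} [Fintype A] [Fintype B]
    (F : A → MultilinearMap K (fun _ : Fin n => K × (Fin r → K)) K)
    (hF : ∀ α, IsTriangular fun x : Fin n → Fin r → K => F α fun i => (1, x i))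
    (G : B → MultilinearMap K (fun _ : Fin n => K × (Fin r → K)) M)
    (hG : ∀ β (y : Fin n → Fin r → K), G β (fun i => (0, y i)) = 0)
    (D : MultilinearMap K (fun _ : Fin n => Fin r → K) M)
    (hD : ∀ y, D y = 0 → ∀ j, ∏ i, y i j = 0)
    (hr : 2 ^ n * (Fintype.card A + Fintype.card B) < r) :
    ∃ x : Fin n → Fin r → K, (∀ α, F α (fun i => (1, x i)) = 0) ∧
      D x ∉ Submodule.span K (Set.range fun β => G β fun i => (1, x i)) := by
  classical
  by_contra! hcon
  let d : (Fin n → Fin r → K) → ℕ := fun x =>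
    finrank K (Submodule.span K (Set.range fun β => G β fun i => (1, x i)))
  -- a point `p` of the zero locus at which the span of the `G β` has maximal dimension
  obtain ⟨p, hpZ, hpmax⟩ : ∃ p : Fin n → Fin r → K, (∀ α, F α (fun i => (1, p i)) = 0) ∧
      ∀ x, (∀ α, F α (fun i => (1, x i)) = 0) → d x ≤ d p := by
    let Z : Set ℕ := {e | ∃ x, (∀ α, F α (fun i => (1, x i)) = 0) ∧ d x = e}
    have hne : Z.Nonempty := by
      refine ⟨d 0, 0, fun α => ?_, rfl⟩
      obtain ⟨m, hm, -⟩ := hF α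
      simpa using (hm 0).map_zero
    have hbd : BddAbove Z := by
      refine ⟨Fintype.card B, ?_⟩
      rintro _ ⟨x, -, rfl⟩
      exact finrank_range_le_card _
    obtain ⟨p, hp, hpe⟩ := Nat.sSup_mem hne hbd
    exact ⟨p, hp, fun x hx => hpe ▸ le_csSup hbd ⟨x, hx, rfl⟩⟩
  obtain ⟨κ, a, ha, hspan, hli⟩ := exists_linearIndependent' K fun β => G β fun i => (1, p i)
  have : Finite κ := Finite.of_injective a ha
  have := Fintype.ofFinite κ
  have hκ : Fintype.card κ ≤ Fintype.card B := Fintype.card_le_of_injective a ha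
  have hdp : d p = Fintype.card κ := by
    simp only [d]
    rw [← hspan, finrank_span_eq_card hli]
  -- `P` reads off coordinates with respect to the basis `G (a b)` of the span at `p`
  obtain ⟨P, hP⟩ := LinearMap.exists_leftInverse_of_injective
    (Finsupp.linearCombination K ((fun β => G β fun i => (1, p i)) ∘ a))
    (LinearMap.ker_eq_bot.2 hli)
  have hPb : ∀ b, P (G (a b) fun i => (1, p i)) = Finsupp.single b 1 := by
    intro b
    have := LinearMap.congr_fun hP (Finsupp.single b 1)
    simpa using this
  have hDp := hcon p hpZ
  rw [← hspan] at hDp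
  obtain ⟨c, hc⟩ := (Submodule.mem_span_range_iff_exists_fun K).1 hDp
  let Φ : MultilinearMap K (fun _ : Fin n => K × (Fin r → K)) M :=
    D.compLinearMap (fun _ => LinearMap.snd K K _) - ∑ b, c b • G (a b)
  have hΦ : ∀ q, Φ q = D (fun i => (q i).2) - ∑ b, c b • G (a b) q := by
    intro q; simp [Φ]
  have hΦp : Φ (fun i => (1, p i)) = 0 := by
    rw [hΦ, ← hc]; simp
  have hΦy : ∀ y, Φ (fun i => (0, y i)) = D y := by
    intro y; rw [hΦ]; simp [hG]
  let ev (b : κ) : M →ₗ[K] K := Finsupp.lapply b ∘ₗ P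
  let H : A ⊕ κ → MultilinearMap K (fun _ : Fin n => K × (Fin r → K)) K :=
    Sum.elim F fun b => (ev b).compMultilinearMap Φ
  have hHp : ∀ e, H e (fun i => (1, p i)) = 0 := by
    rintro (α | b)
    · exact hpZ α
    · simp [H, hΦp]
  -- a direction `y` along which all components of positive degree vanish
  obtain ⟨y, hy, S', -, hcard, hones⟩ := exists_triangular n
    ((A ⊕ κ) × {J : Finset (Fin n) // J.Nonempty})
    (fun e y => H e.1 (e.2.1.piecewise (fun i => (0, y i)) (fun i => (1, p i))))
    (fun e => isTriangular_piecewise _ p e.2.1 e.2.2) (Finset.univ : Finset (Fin r))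
  have hHt : ∀ e (t : K), H e (fun i => (1, p i + t • y i)) = 0 := by
    intro e t
    rw [map_line]
    refine Finset.sum_eq_zero fun J _ => ?_
    rcases J.eq_empty_or_nonempty with rfl | hJ
    · simp [hHp]
    · rw [hy (e, ⟨J, hJ⟩), smul_zero]
  have hZt : ∀ t : K, ∀ α, F α (fun i => (1, p i + t • y i)) = 0 := fun t α => hHt (.inl α) t
  have hPt : ∀ t : K, P (Φ (fun i => (1, p i + t • y i))) = 0 := by
    intro t; ext b; exact hHt (.inr b) t
  obtain ⟨j, hj⟩ : S'.Nonempty := by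
    rw [← Finset.card_pos]
    have h1 : Fintype.card {J : Finset (Fin n) // J.Nonempty} ≤ 2 ^ n :=
      (Fintype.card_subtype_le _).trans (by simp)
    have h2 : Fintype.card ((A ⊕ κ) × {J : Finset (Fin n) // J.Nonempty}) ≤
        (Fintype.card A + Fintype.card B) * 2 ^ n := by
      rw [Fintype.card_prod, Fintype.card_sum]
      gcongr
    rw [Finset.card_univ, Fintype.card_fin] at hcard
    lia
  have hDy : D y ≠ 0 := fun h => by
    have := hD y h j
    rw [Finset.prod_eq_one fun i _ => hones j hj i] at this
    exact one_ne_zero this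
  -- `W` is the matrix of `P (G (a b))` along the line, with polynomial entries; it is the identity
  -- at `t = 0`, so it is invertible for all but finitely many `t`
  choose Q hQ _ using fun (b b' : κ) => exists_line_poly ((ev b).compMultilinearMap (G (a b'))) p y
  let W : Matrix κ κ (Polynomial K) := Matrix.of Q
  have hWt : ∀ t, W.det.eval t = (Matrix.of fun b b' => ev b (G (a b')
      fun i => (1, p i + t • y i))).det := by
    intro t
    rw [← Polynomial.coe_evalRingHom, RingHom.map_det]
    congr 1
    ext b b'
    simpa [W] using hQ b b' t
  have hW : W.det ≠ 0 := by
    intro h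
    have h0 := hWt 0
    have : (Matrix.of fun b b' => ev b (G (a b') fun i => (1, p i + (0 : K) • y i))) =
        (1 : Matrix κ κ K) := by
      ext b b'
      simp [ev, hPb, Matrix.one_apply, Finsupp.single_apply, eq_comm]
    rw [this, h] at h0
    simp at h0
  -- where `W` is invertible, the `G (a b)` are independent, hence span by maximality of `d p`; since
  -- `P` is injective on that span and `P Φ = 0`, the value of `Φ` itself is zero
  have hgood : ∀ t, W.det.eval t ≠ 0 → Φ (fun i => (1, p i + t • y i)) = 0 := by
    intro t ht
    rw [hWt] at ht
    have hker : ∀ lam : κ → K, P (∑ b, lam b • G (a b) fun i => (1, p i + t • y i)) = 0 →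
        lam = 0 := by
      intro lam h
      refine Matrix.eq_zero_of_mulVec_eq_zero ht ?_
      ext b
      have := DFunLike.congr_fun h b
      simpa [Matrix.mulVec, dotProduct, ev, Finsupp.finsetSum_apply, mul_comm] using this
    have hli' : LinearIndependent K fun b => G (a b) fun i => (1, p i + t • y i) := by
      rw [Fintype.linearIndependent_iff]
      intro lam h
      exact fun b => congrFun (hker lam (by rw [h, map_zero])) b
    have hsp : Submodule.span K (Set.range fun b => G (a b) fun i => (1, p i + t • y i)) =
        Submodule.span K (Set.range fun β => G β fun i => (1, p i + t • y i)) := by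
      have : FiniteDimensional K
          (Submodule.span K (Set.range fun β => G β fun i => (1, p i + t • y i))) :=
        FiniteDimensional.span_of_finite K (Set.finite_range _)
      refine Submodule.eq_of_le_of_finrank_le (Submodule.span_mono ?_) ?_
      · rintro _ ⟨b, rfl⟩; exact ⟨a b, rfl⟩
      · rw [finrank_span_eq_card hli', ← hdp]
        exact hpmax (fun i => p i + t • y i) (hZt t)
    have hmem : Φ (fun i => (1, p i + t • y i)) ∈
        Submodule.span K (Set.range fun b => G (a b) fun i => (1, p i + t • y i)) := by
      rw [hΦ]
      refine Submodule.sub_mem _ ?_ (Submodule.sum_mem _ fun b _ =>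
        Submodule.smul_mem _ _ (Submodule.subset_span ⟨b, rfl⟩))
      rw [hsp]
      exact hcon (fun i => p i + t • y i) (hZt t)
    obtain ⟨lam, hlam⟩ := (Submodule.mem_span_range_iff_exists_fun K).1 hmem
    have := hker lam (by rw [hlam, hPt])
    rw [← hlam, this]
    simp
  refine hDy ((Module.forall_dual_apply_eq_zero_iff K _).1 fun ψ => ?_)
  obtain ⟨R, hR, hRn⟩ := exists_line_poly (ψ.compMultilinearMap Φ) p y
  have hRW : R * W.det = 0 := by
    refine Polynomial.funext fun t => ?_
    by_cases ht : W.det.eval t = 0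
    · simp [ht]
    · simp [hR, hgood t ht]
  have hR0 : R = 0 := (mul_eq_zero.1 hRW).resolve_right hW
  rw [hR0] at hRn
  simpa [hΦy] using hRn.symm

end infinite

/-! ### Escaping a span over a finite field -/

section finite

/-- If `A` has density `δ` in `W × X^n`, then the pairs consisting of some `w` and a box (two choices
for each of the `n` coordinates) all of whose `2^n` vertices lie in `A w` have density at least
`δ ^ 2^n`. This is the Cauchy–Schwarz inequality applied to one coordinate at a time; the
parameter space `W` absorbs the coordinates already doubled. -/
lemma box_density {X : Type} [Finite X] [Nonempty X] (n : ℕ) :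
    ∀ (W : Type) [Finite W] [Nonempty W] (A : W → (Fin n → X) → Prop),
    ((Nat.card {q : W × (Fin n → X) // A q.1 q.2} : ℝ) /
        (Nat.card W * Nat.card X ^ n)) ^ 2 ^ n ≤
      (Nat.card {q : W × (Fin n → X × X) //
        ∀ J : Finset (Fin n), A q.1 (J.piecewise (fun i => (q.2 i).1) fun i => (q.2 i).2)} : ℝ) /
        (Nat.card W * (Nat.card X ^ n * Nat.card X ^ n)) := by
  classical
  induction n with
  | zero =>
    intro W _ _ A
    simp only [pow_zero, pow_one, mul_one]
    gcongr
    refine Nat.card_le_card_of_injective (fun q => ⟨(q.1.1, fun i => i.elim0), fun J => ?_⟩) ?_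
    · convert q.2
    · rintro ⟨⟨w, y⟩, h⟩ ⟨⟨w', y'⟩, h'⟩ e
      simp only [Subtype.mk.injEq, Prod.mk.injEq] at e ⊢
      exact ⟨e.1, Subsingleton.elim _ _⟩
  | succ n ih =>
    intro W _ _ A
    have := Fintype.ofFinite W
    have := Fintype.ofFinite X
    let A' : W × X × X → (Fin n → X) → Prop := fun w y =>
      A w.1 (Fin.cons w.2.1 y) ∧ A w.1 (Fin.cons w.2.2 y)
    -- number of points of `A` on a line in the direction of the first coordinate
    let N : W × (Fin n → X) → ℕ := fun q => Nat.card {h : X // A q.1 (Fin.cons h q.2)}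
    have hA : Nat.card {q : W × (Fin (n + 1) → X) // A q.1 q.2} ≤ ∑ q, N q := by
      rw [← Nat.card_sigma]
      refine Nat.card_le_card_of_injective
        (fun q => ⟨(q.1.1, Fin.tail q.1.2), q.1.2 0, by simpa using q.2⟩) ?_
      rintro ⟨⟨w, y⟩, h⟩ ⟨⟨w', y'⟩, h'⟩ e
      have e1 := congrArg (fun s => s.1) e
      have e2 := congrArg (fun s => s.2.1) e
      simp only [Prod.mk.injEq] at e1 e2
      simp only [Subtype.mk.injEq, Prod.mk.injEq]
      refine ⟨e1.1, ?_⟩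
      rw [← Fin.cons_self_tail y, ← Fin.cons_self_tail y', e1.2, e2]
    have hA' : ∑ q, N q ^ 2 ≤ Nat.card {q : (W × X × X) × (Fin n → X) // A' q.1 q.2} := by
      have : ∑ q, N q ^ 2 = ∑ q : W × (Fin n → X), Nat.card
          ({h : X // A q.1 (Fin.cons h q.2)} × {h : X // A q.1 (Fin.cons h q.2)}) := by
        simp only [Nat.card_prod, N, sq]
      rw [this, ← Nat.card_sigma]
      refine Nat.card_le_card_of_injective
        (fun q => ⟨((q.1.1, q.2.1.1, q.2.2.1), q.1.2), q.2.1.2, q.2.2.2⟩) ?_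
      rintro ⟨⟨w, y⟩, ⟨h, _⟩, ⟨k, _⟩⟩ ⟨⟨w', y'⟩, ⟨h', _⟩, ⟨k', _⟩⟩ e
      simp only [Subtype.mk.injEq, Prod.mk.injEq] at e
      obtain ⟨⟨rfl, rfl, rfl⟩, rfl⟩ := e
      rfl
    have hB : Nat.card {q : (W × X × X) × (Fin n → X × X) // ∀ J : Finset (Fin n),
          A' q.1 (J.piecewise (fun i => (q.2 i).1) fun i => (q.2 i).2)} ≤
        Nat.card {q : W × (Fin (n + 1) → X × X) // ∀ J : Finset (Fin (n + 1)),
          A q.1 (J.piecewise (fun i => (q.2 i).1) fun i => (q.2 i).2)} := by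
      refine Nat.card_le_card_of_injective
        (fun q => ⟨(q.1.1.1, Fin.cons (q.1.1.2.1, q.1.1.2.2) q.1.2), fun J => ?_⟩) ?_
      · have hq := q.2 (Finset.univ.filter fun i => i.succ ∈ J)
        by_cases h0 : 0 ∈ J
        · convert hq.1 using 1
          ext1 i
          induction i using Fin.cases with
          | zero => simp [h0]
          | succ i => by_cases hi : i.succ ∈ J <;> simp [hi, Finset.piecewise]
        · convert hq.2 using 1
          ext1 i
          induction i using Fin.cases with
          | zero => simp [h0]
          | succ i => by_cases hi : i.succ ∈ J <;> simp [hi, Finset.piecewise]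
      · rintro ⟨⟨⟨w, h, k⟩, y⟩, _⟩ ⟨⟨⟨w', h', k'⟩, y'⟩, _⟩ e
        simp only [Subtype.mk.injEq, Prod.mk.injEq, Fin.cons_inj] at e
        obtain ⟨rfl, ⟨rfl, rfl⟩, rfl⟩ := e
        rfl
    have hW : (0 : ℝ) < Nat.card W := by exact_mod_cast Nat.card_pos
    have hX : (0 : ℝ) < Nat.card X := by exact_mod_cast Nat.card_pos
    have hCS : (Nat.card {q : W × (Fin (n + 1) → X) // A q.1 q.2} : ℝ) ^ 2 ≤
        (Nat.card W * Nat.card X ^ n) *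
          Nat.card {q : (W × X × X) × (Fin n → X) // A' q.1 q.2} := by
      have h1 : (∑ q, N q) ^ 2 ≤ (Nat.card W * Nat.card X ^ n) * ∑ q, N q ^ 2 := by
        have := sq_sum_le_card_mul_sum_sq (s := Finset.univ) (f := N)
        simpa [Nat.card_eq_fintype_card] using this
      have h2 := (Nat.pow_le_pow_left hA 2).trans (h1.trans (Nat.mul_le_mul_left _ hA'))
      exact_mod_cast h2
    have hdens : ((Nat.card {q : W × (Fin (n + 1) → X) // A q.1 q.2} : ℝ) /
        (Nat.card W * Nat.card X ^ (n + 1))) ^ 2 ≤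
        (Nat.card {q : (W × X × X) × (Fin n → X) // A' q.1 q.2} : ℝ) /
          (Nat.card (W × X × X) * Nat.card X ^ n) := by
      rw [div_pow, Nat.card_prod, Nat.card_prod,
        div_le_div_iff₀ (by positivity) (by push_cast; positivity)]
      push_cast
      calc _ ≤ ((Nat.card W * Nat.card X ^ n) *
          Nat.card {q : (W × X × X) × (Fin n → X) // A' q.1 q.2}) *
          (Nat.card W * (Nat.card X * Nat.card X) * Nat.card X ^ n : ℝ) := by gcongr
        _ = _ := by ring
    calc _ = (((Nat.card {q : W × (Fin (n + 1) → X) // A q.1 q.2} : ℝ) /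
        (Nat.card W * Nat.card X ^ (n + 1))) ^ 2) ^ 2 ^ n := by
          rw [← pow_mul, pow_succ' 2 n]
      _ ≤ _ := pow_le_pow_left₀ (by positivity) hdens _
      _ ≤ _ := ih _ A'
      _ ≤ _ := by
        rw [Nat.card_prod, Nat.card_prod]
        have : (Nat.card W * (Nat.card X ^ (n + 1) * Nat.card X ^ (n + 1)) : ℝ) =
          ((Nat.card W * (Nat.card X * Nat.card X) : ℕ) : ℝ) *
            (Nat.card X ^ n * Nat.card X ^ n) := by push_cast; ring
        rw [this]
        gcongr

/-- A multilinear map vanishing at all vertices of a box vanishes at the difference of two opposite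
vertices. -/
lemma map_sub_eq_zero {K Y M : Type} [Field K] [AddCommGroup Y] [Module K Y] [AddCommGroup M]
    [Module K M] {n : ℕ} (H : MultilinearMap K (fun _ : Fin n => Y) M) (u v : Fin n → Y)
    (h : ∀ J : Finset (Fin n), H (J.piecewise u v) = 0) : H (fun i => u i - v i) = 0 := by
  have e : (fun i => u i - v i) = u + fun i => (-1 : K) • v i := by
    ext i; simp [sub_eq_add_neg]
  rw [e, H.map_add_univ]
  refine Finset.sum_eq_zero fun J _ => ?_
  have := H.map_piecewise_smul (fun _ => (-1 : K)) (J.piecewise u v) Jᶜ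
  rw [h, smul_zero] at this
  rw [← this]
  congr 1
  ext1 i
  by_cases hi : i ∈ J <;> simp [hi]

/-- The proportion `z = 1 - (1 - 1/q)^n` of vectors in `F_q^n` having a zero coordinate satisfies
`z ^ E ≤ 1 / q` for an exponent `E` that does not depend on `q`: for `q ≥ n^2` it follows from
`z ≤ n / q`, and for the remaining `q` from `z ≤ 1 - 2^(-n)`. -/
lemma exists_exponent (n : ℕ) : ∃ E : ℕ, ∀ q : ℕ, 2 ≤ q →
    (1 - (1 - 1 / (q : ℝ)) ^ n) ^ E ≤ 1 / q := by
  obtain ⟨E, hE⟩ := exists_pow_lt_of_lt_one (show (0 : ℝ) < 1 / (n ^ 2 + 1) by positivity)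
    (show (1 - (1 / 2 : ℝ) ^ n) < 1 by simp)
  refine ⟨E + 2, fun q hq => ?_⟩
  have hq' : (2 : ℝ) ≤ q := by exact_mod_cast hq
  have h0 : (0 : ℝ) ≤ 1 - 1 / q := by
    rw [sub_nonneg, div_le_one (by linarith)]; linarith
  have hhalf : (1 / 2 : ℝ) ≤ 1 - 1 / q := by
    have : 1 / (q : ℝ) ≤ 1 / 2 := one_div_le_one_div_of_le (by norm_num) hq'
    linarith
  have hz0 : 0 ≤ 1 - (1 - 1 / (q : ℝ)) ^ n := by
    rw [sub_nonneg]
    exact pow_le_one₀ h0 (by simp)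
  have hz1 : 1 - (1 - 1 / (q : ℝ)) ^ n ≤ 1 := by
    have := pow_nonneg h0 n
    linarith
  rcases le_total (n ^ 2) q with h | h
  · have hb : 1 - (1 - 1 / (q : ℝ)) ^ n ≤ n / q := by
      have := one_add_mul_le_pow (a := -(1 / (q : ℝ))) (by linarith) n
      rw [← sub_eq_add_neg] at this
      have e : (n : ℝ) * -(1 / q) = -(n / q) := by ring
      linarith
    calc _ ≤ (1 - (1 - 1 / (q : ℝ)) ^ n) ^ 2 := pow_le_pow_of_le_one hz0 hz1 (by omega)
      _ ≤ (n / q) ^ 2 := by gcongr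
      _ = n ^ 2 / q / q := by ring
      _ ≤ 1 / q := by
        gcongr
        rw [div_le_one (by linarith)]
        exact_mod_cast h
  · calc _ ≤ (1 - (1 - 1 / (q : ℝ)) ^ n) ^ E := pow_le_pow_of_le_one hz0 hz1 (by omega)
      _ ≤ (1 - (1 / 2 : ℝ) ^ n) ^ E := by gcongr
      _ ≤ 1 / (n ^ 2 + 1) := hE.le
      _ ≤ 1 / q := by
        gcongr
        have : (q : ℝ) ≤ n ^ 2 := by exact_mod_cast h
        linarith

lemma card_prod_eq_zero {K : Type} [Field K] [Finite K] (n r : ℕ) :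
    (Nat.card {y : Fin n → Fin r → K // ∀ j, ∏ i, y i j = 0} : ℝ) =
      (Nat.card K ^ n * (1 - (1 - 1 / (Nat.card K : ℝ)) ^ n)) ^ r := by
  classical
  have := Fintype.ofFinite K
  have h1 : Nat.card {y : Fin n → Fin r → K // ∀ j, ∏ i, y i j = 0} =
      Nat.card (Fin r → {v : Fin n → K // ∏ i, v i = 0}) :=
    Nat.card_congr
      { toFun := fun y j => ⟨fun i => y.1 i j, y.2 j⟩
        invFun := fun w => ⟨fun i j => (w j).1 i, fun j => (w j).2⟩
        left_inv := fun _ => rfl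
        right_inv := fun _ => rfl }
  have h2 : Nat.card {v : Fin n → K // ¬ ∏ i, v i = 0} = (Nat.card K - 1) ^ n := by
    have : Nat.card {v : Fin n → K // ¬ ∏ i, v i = 0} = Nat.card (Fin n → Kˣ) :=
      Nat.card_congr
        { toFun := fun v i =>
            Units.mk0 (v.1 i) (Finset.prod_ne_zero_iff.1 v.2 i (Finset.mem_univ i))
          invFun := fun w => ⟨fun i => w i, Finset.prod_ne_zero_iff.2 fun i _ => (w i).ne_zero⟩
          left_inv := fun _ => rfl
          right_inv := fun _ => by ext; rfl }
    rw [this, Nat.card_pi]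
    simp [Nat.card_eq_fintype_card, Fintype.card_units]
  have h3 : Nat.card {v : Fin n → K // ∏ i, v i = 0} +
      Nat.card {v : Fin n → K // ¬ ∏ i, v i = 0} = Nat.card K ^ n := by
    rw [← Nat.card_sum, Nat.card_congr (Equiv.sumCompl fun v : Fin n → K => ∏ i, v i = 0)]
    simp
  have hq : 1 ≤ Nat.card K := Nat.card_pos
  have hq' : (Nat.card K : ℝ) ≠ 0 := by positivity
  rw [h1, Nat.card_pi, Finset.prod_const, Finset.card_univ, Fintype.card_fin, Nat.cast_pow]
  congr 1
  have h3' : (Nat.card {v : Fin n → K // ∏ i, v i = 0} : ℝ) + (Nat.card K - 1) ^ n =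
      Nat.card K ^ n := by
    rw [h2] at h3
    have := congrArg (Nat.cast : ℕ → ℝ) h3
    push_cast [hq] at this
    exact this
  have e : (Nat.card K : ℝ) ^ n * (1 - 1 / (Nat.card K : ℝ)) ^ n = (Nat.card K - 1) ^ n := by
    rw [← mul_pow]; congr 1; field_simp
  rw [mul_sub, e]
  linarith

/-- The analogue of `escape_infinite` for finite fields, with a constant that does not depend on the
field. -/
lemma escape_finite (n : ℕ) : ∃ C : ℕ, ∀ (K : Type) [Field K] [Finite K]
    (M : Type) [AddCommGroup M] [Module K M] (r : ℕ) (A B : Type) [Fintype A] [Fintype B]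
    (F : A → MultilinearMap K (fun _ : Fin n => K × (Fin r → K)) K)
    (_ : ∀ α, IsTriangular fun x : Fin n → Fin r → K => F α fun i => (1, x i))
    (G : B → MultilinearMap K (fun _ : Fin n => K × (Fin r → K)) M)
    (_ : ∀ β (y : Fin n → Fin r → K), G β (fun i => (0, y i)) = 0)
    (D : MultilinearMap K (fun _ : Fin n => Fin r → K) M)
    (_ : ∀ y, D y = 0 → ∀ j, ∏ i, y i j = 0)
    (_ : C * (Fintype.card A + Fintype.card B) < r),
    ∃ x : Fin n → Fin r → K, (∀ α, F α (fun i => (1, x i)) = 0) ∧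
      D x ∉ Submodule.span K (Set.range fun β => G β fun i => (1, x i)) := by
  classical
  obtain ⟨E, hE⟩ := exists_exponent n
  refine ⟨E * 2 ^ n, ?_⟩
  intro K _ _ M _ _ r A B _ _ F hF G hG D hD hr
  by_contra! hcon
  have := Fintype.ofFinite K
  set q := Nat.card K with hqdef
  have hq : 2 ≤ q := Finite.one_lt_card
  have hq' : (2 : ℝ) ≤ q := by exact_mod_cast hq
  -- the part of the zero locus on which `D` is the combination of the `G β` with coefficients `c`
  let Z (c : B → K) : (Fin n → Fin r → K) → Prop := fun x =>
    (∀ α, F α (fun i => (1, x i)) = 0) ∧ ∑ β, c β • G β (fun i => (1, x i)) = D x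
  have h1 : Nat.card {x : Fin n → Fin r → K // ∀ α, F α (fun i => (1, x i)) = 0} ≤
      ∑ c, Nat.card {x // Z c x} := by
    rw [← Nat.card_sigma]
    choose! c hc using fun x hx => (Submodule.mem_span_range_iff_exists_fun K).1 (hcon x hx)
    refine Nat.card_le_card_of_injective (fun x => ⟨c x.1, x.1, x.2, hc x.1 x.2⟩) ?_
    intro x x' h
    have := congrArg (fun s => s.2.1) h
    exact Subtype.ext this
  obtain ⟨c, -, hcmax⟩ := Finset.exists_max_image Finset.univ
    (fun c : B → K => Nat.card {x // Z c x}) Finset.univ_nonempty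
  have h2 : ∑ c, Nat.card {x // Z c x} ≤ q ^ Fintype.card B * Nat.card {x // Z c x} := by
    refine (Finset.sum_le_card_nsmul _ _ _ hcmax).trans ?_
    simp [hqdef, Nat.card_eq_fintype_card]
  have h3 : (Nat.card (Fin r → K)) ^ n ≤
      Nat.card {x // Z c x} * q ^ (Fintype.card A + Fintype.card B) := by
    refine (card_triangular n A _ hF).trans ?_
    calc _ ≤ (q ^ Fintype.card B * Nat.card {x // Z c x}) * q ^ Fintype.card A := by
          gcongr; exact h1.trans h2
      _ = _ := by ring
  have hX : (0 : ℝ) < Nat.card (Fin r → K) := by exact_mod_cast Nat.card_pos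
  have hbox := box_density (X := Fin r → K) n Unit fun _ x => Z c x
  have hcU : Nat.card {s : Unit × (Fin n → Fin r → K) // Z c s.2} = Nat.card {x // Z c x} :=
    Nat.card_congr
      { toFun := fun s => ⟨s.1.2, s.2⟩
        invFun := fun s => ⟨((), s.1), s.2⟩
        left_inv := fun _ => rfl
        right_inv := fun _ => rfl }
  -- the top-degree part of `Φ` is `D`, and it vanishes on differences of a box
  let Φ : MultilinearMap K (fun _ : Fin n => K × (Fin r → K)) M :=
    D.compLinearMap (fun _ => LinearMap.snd K K _) - ∑ β, c β • G β
  have hΦ : ∀ s, Φ s = D (fun i => (s i).2) - ∑ β, c β • G β s := by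
    intro s; simp [Φ]
  have hcB : Nat.card {s : Unit × (Fin n → (Fin r → K) × (Fin r → K)) //
      ∀ J : Finset (Fin n), Z c (J.piecewise (fun i => (s.2 i).1) fun i => (s.2 i).2)} ≤
      Nat.card ({y : Fin n → Fin r → K // ∀ j, ∏ i, y i j = 0} × (Fin n → Fin r → K)) := by
    refine Nat.card_le_card_of_injective (fun s => (⟨fun i => (s.1.2 i).1 - (s.1.2 i).2, ?_⟩,
      fun i => (s.1.2 i).2)) ?_
    · apply hD
      have := map_sub_eq_zero Φ (fun i => (1, (s.1.2 i).1)) (fun i => (1, (s.1.2 i).2)) ?_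
      · rw [hΦ] at this
        simpa [hG] using this
      · intro J
        have hJ := (s.2 J).2
        have e : (J.piecewise (fun i => ((1 : K), (s.1.2 i).1)) fun i => ((1 : K), (s.1.2 i).2)) =
            fun i => ((1 : K), J.piecewise (fun i => (s.1.2 i).1) (fun i => (s.1.2 i).2) i) := by
          ext1 i
          by_cases hi : i ∈ J <;> simp [hi]
        rw [e, hΦ, hJ, sub_self]
    · rintro ⟨⟨_, s⟩, _⟩ ⟨⟨_, s'⟩, _⟩ e
      simp only [Prod.mk.injEq, Subtype.mk.injEq, true_and] at e ⊢
      ext1 i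
      have e2 := congrFun e.2 i
      have e1 := congrFun e.1 i
      rw [e2] at e1
      exact Prod.ext (sub_left_inj.1 e1) e2
  set z : ℝ := 1 - (1 - 1 / (q : ℝ)) ^ n with hz
  have hqi : (0 : ℝ) < 1 - 1 / q := by
    rw [sub_pos, div_lt_one (by linarith)]; linarith
  have hz0 : 0 ≤ z := by
    rw [hz, sub_nonneg]; exact pow_le_one₀ hqi.le (by simp)
  have hz1 : z < 1 := by
    have := pow_pos hqi n
    linarith
  have hXq : (Nat.card (Fin r → K) : ℝ) = q ^ r := by simp [hqdef]
  have hup : (1 / (q : ℝ)) ^ ((Fintype.card A + Fintype.card B) * 2 ^ n) ≤ z ^ r := by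
    rw [pow_mul]
    rw [hcU] at hbox
    refine (pow_le_pow_left₀ (by positivity) ?_ _).trans (hbox.trans ?_)
    · rw [Nat.card_unique (α := Unit), Nat.cast_one, one_mul, div_pow, one_pow,
        div_le_div_iff₀ (by positivity) (by positivity), one_mul]
      exact_mod_cast h3
    · rw [Nat.card_unique (α := Unit), Nat.cast_one, one_mul, div_le_iff₀ (by positivity)]
      refine (Nat.cast_le.2 hcB).trans (le_of_eq ?_)
      rw [Nat.card_prod, Nat.cast_mul, card_prod_eq_zero, ← hqdef, ← hz]
      have : (Nat.card (Fin n → Fin r → K) : ℝ) = Nat.card (Fin r → K) ^ n := by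
        rw [Nat.card_pi]; simp
      rw [this, hXq, mul_pow, ← pow_mul, ← pow_mul, mul_comm n r]
      ring
  have hlow : z ^ r < (1 / (q : ℝ)) ^ ((Fintype.card A + Fintype.card B) * 2 ^ n) := by
    calc z ^ r ≤ z ^ (E * 2 ^ n * (Fintype.card A + Fintype.card B) + 1) :=
          pow_le_pow_of_le_one hz0 hz1.le hr
      _ = (z ^ E) ^ ((Fintype.card A + Fintype.card B) * 2 ^ n) * z := by
          rw [pow_succ, ← pow_mul]; ring_nf
      _ ≤ (1 / (q : ℝ)) ^ ((Fintype.card A + Fintype.card B) * 2 ^ n) * z := by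
          gcongr; exact hE q hq
      _ < _ := mul_lt_of_lt_one_right (by positivity) hz1
  exact absurd hup (not_le.2 hlow)

/-- If `r` exceeds a constant multiple of the number of constraints, then some point of the zero locus
of the triangular `F α` has `D x` outside the span of the `G β`, which are of degree less than
`n`. -/
lemma escape (n : ℕ) : ∃ C : ℕ, ∀ (K : Type) [Field K]
    (M : Type) [AddCommGroup M] [Module K M] (r : ℕ) (A B : Type) [Fintype A] [Fintype B]
    (F : A → MultilinearMap K (fun _ : Fin n => K × (Fin r → K)) K)
    (_ : ∀ α, IsTriangular fun x : Fin n → Fin r → K => F α fun i => (1, x i))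
    (G : B → MultilinearMap K (fun _ : Fin n => K × (Fin r → K)) M)
    (_ : ∀ β (y : Fin n → Fin r → K), G β (fun i => (0, y i)) = 0)
    (D : MultilinearMap K (fun _ : Fin n => Fin r → K) M)
    (_ : ∀ y, D y = 0 → ∀ j, ∏ i, y i j = 0)
    (_ : C * (Fintype.card A + Fintype.card B) < r),
    ∃ x : Fin n → Fin r → K, (∀ α, F α (fun i => (1, x i)) = 0) ∧
      D x ∉ Submodule.span K (Set.range fun β => G β fun i => (1, x i)) := by
  obtain ⟨C, hC⟩ := escape_finite n
  refine ⟨C + 2 ^ n, ?_⟩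
  intro K _ M _ _ r A B _ _ F hF G hG D hD hr
  rw [add_mul] at hr
  cases finite_or_infinite K
  · exact hC K M r A B F hF G hG D hD (by omega)
  · exact escape_infinite F hF G hG D hD (by omega)

end finite

/-! ### Diagonals of multilinear forms -/

section forms

variable {K : Type} [Field K]

/-- A diagonal of the form `F` indexed by `ι`: tuples `u c` with `F (u c) = 1` such that `F` vanishes on
every tuple `(u (j i) i)_i` composed of entries of at least two different `u c`. -/
def HasDiagonal {k : ℕ} {Y : Fin k → Type} [∀ i, AddCommGroup (Y i)] [∀ i, Module K (Y i)]
    (F : MultilinearMap K Y K) (ι : Type) : Prop :=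
  ∃ u : ι → ∀ i, Y i, (∀ c, F (u c) = 1) ∧
    ∀ j : Fin k → ι, (∃ i i', j i ≠ j i') → F (fun i => u (j i) i) = 0

section basic

variable {k : ℕ} {Y Y' : Fin k → Type} [∀ i, AddCommGroup (Y i)] [∀ i, Module K (Y i)]
  [∀ i, AddCommGroup (Y' i)] [∀ i, Module K (Y' i)]

lemma HasDiagonal.of_comp {F : MultilinearMap K Y K} {g : ∀ i, Y' i →ₗ[K] Y i} {ι : Type}
    (h : HasDiagonal (F.compLinearMap g) ι) : HasDiagonal F ι := by
  obtain ⟨u, h1, h2⟩ := h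
  exact ⟨fun c i => g i (u c i), h1, h2⟩

lemma HasDiagonal.of_injective {F : MultilinearMap K Y K} {ι ι' : Type} {e : ι' → ι}
    (he : Function.Injective e) (h : HasDiagonal F ι) : HasDiagonal F ι' := by
  obtain ⟨u, h1, h2⟩ := h
  refine ⟨fun c => u (e c), fun c => h1 _, fun j hj => h2 (fun i => e (j i)) ?_⟩
  obtain ⟨i, i', hi⟩ := hj
  exact ⟨i, i', fun h => hi (he h)⟩

lemma hasDiagonal_empty (F : MultilinearMap K Y K) (hk : 0 < k) : HasDiagonal F (Fin 0) :=
  ⟨fun c => c.elim0, fun c => c.elim0, fun j => (j ⟨0, hk⟩).elim0⟩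

end basic

/-- The vectors of a diagonal in the first slot are linearly independent. At least two slots are
needed, since for one slot mixtures do not exist. -/
lemma HasDiagonal.le_finrank {n : ℕ} (hn : 1 ≤ n) {Y : Fin (n + 1) → Type}
    [∀ i, AddCommGroup (Y i)] [∀ i, Module K (Y i)] [FiniteDimensional K (Y 0)]
    {F : MultilinearMap K Y K} {r : ℕ} (h : HasDiagonal F (Fin r)) : r ≤ finrank K (Y 0) := by
  classical
  obtain ⟨u, h1, h2⟩ := h
  have hli : LinearIndependent K fun c => u c 0 := by
    rw [Fintype.linearIndependent_iff]
    intro lam hlam b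
    -- replacing the first entry of the tuple `u b` separates the vectors `u a 0`
    have key : ∀ a, F (Function.update (u b) 0 (u a 0)) = if a = b then 1 else 0 := by
      intro a
      have e : Function.update (u b) 0 (u a 0) =
          fun i => u (Function.update (fun _ => b) 0 a i) i := by
        ext1 i
        by_cases hi : i = 0
        · subst hi; simp
        · simp [hi]
      split_ifs with hab
      · rw [hab, Function.update_eq_self, h1]
      · rw [e]
        refine h2 _ ⟨0, ⟨1, by omega⟩, ?_⟩
        have : (⟨1, by omega⟩ : Fin (n + 1)) ≠ 0 := by simp [Fin.ext_iff]
        simpa [this] using hab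
    have h0 : F (Function.update (u b) 0 (∑ a, lam a • u a 0)) = 0 := by
      rw [hlam]; exact F.map_coord_zero 0 (by simp)
    rw [F.map_update_sum] at h0
    simpa [F.map_update_smul, key] using h0
  simpa using hli.fintype_card_le_finrank

/-- A tuple `x` with `F x ≠ 0` such that `F` vanishes on all proper mixtures of `x` with a diagonal `u`
extends the diagonal, after rescaling of its first vector. -/
lemma HasDiagonal.option {n : ℕ} {Y : Type} [AddCommGroup Y] [Module K Y]
    (F : MultilinearMap K (fun _ : Fin (n + 1) => Y) K) {ι : Type} (u : ι → Fin (n + 1) → Y)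
    (h1 : ∀ c, F (u c) = 1)
    (h2 : ∀ j : Fin (n + 1) → ι, (∃ i i', j i ≠ j i') → F (fun i => u (j i) i) = 0)
    (x : Fin (n + 1) → Y)
    (hx : ∀ j : Fin (n + 1) → Option ι, (∃ i, j i = none) → (∃ i, j i ≠ none) →
      F (fun i => (j i).elim (x i) (fun c => u c i)) = 0) (hFx : F x ≠ 0) :
    HasDiagonal F (Option ι) := by
  classical
  refine ⟨fun o => o.elim (Function.update x 0 ((F x)⁻¹ • x 0)) u, ?_, ?_⟩
  · rintro (_ | c)
    · simp [F.map_update_smul, hFx]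
    · exact h1 c
  · intro j hj
    by_cases hnone : ∃ i, j i = none
    · have hsome : ∃ i, j i ≠ none := by
        by_contra! hall
        obtain ⟨i, i', hi⟩ := hj
        exact hi (by rw [hall, hall])
      have hz := hx j hnone hsome
      by_cases h0 : j 0 = none
      · have e : (fun i => (j i).elim (Function.update x 0 ((F x)⁻¹ • x 0)) u i) =
            Function.update (fun i => (j i).elim (x i) (fun c => u c i)) 0
              ((F x)⁻¹ • (fun i => (j i).elim (x i) (fun c => u c i)) 0) := by
          ext1 i
          by_cases hi : i = 0
          · subst hi; simp [h0]
          · cases hji : j i <;> simp [hi, hji]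
        rw [e, F.map_update_smul, Function.update_eq_self, hz, smul_zero]
      · convert hz using 2
        ext1 i
        by_cases hi : i = 0
        · subst hi
          cases hji : j 0 with
          | none => exact absurd hji h0
          | some c => simp
        · cases hji : j i <;> simp [hi]
    · push Not at hnone
      choose j' hj' using fun i => Option.ne_none_iff_exists'.1 (hnone i)
      obtain ⟨i, i', hi⟩ := hj
      have := h2 j' ⟨i, i', fun h => hi (by rw [hj', hj', h])⟩
      convert this using 2
      ext1 i
      simp [hj']

/-- Patterns for a proper mixture of a tuple `x` with a diagonal of size `s`: slot `i` is filled by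
`x i` if `j i = none` and by the `c`-th member of the diagonal if `j i = some c`; both must occur. -/
def Mixed (n s : ℕ) : Type :=
  {j : Fin (n + 1) → Option (Fin s) // (∃ i, j i = none) ∧ ∃ i, j i ≠ none}

noncomputable instance (n s : ℕ) : Fintype (Mixed n s) := by
  classical exact inferInstanceAs (Fintype {j : Fin (n + 1) → Option (Fin s) //
    (∃ i, j i = none) ∧ ∃ i, j i ≠ none})

/-- For `s ≥ 1`, some slot is filled by `x` and the other `n` slots have `s + 1 ≤ 2 s` fillings each;
for `s = 0` there are no patterns. -/
lemma card_mixed_le (n s : ℕ) :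
    Fintype.card (Mixed n s) ≤ (n + 1) * 2 ^ n * s ^ n := by
  classical
  rcases Nat.eq_zero_or_pos s with rfl | hs
  · have : IsEmpty (Mixed n 0) := ⟨fun j => by
      obtain ⟨i, hi⟩ := j.2.2
      exact hi (by cases h : j.1 i with
        | none => rfl
        | some c => exact c.elim0)⟩
    simp
  · have h1 : Fintype.card (Mixed n s) ≤
        Fintype.card (Fin (n + 1) × (Fin n → Option (Fin s))) := by
      refine Fintype.card_le_of_injective
        (fun j => (j.2.1.choose, fun l => j.1 (j.2.1.choose.succAbove l))) ?_
      intro j j' h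
      simp only [Prod.mk.injEq] at h
      apply Subtype.ext
      ext1 i
      have hj := j.2.1.choose_spec
      have hj' := j'.2.1.choose_spec
      rw [← h.1] at hj' h
      rcases Fin.eq_self_or_eq_succAbove j.2.1.choose i with hi | ⟨l, hl⟩
      · rw [hi, hj, hj']
      · rw [hl]; exact congrFun h.2 l
    refine h1.trans ?_
    simp only [Fintype.card_prod, Fintype.card_fin, Fintype.card_fun, Fintype.card_option]
    rw [mul_assoc, ← mul_pow]
    gcongr
    omega

section slots

variable {X : Type} [AddCommGroup X] [Module K X] {n s : ℕ}

/-- The linear map on `K × X` sending `(1, x)` to `x` for `none`, and to `v c` for `some c`. -/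
def slot (v : Fin s → X) (o : Option (Fin s)) : K × X →ₗ[K] X :=
  o.elim (LinearMap.snd K K X) fun c => (LinearMap.fst K K X).smulRight (v c)

/-- The form `a` with its first `n` slots filled according to the pattern `j` and the last slot left
open. -/
def partialForm (a : MultilinearMap K (fun _ : Fin (n + 1) => X) K)
    (u : Fin s → Fin (n + 1) → X) (j : Fin (n + 1) → Option (Fin s)) :
    MultilinearMap K (fun _ : Fin n => K × X) (X →ₗ[K] K) :=
  a.curryRight.compLinearMap fun i => slot (fun c => u c i.castSucc) (j i.castSucc)

/-- The form `a` with its first `n` slots filled according to the pattern `j` and the last slot by the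
member of the diagonal that `j` prescribes. It is the zero form if `j` prescribes none. -/
def closedForm (a : MultilinearMap K (fun _ : Fin (n + 1) => X) K)
    (u : Fin s → Fin (n + 1) → X) (j : Fin (n + 1) → Option (Fin s)) :
    MultilinearMap K (fun _ : Fin n => K × X) K :=
  (LinearMap.applyₗ ((j (Fin.last n)).elim 0 fun c => u c (Fin.last n))).compMultilinearMap
    (partialForm a u j)

variable (a : MultilinearMap K (fun _ : Fin (n + 1) => X) K)
    (u : Fin s → Fin (n + 1) → X) (j : Fin (n + 1) → Option (Fin s))

lemma partialForm_apply (hj : j (Fin.last n) = none) (x : Fin n → X) (v : X) :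
    partialForm a u j (fun i => (1, x i)) v =
      a (fun i => (j i).elim ((Fin.snoc x v : Fin (n + 1) → X) i) fun c => u c i) := by
  simp only [partialForm, MultilinearMap.compLinearMap_apply, MultilinearMap.curryRight_apply]
  congr 1
  ext1 i
  induction i using Fin.lastCases with
  | last => simp [hj]
  | cast i => cases h : j i.castSucc <;> simp [slot, h]

lemma closedForm_apply (hj : j (Fin.last n) ≠ none) (x : Fin n → X) (v : X) :
    closedForm a u j (fun i => (1, x i)) =
      a (fun i => (j i).elim ((Fin.snoc x v : Fin (n + 1) → X) i) fun c => u c i) := by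
  obtain ⟨c, hc⟩ := Option.ne_none_iff_exists'.1 hj
  simp only [closedForm, partialForm, LinearMap.compMultilinearMap_apply,
    MultilinearMap.compLinearMap_apply, LinearMap.applyₗ_apply_apply,
    MultilinearMap.curryRight_apply]
  congr 1
  ext1 i
  induction i using Fin.lastCases with
  | last => simp [hc]
  | cast i => cases h : j i.castSucc <;> simp [slot, h]

lemma isTriangular_closedForm (hj : j (Fin.last n) ≠ none) (hj' : ∃ i, j i = none) :
    IsTriangular fun x : Fin n → X => closedForm a u j fun i => (1, x i) := by
  classical
  let J : Finset (Fin n) := Finset.univ.filter fun i => j i.castSucc = none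
  have hJ : J.Nonempty := by
    obtain ⟨i, hi⟩ := hj'
    induction i using Fin.lastCases with
    | last => exact absurd hi hj
    | cast i => exact ⟨i, by simp [J, hi]⟩
  convert isTriangular_piecewise (closedForm a u j) 0 J hJ using 2 with x
  simp only [closedForm, partialForm, LinearMap.compMultilinearMap_apply,
    MultilinearMap.compLinearMap_apply]
  congr 2
  ext1 i
  cases h : j i.castSucc <;> simp [slot, J, h, Finset.piecewise]

lemma partialForm_zero (hj : j (Fin.last n) = none) (hj' : ∃ i, j i ≠ none) (y : Fin n → X) :
    partialForm a u j (fun i => (0, y i)) = 0 := by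
  obtain ⟨i, hi⟩ := hj'
  induction i using Fin.lastCases with
  | last => exact absurd hj hi
  | cast i =>
    obtain ⟨c, hc⟩ := Option.ne_none_iff_exists'.1 hi
    simp only [partialForm, MultilinearMap.compLinearMap_apply]
    exact MultilinearMap.map_coord_zero _ i (by simp [slot, hc])

end slots

/-- If the diagonal form on `K^r` is a sum of forms `a` and `b` with diagonals of sizes `s` and `t` and
none of sizes `s + 1` and `t + 1`, then `r` is at most a constant multiple of the number of mixture
patterns. -/
lemma diagonal_bound (n : ℕ) : ∃ C : ℕ, ∀ (K : Type) [Field K] (r s t : ℕ)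
    (a b : MultilinearMap K (fun _ : Fin (n + 1) => Fin r → K) K)
    (_ : ∀ x, a x + b x = ∑ l, ∏ i, x i l)
    (_ : HasDiagonal a (Fin s)) (_ : ¬ HasDiagonal a (Option (Fin s)))
    (_ : HasDiagonal b (Fin t)) (_ : ¬ HasDiagonal b (Option (Fin t))),
    r ≤ C * (Fintype.card (Mixed n s) + Fintype.card (Mixed n t)) := by
  classical
  obtain ⟨C, hC⟩ := escape n
  refine ⟨2 * C, ?_⟩
  intro K _ r s t a b hab ha ha' hb hb'
  obtain ⟨u, hu1, hu2⟩ := ha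
  obtain ⟨w, hw1, hw2⟩ := hb
  by_contra! hr
  let A (s : ℕ) : Type := {j : Mixed n s // j.1 (Fin.last n) ≠ none}
  let B (s : ℕ) : Type := {j : Mixed n s // j.1 (Fin.last n) = none}
  have hA : ∀ s, Fintype.card (A s) ≤ Fintype.card (Mixed n s) := fun s =>
    Fintype.card_subtype_le _
  have hB : ∀ s, Fintype.card (B s) ≤ Fintype.card (Mixed n s) := fun s =>
    Fintype.card_subtype_le _
  obtain ⟨x, hx, hxD⟩ := hC K ((Fin r → K) →ₗ[K] K) r (A s ⊕ A t) (B s ⊕ B t)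
    (Sum.elim (fun j => closedForm a u j.1.1) fun j => closedForm b w j.1.1)
    (by
      rintro (j | j)
      · exact isTriangular_closedForm a u _ j.2 j.1.2.1
      · exact isTriangular_closedForm b w _ j.2 j.1.2.1)
    (Sum.elim (fun j => partialForm a u j.1.1) fun j => partialForm b w j.1.1)
    (by
      rintro (j | j) y
      · exact partialForm_zero a u _ j.2 j.1.2.2 y
      · exact partialForm_zero b w _ j.2 j.1.2.2 y)
    (a + b).curryRight
    (by
      intro y hy l
      have := LinearMap.congr_fun hy (Pi.single l 1)
      simpa [hab, Fin.prod_univ_castSucc, Pi.single_apply] using this)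
    (by
      rw [Fintype.card_sum, Fintype.card_sum]
      refine lt_of_le_of_lt ?_ hr
      rw [mul_comm 2 C, mul_assoc]
      have := hA s
      have := hA t
      have := hB s
      have := hB t
      gcongr
      omega)
  -- a last vector, which exists because `D x` is not a combination of the open conditions
  obtain ⟨v, hv, hvD⟩ : ∃ v : Fin r → K, (∀ β, (Sum.elim (fun j : B s => partialForm a u j.1.1)
      fun j : B t => partialForm b w j.1.1) β (fun i => (1, x i)) v = 0) ∧
      (a + b).curryRight x v ≠ 0 := by
    by_contra! h
    refine hxD (mem_span_of_iInf_ker_le_ker fun v hv => ?_)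
    rw [Submodule.mem_iInf] at hv
    exact h v hv
  have hne : a (Fin.snoc x v) + b (Fin.snoc x v) ≠ 0 := hvD
  by_cases hav : a (Fin.snoc x v) = 0
  · have hbv : b (Fin.snoc x v) ≠ 0 := by simpa [hav] using hne
    refine hb' (HasDiagonal.option b w hw1 hw2 _ (fun j hj hj' => ?_) hbv)
    by_cases hl : j (Fin.last n) = none
    · rw [← partialForm_apply b w j hl]
      exact hv (.inr ⟨⟨j, hj, hj'⟩, hl⟩)
    · rw [← closedForm_apply b w j hl]
      exact hx (.inr ⟨⟨j, hj, hj'⟩, hl⟩)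
  · refine ha' (HasDiagonal.option a u hu1 hu2 _ (fun j hj hj' => ?_) hav)
    by_cases hl : j (Fin.last n) = none
    · rw [← partialForm_apply a u j hl]
      exact hv (.inl ⟨⟨j, hj, hj'⟩, hl⟩)
    · rw [← closedForm_apply a u j hl]
      exact hx (.inl ⟨⟨j, hj, hj'⟩, hl⟩)

end forms

/-! ### Tensors as multilinear forms -/

section tensors

variable {K : Type} [Field K] {k : ℕ} {V V' : Fin k → Type}
  [∀ i, AddCommGroup (V i)] [∀ i, Module K (V i)]
  [∀ i, AddCommGroup (V' i)] [∀ i, Module K (V' i)]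

/-- The tensor `T` as a multilinear form on the dual spaces, `φ ↦ (φ₁ ⊗ ⋯ ⊗ φ_k)(T)`. -/
noncomputable def tensorForm (T : ⨂[K] i, V i) : MultilinearMap K (fun i => Dual K (V i)) K :=
  (LinearMap.applyₗ T ∘ₗ PiTensorProduct.dualDistrib).compMultilinearMap (PiTensorProduct.tprod K)

lemma tensorForm_apply (T : ⨂[K] i, V i) (φ : ∀ i, Dual K (V i)) :
    tensorForm T φ = PiTensorProduct.dualDistrib (PiTensorProduct.tprod K φ) T := rfl

lemma tensorForm_map (f : ∀ i, V i →ₗ[K] V' i) (T : ⨂[K] i, V i) (φ : ∀ i, Dual K (V' i)) :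
    tensorForm (PiTensorProduct.map f T) φ = tensorForm T fun i => φ i ∘ₗ f i := by
  simp only [tensorForm_apply]
  rw [← LinearMap.comp_apply]
  refine LinearMap.congr_fun (PiTensorProduct.ext ?_) T
  ext m
  simp

lemma tensorForm_directSum (S : ⨂[K] i, V i) (T : ⨂[K] i, V' i)
    (φ : ∀ i, Dual K (V i × V' i)) :
    tensorForm (tensorDirectSum S T) φ =
      tensorForm S (fun i => φ i ∘ₗ LinearMap.inl K _ _) +
      tensorForm T (fun i => φ i ∘ₗ LinearMap.inr K _ _) := by
  rw [← tensorForm_map, ← tensorForm_map, tensorForm_apply, tensorDirectSum, map_add]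
  rfl

/-- The coordinates of `(g₁, …, g_k)·T` in the standard basis are values of the form of `T` at coordinate
functionals of the maps `g i`. -/
lemma repr_map {r : ℕ} (g : ∀ i, V i →ₗ[K] (Fin r → K)) (T : ⨂[K] i, V i) (j : Fin k → Fin r) :
    (Basis.piTensorProduct fun _ : Fin k => Pi.basisFun K (Fin r)).repr
      (PiTensorProduct.map g T) j = tensorForm T fun i => LinearMap.proj (j i) ∘ₗ g i := by
  let b := Basis.piTensorProduct fun _ : Fin k => Pi.basisFun K (Fin r)
  rw [tensorForm_apply]
  change (Finsupp.lapply j ∘ₗ b.repr.toLinearMap ∘ₗ PiTensorProduct.map g) T = _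
  refine LinearMap.congr_fun (PiTensorProduct.ext ?_) T
  ext m
  simp [b]

/-- The identity tensor of size `r` is a restriction of `T` exactly when the form of `T` has a diagonal
of size `r`. -/
lemma restricts_iff (hk : 0 < k) (T : ⨂[K] i, V i) (r : ℕ) :
    (∃ g : ∀ i, V i →ₗ[K] (Fin r → K), PiTensorProduct.map g T =
      ∑ j : Fin r, PiTensorProduct.tprod K fun _ => Pi.single j (1 : K)) ↔
    HasDiagonal (tensorForm T) (Fin r) := by
  classical
  have key : ∀ g : ∀ i, V i →ₗ[K] (Fin r → K), (PiTensorProduct.map g T =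
      ∑ j : Fin r, PiTensorProduct.tprod K fun _ => Pi.single j (1 : K)) ↔
      ∀ j : Fin k → Fin r, tensorForm T (fun i => LinearMap.proj (j i) ∘ₗ g i) =
        ∑ c : Fin r, if ∀ i, j i = c then 1 else 0 := by
    intro g
    rw [(Basis.piTensorProduct
      fun _ : Fin k => Pi.basisFun K (Fin r)).ext_elem_iff]
    refine forall_congr' fun j => ?_
    rw [repr_map]
    simp [Finsupp.finsetSum_apply, Pi.single_apply, Finset.prod_ite_zero]
  have hconst : ∀ (j : Fin k → Fin r) (c : Fin r), (∀ i, j i = c) →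
      (∑ c' : Fin r, if ∀ i, j i = c' then (1 : K) else 0) = 1 := by
    intro j c hj
    have : ∀ c', (∀ i, j i = c') ↔ c = c' := fun c' =>
      ⟨fun h => (hj ⟨0, hk⟩).symm.trans (h _), fun h i => (hj i).trans h⟩
    simp [this]
  have hmix : ∀ j : Fin k → Fin r, (∃ i i', j i ≠ j i') →
      (∑ c : Fin r, if ∀ i, j i = c then (1 : K) else 0) = 0 := by
    rintro j ⟨i, i', hi⟩
    exact Finset.sum_eq_zero fun c _ => if_neg fun h => hi (by rw [h, h])
  constructor
  · rintro ⟨g, hg⟩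
    rw [key] at hg
    refine ⟨fun c i => LinearMap.proj c ∘ₗ g i, fun c => ?_, fun j hj => ?_⟩
    · rw [← hconst (fun _ => c) c fun _ => rfl, ← hg]
    · rw [← hmix j hj, ← hg]
  · rintro ⟨u, h1, h2⟩
    refine ⟨fun i => LinearMap.pi fun c => u c i, (key _).2 fun j => ?_⟩
    have e : (fun i => LinearMap.proj (j i) ∘ₗ LinearMap.pi fun c => u c i) =
        fun i => u (j i) i := rfl
    rw [e]
    by_cases hj : ∃ i i', j i ≠ j i'
    · rw [h2 j hj, hmix j hj]
    · push Not at hj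
      obtain ⟨c, rfl⟩ : ∃ c, j = fun _ => c := ⟨j ⟨0, hk⟩, funext fun i => hj _ _⟩
      rw [hconst _ c fun _ => rfl]; exact h1 c

end tensors

/-! ### The two bounds for the subrank -/

section subrank

variable {K : Type} [Field K] {n : ℕ} {V V' : Fin (n + 1) → Type}
  [∀ i, AddCommGroup (V i)] [∀ i, Module K (V i)]
  [∀ i, AddCommGroup (V' i)] [∀ i, Module K (V' i)]

lemma subrank_eq (T : ⨂[K] i, V i) :
    subrank T = sSup {r : ℕ | HasDiagonal (tensorForm T) (Fin r)} := by
  simp only [subrank, restricts_iff (Nat.succ_pos n)]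

variable [∀ i, FiniteDimensional K (V i)] [∀ i, FiniteDimensional K (V' i)]

lemma bddAbove_diagonal (hn : 1 ≤ n) (T : ⨂[K] i, V i) :
    BddAbove {r : ℕ | HasDiagonal (tensorForm T) (Fin r)} :=
  ⟨_, fun _ h => HasDiagonal.le_finrank hn h⟩

lemma hasDiagonal_subrank (hn : 1 ≤ n) (T : ⨂[K] i, V i) :
    HasDiagonal (tensorForm T) (Fin (subrank T)) := by
  rw [subrank_eq]
  exact Nat.sSup_mem ⟨0, hasDiagonal_empty _ (Nat.succ_pos n)⟩ (bddAbove_diagonal hn T)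

lemma le_subrank (hn : 1 ≤ n) {T : ⨂[K] i, V i} {r : ℕ}
    (h : HasDiagonal (tensorForm T) (Fin r)) : r ≤ subrank T := by
  rw [subrank_eq]
  exact le_csSup (bddAbove_diagonal hn T) h

lemma subrank_add_le (hn : 1 ≤ n) (S : ⨂[K] i, V i) (T : ⨂[K] i, V' i) :
    subrank S + subrank T ≤ subrank (tensorDirectSum S T) := by
  apply le_subrank hn
  obtain ⟨u, hu1, hu2⟩ := hasDiagonal_subrank hn S
  obtain ⟨w, hw1, hw2⟩ := hasDiagonal_subrank hn T
  refine HasDiagonal.of_injective (ι := Fin (subrank S) ⊕ Fin (subrank T))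
    finSumFinEquiv.symm.injective ?_
  let uw : Fin (subrank S) ⊕ Fin (subrank T) → ∀ i, Dual K (V i × V' i) :=
    Sum.elim (fun c i => u c i ∘ₗ LinearMap.fst K _ _) fun c i => w c i ∘ₗ LinearMap.snd K _ _
  have hl : ∀ c i, uw (.inl c) i ∘ₗ LinearMap.inl K _ _ = u c i := fun c i => by ext; simp [uw]
  have hl' : ∀ c i, uw (.inl c) i ∘ₗ LinearMap.inr K _ _ = 0 := fun c i => by ext; simp [uw]
  have hr : ∀ c i, uw (.inr c) i ∘ₗ LinearMap.inr K _ _ = w c i := fun c i => by ext; simp [uw]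
  have hr' : ∀ c i, uw (.inr c) i ∘ₗ LinearMap.inl K _ _ = 0 := fun c i => by ext; simp [uw]
  refine ⟨uw, ?_, fun j hj => ?_⟩
  · rintro (c | c)
    · rw [tensorForm_directSum]
      simp only [hl, hl']
      rw [(tensorForm T).map_coord_zero 0 rfl, add_zero]
      exact hu1 c
    · rw [tensorForm_directSum]
      simp only [hr, hr']
      rw [(tensorForm S).map_coord_zero 0 rfl, zero_add]
      exact hw1 c
  · rw [tensorForm_directSum]
    obtain ⟨i, i', hi⟩ := hj
    have h1 : tensorForm S (fun i => uw (j i) i ∘ₗ LinearMap.inl K _ _) = 0 := by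
      by_cases h : ∃ l c, j l = .inr c
      · obtain ⟨l, c, hl⟩ := h
        exact (tensorForm S).map_coord_zero l (by rw [hl, hr'])
      · have : ∀ l, ∃ c, j l = .inl c := fun l => by
          cases hjl : j l with
          | inl c => exact ⟨c, rfl⟩
          | inr c => exact absurd ⟨l, c, hjl⟩ h
        choose j' hj' using this
        simp only [hj', hl]
        exact hu2 j' ⟨i, i', fun h => hi (by rw [hj', hj', h])⟩
    have h2 : tensorForm T (fun i => uw (j i) i ∘ₗ LinearMap.inr K _ _) = 0 := by
      by_cases h : ∃ l c, j l = .inl c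
      · obtain ⟨l, c, hl⟩ := h
        exact (tensorForm T).map_coord_zero l (by rw [hl, hl'])
      · have : ∀ l, ∃ c, j l = .inr c := fun l => by
          cases hjl : j l with
          | inr c => exact ⟨c, rfl⟩
          | inl c => exact absurd ⟨l, c, hjl⟩ h
        choose j' hj' using this
        simp only [hj', hr]
        exact hw2 j' ⟨i, i', fun h => hi (by rw [hj', hj', h])⟩
    rw [h1, h2, add_zero]

/-- A pullback of the form of `T` has a diagonal of size at most `Q(T)` that cannot be enlarged. -/
lemma exists_maximal_diagonal (hn : 1 ≤ n) (T : ⨂[K] i, V i) {r : ℕ}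
    (g : ∀ i, (Fin r → K) →ₗ[K] Dual K (V i)) :
    ∃ s ≤ subrank T, HasDiagonal ((tensorForm T).compLinearMap g) (Fin s) ∧
      ¬ HasDiagonal ((tensorForm T).compLinearMap g) (Option (Fin s)) := by
  classical
  let P : ℕ → Prop := fun m => HasDiagonal ((tensorForm T).compLinearMap g) (Fin m)
  have hP : ∀ m, P m → m ≤ subrank T := fun m h => le_subrank hn h.of_comp
  have h0 : P 0 := hasDiagonal_empty _ (Nat.succ_pos n)
  refine ⟨Nat.findGreatest P (subrank T), Nat.findGreatest_le _,
    Nat.findGreatest_spec (Nat.zero_le _) h0, fun h => ?_⟩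
  have h' : P (Nat.findGreatest P (subrank T) + 1) :=
    h.of_injective (finSuccEquiv _).injective
  have := Nat.le_findGreatest (hP _ h') h'
  omega

end subrank

lemma subrank_directSum_le (n : ℕ) (hn : 1 ≤ n) : ∃ C : ℕ, ∀ (K : Type) [Field K]
    (V V' : Fin (n + 1) → Type)
    [∀ i, AddCommGroup (V i)] [∀ i, Module K (V i)] [∀ i, FiniteDimensional K (V i)]
    [∀ i, AddCommGroup (V' i)] [∀ i, Module K (V' i)] [∀ i, FiniteDimensional K (V' i)]
    (S : ⨂[K] i, V i) (T : ⨂[K] i, V' i),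
    subrank (tensorDirectSum S T) ≤ C * (subrank S ^ n + subrank T ^ n) := by
  classical
  obtain ⟨C, hC⟩ := diagonal_bound n
  refine ⟨C * ((n + 1) * 2 ^ n), ?_⟩
  intro K _ V V' _ _ _ _ _ _ S T
  obtain ⟨φ, h1, h2⟩ := hasDiagonal_subrank hn (tensorDirectSum S T)
  generalize subrank (tensorDirectSum S T) = r at φ h1 h2 ⊢
  let g : ∀ i, (Fin r → K) →ₗ[K] Dual K (V i × V' i) := fun i =>
    Fintype.linearCombination K fun c => φ c i
  let gS : ∀ i, (Fin r → K) →ₗ[K] Dual K (V i) := fun i =>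
    (LinearMap.inl K (V i) (V' i)).dualMap ∘ₗ g i
  let gT : ∀ i, (Fin r → K) →ₗ[K] Dual K (V' i) := fun i =>
    (LinearMap.inr K (V i) (V' i)).dualMap ∘ₗ g i
  obtain ⟨s, hs, hs1, hs2⟩ := exists_maximal_diagonal hn S gS
  obtain ⟨t, ht, ht1, ht2⟩ := exists_maximal_diagonal hn T gT
  have hsum : ∀ x : Fin (n + 1) → Fin r → K, (tensorForm S).compLinearMap gS x +
      (tensorForm T).compLinearMap gT x = ∑ l, ∏ i, x i l := by
    let I : MultilinearMap K (fun _ : Fin (n + 1) => Fin r → K) K :=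
      ∑ l, (MultilinearMap.mkPiAlgebra K (Fin (n + 1)) K).compLinearMap
        fun _ => LinearMap.proj l
    have hI : ∀ x, I x = ∑ l, ∏ i, x i l := fun x => by simp [I]
    -- both sides agree on tuples of basis vectors, because `φ` is a diagonal
    have hform : (tensorForm (tensorDirectSum S T)).compLinearMap g = I := by
      refine Module.Basis.ext_multilinear (fun _ => Pi.basisFun K (Fin r)) fun j => ?_
      rw [hI]
      have e : (tensorForm (tensorDirectSum S T)).compLinearMap g
          (fun i => Pi.basisFun K (Fin r) (j i)) =
          tensorForm (tensorDirectSum S T) fun i => φ (j i) i := by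
        simp [g, Fintype.linearCombination_apply_single]
      rw [e]
      by_cases hj : ∃ i i', j i ≠ j i'
      · rw [h2 j hj]
        obtain ⟨i, i', hi⟩ := hj
        refine (Finset.sum_eq_zero fun l _ => ?_).symm
        by_cases hl : j i = l
        · refine Finset.prod_eq_zero (Finset.mem_univ i') ?_
          simp [← hl, hi]
        · refine Finset.prod_eq_zero (Finset.mem_univ i) ?_
          simp [Ne.symm hl]
      · push Not at hj
        obtain ⟨c, rfl⟩ : ∃ c, j = fun _ => c := ⟨j 0, funext fun i => hj _ _⟩
        rw [h1]
        simp [Pi.single_apply]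
    intro x
    rw [← hI, ← hform]
    exact (tensorForm_directSum S T fun i => g i (x i)).symm
  have hb := hC K r s t _ _ hsum hs1 hs2 ht1 ht2
  calc r ≤ C * (Fintype.card (Mixed n s) + Fintype.card (Mixed n t)) := hb
    _ ≤ C * ((n + 1) * 2 ^ n * s ^ n + (n + 1) * 2 ^ n * t ^ n) := by
      gcongr <;> exact card_mixed_le n _
    _ ≤ C * ((n + 1) * 2 ^ n * subrank S ^ n + (n + 1) * 2 ^ n * subrank T ^ n) := by gcongr
    _ = _ := by ring

/-- **Subrank of a direct sum.**  For every order `k ≥ 2` there is a constant `C = C(k) > 0`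
such that for any two order-`k` tensors `S`, `T` over a field `K`,
`Q(S) + Q(T) ≤ Q(S ⊕ T) ≤ C·(Q(S)^{k-1} + Q(T)^{k-1})`. -/
theorem subrank_direct_sum (k : ℕ) (hk : 2 ≤ k) :
    ∃ C : ℕ, 0 < C ∧
      ∀ (K : Type) [Field K] (V V' : Fin k → Type)
        [∀ i, AddCommGroup (V i)] [∀ i, Module K (V i)] [∀ i, FiniteDimensional K (V i)]
        [∀ i, AddCommGroup (V' i)] [∀ i, Module K (V' i)] [∀ i, FiniteDimensional K (V' i)]
        (S : ⨂[K] i, V i) (T : ⨂[K] i, V' i),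
        subrank S + subrank T ≤ subrank (tensorDirectSum S T) ∧
          subrank (tensorDirectSum S T) ≤
            C * (subrank S ^ (k - 1) + subrank T ^ (k - 1)) := by
  obtain ⟨n, rfl⟩ : ∃ n, k = n + 1 := ⟨k - 1, by omega⟩
  have hn : 1 ≤ n := by omega
  obtain ⟨C, hC⟩ := subrank_directSum_le n hn
  refine ⟨C + 1, Nat.succ_pos C, ?_⟩
  intro K _ V V' _ _ _ _ _ _ S T
  refine ⟨subrank_add_le hn S T, (hC K V V' S T).trans ?_⟩
  exact Nat.mul_le_mul_right _ (Nat.le_succ C)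
end
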